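/- Let d > 2s and let ρ be an admissible weight with exponents (γ₀,γ). Let u be a nonnegative measurable function on ℝ^d × (0,∞) satisfying conditions (i)–(iii) in the definition of weak solution (i.e. the uniform L¹_ρ bound and essential boundedness on ℝ^d × (τ,∞) for every τ > 0, the local-in-time square-integrability of the Gagliardo seminorm of u^m, and the weak formulation against all smooth compactly supported test functions on ℝ^d × (0,∞)), without any prescribed initial datum. Then there exists a unique positive finite Radon measure μ on ℝ^d such that ess lim_{t→0} ∫_{ℝ^d} φ(x) u(x,t) ρ(x) dx = ∫_{ℝ^d} φ dμ for every bounded continuous φ : ℝ^d → ℝ. In particular μ(ℝ^d) = ∫_{ℝ^d} u(x,t) ρ(x) dx for a.e. t > 0. -/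

import Mathlib

open MeasureTheory Filter Topology Set
open scoped ENNReal NNReal

noncomputable section

/-- `d`-dimensional Euclidean space. -/
abbrev Ed (d : ℕ) : Type := EuclideanSpace ℝ (Fin d)

/-- An admissible weight with exponents `(γ₀, γ)` and constants `0 < c < C`:
a measurable, everywhere positive function comparable to `|x|^{-γ₀}` near the
origin and to `|x|^{-γ}` at infinity. -/
def AdmissibleWeight (d : ℕ) (ρ : Ed d → ℝ) (γ₀ γ c C : ℝ) : Prop :=
  0 < c ∧ c < C ∧ Measurable ρ ∧ (∀ x, 0 < ρ x) ∧
    (∀ᵐ x ∂(volume : Measure (Ed d)), ‖x‖ ≤ 1 →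
      c * ‖x‖ ^ (-γ₀) ≤ ρ x ∧ ρ x ≤ C * ‖x‖ ^ (-γ₀)) ∧
    (∀ᵐ x ∂(volume : Measure (Ed d)), 1 < ‖x‖ →
      c * ‖x‖ ^ (-γ) ≤ ρ x ∧ ρ x ≤ C * ‖x‖ ^ (-γ))

/-- The Gagliardo bilinear form `E(v,w)` of order `s` with normalizing constant `κ`. -/
def gagliardoE (d : ℕ) (s κ : ℝ) (v w : Ed d → ℝ) : ℝ :=
  (κ / 2) * ∫ p : Ed d × Ed d,
    (v p.1 - v p.2) * (w p.1 - w p.2) / ‖p.1 - p.2‖ ^ ((d : ℝ) + 2 * s)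

/-- The squared homogeneous fractional Sobolev seminorm `‖v‖_{Ḣ^s}² = E(v,v)`,
with values in `[0,∞]`. -/
def gagliardoSq (d : ℕ) (s κ : ℝ) (v : Ed d → ℝ) : ℝ≥0∞ :=
  ENNReal.ofReal (κ / 2) * ∫⁻ p : Ed d × Ed d,
    ENNReal.ofReal ((v p.1 - v p.2) ^ 2 / ‖p.1 - p.2‖ ^ ((d : ℝ) + 2 * s))

/-- The weighted `L^p` norm `‖v‖_{p,ρ}`, valued in `[0,∞]`. -/
def wnorm (d : ℕ) (p : ℝ) (ρ v : Ed d → ℝ) : ℝ≥0∞ :=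
  (∫⁻ x : Ed d, ENNReal.ofReal (|v x| ^ p * ρ x)) ^ (1 / p)

/-- Smooth compactly supported test functions on `ℝ^d × (0,∞)`. -/
def IsTestFn (d : ℕ) (φ : Ed d × ℝ → ℝ) : Prop :=
  ContDiff ℝ (⊤ : ℕ∞) φ ∧ HasCompactSupport φ ∧ tsupport φ ⊆ univ ×ˢ Ioi (0 : ℝ)

/-- Conditions (i)–(iii) of the definition of weak solution of
`ρ u_t + (-Δ)^s(u^m) = 0` on `ℝ^d × (0,∞)` (no initial datum prescribed). -/
structure WeakSolCore (d : ℕ) (s m κ : ℝ) (ρ : Ed d → ℝ) (u : Ed d → ℝ → ℝ) : Prop where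
  measurable : Measurable (Function.uncurry u)
  nonneg : ∀ x t, 0 ≤ u x t
  /-- (i), first part: `ess sup_{t>0} ∫ u(·,t) ρ < ∞`. -/
  massBound : ∃ M : ℝ, ∀ᵐ t ∂(volume.restrict (Ioi (0 : ℝ))),
    Integrable (fun x : Ed d => u x t * ρ x) ∧ (∫ x : Ed d, u x t * ρ x) ≤ M
  /-- (i), second part: `u` essentially bounded on `ℝ^d × (τ,∞)` for every `τ > 0`. -/
  essBdd : ∀ τ : ℝ, 0 < τ → ∃ B : ℝ,
    ∀ᵐ p ∂(volume : Measure (Ed d × ℝ)), τ < p.2 → u p.1 p.2 ≤ B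
  /-- (ii), first part: `‖u^m(·,t)‖_{Ḣ^s} < ∞` for a.e. `t > 0`. -/
  energyFinite : ∀ᵐ t ∂(volume.restrict (Ioi (0 : ℝ))),
    gagliardoSq d s κ (fun x => u x t ^ m) < ⊤
  /-- (ii), second part: `t ↦ ‖u^m(·,t)‖_{Ḣ^s}²` locally integrable on `(0,∞)`. -/
  energyLocInt : ∀ t₁ t₂ : ℝ, 0 < t₁ → t₁ < t₂ →
    (∫⁻ t in Ioc t₁ t₂, gagliardoSq d s κ (fun x => u x t ^ m)) ≠ ⊤
  /-- (iii): the weak formulation against all test functions. -/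
  weakForm : ∀ φ : Ed d × ℝ → ℝ, IsTestFn d φ →
    -(∫ t in Ioi (0 : ℝ), ∫ x : Ed d, u x t * deriv (fun τ => φ (x, τ)) t * ρ x)
      + ∫ t in Ioi (0 : ℝ),
          gagliardoE d s κ (fun x => u x t ^ m) (fun x => φ (x, t)) = 0

/-- Condition (iv): `ρ(·)u(·,t) → μ` as `t → 0` essentially, tested against all
bounded continuous functions. -/
def HasInitialTrace (d : ℕ) (ρ : Ed d → ℝ) (u : Ed d → ℝ → ℝ)
    (μ : Measure (Ed d)) : Prop :=
  ∃ N : Set ℝ, volume N = 0 ∧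
    ∀ φ : Ed d → ℝ, Continuous φ → (∃ B : ℝ, ∀ x, |φ x| ≤ B) →
      Tendsto (fun t => ∫ x : Ed d, φ x * (u x t * ρ x))
        (𝓝[(Ioi (0 : ℝ)) \ N] 0) (𝓝 (∫ x, φ x ∂μ))

/-- Weak solution of the Cauchy problem with initial datum `μ`. -/
def IsWeakSolution (d : ℕ) (s m κ : ℝ) (ρ : Ed d → ℝ) (μ : Measure (Ed d))
    (u : Ed d → ℝ → ℝ) : Prop :=
  WeakSolCore d s m κ ρ u ∧ HasInitialTrace d ρ u μ

/-- The primitive of a smooth function is smooth. -/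
lemma contDiff_primitive {f : ℝ → ℝ} (hf : ContDiff ℝ (⊤ : ℕ∞) f) :
    ContDiff ℝ (⊤ : ℕ∞) (fun t => ∫ τ in (0 : ℝ)..t, f τ) := by
  have hd : ∀ t, HasDerivAt (fun t => ∫ τ in (0 : ℝ)..t, f τ) (f t) t := fun t =>
    intervalIntegral.integral_hasDerivAt_right (hf.continuous.intervalIntegrable _ _)
      (hf.continuous.stronglyMeasurableAtFilter _ _) hf.continuous.continuousAt
  rw [contDiff_infty_iff_deriv]
  refine ⟨fun t => (hd t).differentiableAt, ?_⟩
  rwa [show deriv (fun t => ∫ τ in (0 : ℝ)..t, f τ) = f from funext fun t => (hd t).deriv]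

lemma hasDerivAt_primitive {f : ℝ → ℝ} (hf : Continuous f) (t : ℝ) :
    HasDerivAt (fun t => ∫ τ in (0 : ℝ)..t, f τ) (f t) t :=
  intervalIntegral.integral_hasDerivAt_right (hf.intervalIntegrable _ _)
    (hf.stronglyMeasurableAtFilter _ _) hf.continuousAt

/-- A smooth function of time compactly supported in `(0,∞)`. -/
def IsTimeTest (θ : ℝ → ℝ) : Prop :=
  ContDiff ℝ (⊤ : ℕ∞) θ ∧ HasCompactSupport θ ∧ tsupport θ ⊆ Ioi (0 : ℝ)

/-- A nonnegative time test function whose derivative is the difference of two bumps. -/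
lemma exists_timeTest_bump_difference (φ : ContDiffBump (0 : ℝ)) {t₁ t₂ : ℝ}
    (h₁ : φ.rOut < t₁) (h₁₂ : t₁ ≤ t₂) :
    ∃ θ : ℝ → ℝ, IsTimeTest θ ∧ (∀ t, 0 ≤ θ t) ∧
      ∀ t, deriv θ t = φ.normed volume (t₁ - t) - φ.normed volume (t₂ - t) := by
  set f : ℝ → ℝ := φ.normed volume with hf
  have hfs : ContDiff ℝ (⊤ : ℕ∞) f := φ.contDiff_normed
  have hf0 : ∀ t, 0 ≤ f t := fun t => φ.nonneg_normed t
  have hsym : ∀ t, f (-t) = f t := fun t => φ.normed_neg t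
  have hsupp : ∀ t, φ.rOut ≤ |t| → f t = 0 := by
    intro t ht
    have : t ∉ Function.support f := by
      rw [hf, φ.support_normed_eq]
      simpa using ht
    simpa using this
  set Φ : ℝ → ℝ := fun t => ∫ τ in (0 : ℝ)..t, f τ with hΦ
  have hΦd : ∀ t, HasDerivAt Φ (f t) t := hasDerivAt_primitive hfs.continuous
  have hΦs : ContDiff ℝ (⊤ : ℕ∞) Φ := contDiff_primitive hfs
  have hmono : Monotone Φ := monotone_of_hasDerivAt_nonneg hΦd hf0
  have hr := φ.rOut_pos
  have hright : ∀ t, φ.rOut ≤ t → Φ t = Φ φ.rOut := by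
    intro t ht
    have : Φ t - Φ φ.rOut = ∫ τ in φ.rOut..t, f τ :=
      intervalIntegral.integral_interval_sub_left (hfs.continuous.intervalIntegrable _ _)
        (hfs.continuous.intervalIntegrable _ _)
    rw [intervalIntegral.integral_congr (g := fun _ => 0)] at this
    · simp at this; linarith
    · intro x hx
      rw [uIcc_of_le ht] at hx
      exact hsupp x (hx.1.trans (le_abs_self x))
  have hleft : ∀ t, t ≤ -φ.rOut → Φ t = Φ (-φ.rOut) := by
    intro t ht
    have : Φ t - Φ (-φ.rOut) = ∫ τ in (-φ.rOut)..t, f τ :=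
      intervalIntegral.integral_interval_sub_left (hfs.continuous.intervalIntegrable _ _)
        (hfs.continuous.intervalIntegrable _ _)
    rw [intervalIntegral.integral_congr (g := fun _ => 0)] at this
    · simp at this; linarith
    · intro x hx
      rw [uIcc_of_ge ht] at hx
      refine hsupp x ?_
      have := neg_le_abs x
      linarith [hx.2]
  have hsub : Function.support (fun t => Φ (t - t₁) - Φ (t - t₂)) ⊆
      Icc (t₁ - φ.rOut) (t₂ + φ.rOut) := by
    intro t ht
    by_contra hcon
    apply ht
    rw [mem_Icc, not_and_or, not_le, not_le] at hcon
    rcases hcon with h | h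
    · simp only
      rw [hleft (t - t₁) (by linarith), hleft (t - t₂) (by linarith), sub_self]
    · simp only
      rw [hright (t - t₁) (by linarith), hright (t - t₂) (by linarith), sub_self]
  have htsub := closure_minimal hsub isClosed_Icc
  refine ⟨fun t => Φ (t - t₁) - Φ (t - t₂), ⟨?_, ?_, ?_⟩, ?_, ?_⟩
  · exact (hΦs.comp (contDiff_id.sub contDiff_const)).sub
      (hΦs.comp (contDiff_id.sub contDiff_const))
  · exact HasCompactSupport.of_support_subset_isCompact isCompact_Icc hsub
  · exact htsub.trans fun t ht => lt_of_lt_of_le (by linarith) ht.1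
  · intro t
    exact sub_nonneg.2 (hmono (by linarith))
  · intro t
    have h1 : HasDerivAt (fun t => Φ (t - t₁)) (f (t - t₁)) t :=
      (hΦd (t - t₁)).comp_sub_const t t₁
    have h2 : HasDerivAt (fun t => Φ (t - t₂)) (f (t - t₂)) t :=
      (hΦd (t - t₂)).comp_sub_const t t₂
    rw [(h1.fun_sub h2).deriv, ← hsym (t - t₁), ← hsym (t - t₂), neg_sub, neg_sub]

/-- A locally integrable function on `(0,∞)` with nonpositive distributional derivative is
almost everywhere antitone. -/
lemma exists_antitoneOn_of_distrib_deriv_nonpos {g : ℝ → ℝ}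
    (hg : LocallyIntegrable ((Ioi (0 : ℝ)).indicator g))
    (h : ∀ θ, IsTimeTest θ → (∀ t, 0 ≤ θ t) → 0 ≤ ∫ t in Ioi (0 : ℝ), g t * deriv θ t) :
    ∃ N : Set ℝ, volume N = 0 ∧ AntitoneOn g (Ioi 0 \ N) := by
  set G := (Ioi (0 : ℝ)).indicator g with hG
  let φ : ℕ → ContDiffBump (0 : ℝ) := fun n =>
    ⟨1 / ((n : ℝ) + 1), 2 * (1 / ((n : ℝ) + 1)), by positivity, by
      have : (0 : ℝ) < 1 / ((n : ℝ) + 1) := by positivity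
      linarith⟩
  have hlim : Tendsto (fun n => (φ n).rOut) atTop (𝓝 0) := by
    simpa [φ] using (tendsto_one_div_add_atTop_nhds_zero_nat (𝕜 := ℝ)).const_mul 2
  have hae := ContDiffBump.ae_convolution_tendsto_right_of_locallyIntegrable (μ := volume)
    (g := G) hlim (K := 2) (Eventually.of_forall fun n => le_rfl) hg
  refine ⟨_, hae, ?_⟩
  intro t₁ ht₁ t₂ ht₂ h₁₂
  have c₁ := not_not.1 ht₁.2
  have c₂ := not_not.1 ht₂.2
  simp only [Set.mem_ofPred_eq] at c₁ c₂
  have e₁ : G t₁ = g t₁ := indicator_of_mem ht₁.1 g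
  have e₂ : G t₂ = g t₂ := indicator_of_mem ht₂.1 g
  rw [e₁] at c₁
  rw [e₂] at c₂
  refine le_of_tendsto_of_tendsto c₂ c₁ ?_
  filter_upwards [hlim.eventually (gt_mem_nhds ht₁.1)] with n hn
  obtain ⟨θ, hθ, hθ0, hθd⟩ := exists_timeTest_bump_difference (φ n) hn h₁₂
  have key := h θ hθ hθ0
  have hint : ∀ t, Integrable (fun τ => (φ n).normed volume (t - τ) * G τ) := by
    intro t
    have : HasCompactSupport (fun τ => (φ n).normed volume (t - τ)) :=
      (φ n).hasCompactSupport_normed.comp_homeomorph (Homeomorph.subLeft t)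
    exact hg.integrable_smul_left_of_hasCompactSupport
      ((φ n).continuous_normed.comp (continuous_const.sub continuous_id)) this
  simp only [convolution_eq_swap, ContinuousLinearMap.lsmul_apply, smul_eq_mul]
  rw [← sub_nonneg, ← integral_sub (hint t₁) (hint t₂)]
  refine key.trans_eq ?_
  rw [← integral_indicator measurableSet_Ioi]
  refine integral_congr_ae (Eventually.of_forall fun t => ?_)
  by_cases ht : t ∈ Ioi (0 : ℝ)
  · simp only [hG, indicator_of_mem ht, hθd]; ring
  · simp only [hG, indicator_of_notMem ht]; ring

/-- The `d`-dimensional measure of the unit sphere of `ℝ^d`. -/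
def sphereConst (d : ℕ) : ℝ := d * (volume : Measure (Ed d)).real (Metric.ball 0 1)

lemma sphereConst_nonneg (d : ℕ) : 0 ≤ sphereConst d := by
  unfold sphereConst; positivity

lemma nontrivial_Ed {d : ℕ} (hd : 0 < d) : Nontrivial (Ed d) := by
  have : Nonempty (Fin d) := ⟨⟨0, hd⟩⟩
  infer_instance

/-- Integration of a nonnegative radial function. -/
lemma lintegral_radial {d : ℕ} (hd : 0 < d) {f : ℝ → ℝ} (hf : ∀ y, 0 ≤ f y)
    (hint : IntegrableOn (fun y : ℝ => y ^ (d - 1) * f y) (Ioi 0)) :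
    ∫⁻ x : Ed d, ENNReal.ofReal (f ‖x‖) =
      ENNReal.ofReal (sphereConst d * ∫ y in Ioi (0 : ℝ), y ^ (d - 1) * f y) := by
  have := nontrivial_Ed hd
  have h1 : Integrable (fun x : Ed d => f ‖x‖) := by
    rw [integrable_fun_norm_addHaar]
    simpa using hint
  rw [← ofReal_integral_eq_lintegral_ofReal h1 (Eventually.of_forall fun x => hf _),
    integral_fun_norm_addHaar]
  simp [sphereConst, mul_assoc]

lemma lintegral_norm_rpow_compl_ball {d : ℕ} (hd : 0 < d) {e r : ℝ} (he : 0 < e) (hr : 0 < r) :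
    ∫⁻ x in {x : Ed d | r < ‖x‖}, ENNReal.ofReal (‖x‖ ^ (-((d : ℝ) + e))) =
      ENNReal.ofReal (sphereConst d / e * r ^ (-e)) := by
  have hm : MeasurableSet {x : Ed d | r < ‖x‖} := measurableSet_lt measurable_const measurable_norm
  have hcongr : EqOn (fun y : ℝ => y ^ (d - 1) * (Ioi r).indicator (fun y => y ^ (-((d : ℝ) + e))) y)
      ((Ioi r).indicator (fun y : ℝ => y ^ (-e - 1))) (Ioi 0) := by
    intro y hy
    by_cases hyr : y ∈ Ioi r
    · simp only [indicator_of_mem hyr]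
      rw [← Real.rpow_natCast, ← Real.rpow_add hy, Nat.cast_sub hd]
      congr 1
      push_cast
      ring
    · simp only [indicator_of_notMem hyr, mul_zero]
  have hI : IntegrableOn (fun y : ℝ => y ^ (-e - 1)) (Ioi r) :=
    integrableOn_Ioi_rpow_of_lt (by linarith) hr
  have hsub : Ioi (0 : ℝ) ∩ Ioi r = Ioi r := inter_eq_right.2 (Ioi_subset_Ioi hr.le)
  have := lintegral_radial hd (f := (Ioi r).indicator (fun y => y ^ (-((d : ℝ) + e))))
    (fun y => indicator_nonneg (fun y hy => Real.rpow_nonneg (hr.trans hy).le _) y) (by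
      rw [integrableOn_congr_fun hcongr measurableSet_Ioi, IntegrableOn,
        integrable_indicator_iff measurableSet_Ioi]
      exact (hI.mono_measure Measure.restrict_le_self))
  rw [setIntegral_congr_fun measurableSet_Ioi hcongr, setIntegral_indicator measurableSet_Ioi,
    hsub, integral_Ioi_rpow_of_lt (by linarith) hr] at this
  rw [← lintegral_indicator hm]
  refine (lintegral_congr fun x => ?_).trans (this.trans (congrArg ENNReal.ofReal ?_))
  · by_cases hx : r < ‖x‖
    · rw [indicator_of_mem (show x ∈ {x : Ed d | r < ‖x‖} from hx),
        indicator_of_mem (show ‖x‖ ∈ Ioi r from hx)]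
    · rw [indicator_of_notMem (show x ∉ {x : Ed d | r < ‖x‖} from hx),
        indicator_of_notMem (show ‖x‖ ∉ Ioi r from hx), ENNReal.ofReal_zero]
  · rw [show -e - 1 + 1 = -e by ring, neg_div_neg_eq]
    ring

lemma lintegral_norm_rpow_ball {d : ℕ} (hd : 0 < d) {e r : ℝ} (he : 0 < e) (hr : 0 < r) :
    ∫⁻ x in {x : Ed d | ‖x‖ ≤ r}, ENNReal.ofReal (‖x‖ ^ (-(d : ℝ) + e)) =
      ENNReal.ofReal (sphereConst d / e * r ^ e) := by
  have hm : MeasurableSet {x : Ed d | ‖x‖ ≤ r} := measurableSet_le measurable_norm measurable_const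
  have hcongr : EqOn (fun y : ℝ => y ^ (d - 1) * (Icc 0 r).indicator (fun y => y ^ (-(d : ℝ) + e)) y)
      ((Icc 0 r).indicator (fun y : ℝ => y ^ (e - 1))) (Ioi 0) := by
    intro y hy
    by_cases hyr : y ∈ Icc 0 r
    · simp only [indicator_of_mem hyr]
      rw [← Real.rpow_natCast, ← Real.rpow_add hy, Nat.cast_sub hd]
      congr 1
      push_cast
      ring
    · simp only [indicator_of_notMem hyr, mul_zero]
  have hsub : Ioi (0 : ℝ) ∩ Icc 0 r = Ioc 0 r := by
    ext y; simp only [mem_inter_iff, mem_Ioi, mem_Icc, mem_Ioc]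
    constructor
    · rintro ⟨h1, h2, h3⟩; exact ⟨h1, h3⟩
    · rintro ⟨h1, h2⟩; exact ⟨h1, h1.le, h2⟩
  have hI : IntegrableOn (fun y : ℝ => y ^ (e - 1)) (Ioc 0 r) :=
    (intervalIntegrable_iff_integrableOn_Ioc_of_le hr.le).1
      (intervalIntegral.intervalIntegrable_rpow' (by linarith))
  have := lintegral_radial hd (f := (Icc 0 r).indicator (fun y => y ^ (-(d : ℝ) + e)))
    (fun y => indicator_nonneg (fun y hy => Real.rpow_nonneg hy.1 _) y) (by
      rw [integrableOn_congr_fun hcongr measurableSet_Ioi, IntegrableOn,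
        integrable_indicator_iff measurableSet_Icc, IntegrableOn,
        Measure.restrict_restrict measurableSet_Icc, inter_comm, hsub]
      exact hI)
  rw [setIntegral_congr_fun measurableSet_Ioi hcongr, setIntegral_indicator measurableSet_Icc,
    hsub, ← intervalIntegral.integral_of_le hr.le, integral_rpow (Or.inl (by linarith))] at this
  rw [← lintegral_indicator hm]
  refine (lintegral_congr fun x => ?_).trans (this.trans (congrArg ENNReal.ofReal ?_))
  · by_cases hx : ‖x‖ ≤ r
    · rw [indicator_of_mem (show x ∈ {x : Ed d | ‖x‖ ≤ r} from hx),
        indicator_of_mem (show ‖x‖ ∈ Icc 0 r from ⟨norm_nonneg x, hx⟩)]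
    · rw [indicator_of_notMem (show x ∉ {x : Ed d | ‖x‖ ≤ r} from hx),
        indicator_of_notMem (show ‖x‖ ∉ Icc 0 r from fun h => hx h.2), ENNReal.ofReal_zero]
  · rw [show e - 1 + 1 = e by ring, Real.zero_rpow he.ne']
    ring

/-- The integrand of the Gagliardo form. -/
def gagInt (d : ℕ) (s : ℝ) (v w : Ed d → ℝ) (p : Ed d × Ed d) : ℝ :=
  (v p.1 - v p.2) * (w p.1 - w p.2) / ‖p.1 - p.2‖ ^ ((d : ℝ) + 2 * s)

/-- The difference quotient `(w(x)-w(y))/|x-y|^{d+2s}`. -/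
def diffQuot (d : ℕ) (s : ℝ) (w : Ed d → ℝ) (p : Ed d × Ed d) : ℝ :=
  (w p.1 - w p.2) / ‖p.1 - p.2‖ ^ ((d : ℝ) + 2 * s)

lemma gagInt_self_nonneg {d : ℕ} {s : ℝ} (v : Ed d → ℝ) (p : Ed d × Ed d) :
    0 ≤ gagInt d s v v p :=
  div_nonneg (mul_self_nonneg _) (Real.rpow_nonneg (norm_nonneg _) _)

lemma measurable_gagInt {d : ℕ} {s : ℝ} {v w : Ed d → ℝ} (hv : Measurable v) (hw : Measurable w) :
    Measurable (gagInt d s v w) := by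
  unfold gagInt
  fun_prop

lemma measurable_diffQuot {d : ℕ} {s : ℝ} {w : Ed d → ℝ} (hw : Measurable w) :
    Measurable (diffQuot d s w) := by
  unfold diffQuot
  fun_prop

lemma gagliardoSq_eq {d : ℕ} {s κ : ℝ} (v : Ed d → ℝ) :
    gagliardoSq d s κ v = ENNReal.ofReal (κ / 2) * ∫⁻ p, ENNReal.ofReal (gagInt d s v v p) := by
  simp only [gagliardoSq, gagInt, sq]

lemma integrable_gagInt_self {d : ℕ} {s κ : ℝ} (hκ : 0 < κ) {v : Ed d → ℝ} (hv : Measurable v)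
    (h : gagliardoSq d s κ v < ⊤) : Integrable (gagInt d s v v) := by
  refine ⟨(measurable_gagInt hv hv).aestronglyMeasurable, ?_⟩
  rw [hasFiniteIntegral_iff_ofReal (Eventually.of_forall (gagInt_self_nonneg v))]
  rw [gagliardoSq_eq] at h
  by_contra hcon
  rw [not_lt, top_le_iff] at hcon
  rw [hcon, ENNReal.mul_top (by simpa using hκ)] at h
  exact lt_irrefl _ h

lemma integral_gagInt_self {d : ℕ} {s κ : ℝ} (hκ : 0 < κ) {v : Ed d → ℝ} (hv : Measurable v) :
    κ / 2 * ∫ p, gagInt d s v v p = (gagliardoSq d s κ v).toReal := by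
  rw [gagliardoSq_eq, ENNReal.toReal_mul, ENNReal.toReal_ofReal (by positivity),
    integral_eq_lintegral_of_nonneg_ae (Eventually.of_forall (gagInt_self_nonneg v))
      (measurable_gagInt hv hv).aestronglyMeasurable]

/-- Young's inequality for the integrand of the Gagliardo form, with `w` a contraction of `z`. -/
lemma abs_gagInt_le {d : ℕ} {s : ℝ} {v w z : Ed d → ℝ} (hwz : ∀ x y, |w x - w y| ≤ |z x - z y|)
    (p : Ed d × Ed d) :
    |gagInt d s v w p| ≤ (1 / 2) * (gagInt d s v v p + gagInt d s z z p) := by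
  have hk : 0 ≤ ‖p.1 - p.2‖ ^ ((d : ℝ) + 2 * s) := Real.rpow_nonneg (norm_nonneg _) _
  unfold gagInt
  rw [abs_div, abs_of_nonneg hk, ← add_div, ← mul_div_assoc, abs_mul]
  refine div_le_div_of_nonneg_right ?_ hk
  have h1 := hwz p.1 p.2
  have h2 := abs_nonneg (v p.1 - v p.2)
  rw [← abs_mul_abs_self (v p.1 - v p.2), ← abs_mul_abs_self (z p.1 - z p.2)]
  nlinarith [sq_nonneg (|v p.1 - v p.2| - |z p.1 - z p.2|), mul_le_mul_of_nonneg_left h1 h2]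

lemma integrable_gagInt {d : ℕ} {s : ℝ} {v w : Ed d → ℝ} (hv : Measurable v) (hw : Measurable w)
    (hv2 : Integrable (gagInt d s v v)) (hw2 : Integrable (gagInt d s w w)) :
    Integrable (gagInt d s v w) :=
  ((hv2.add hw2).const_mul (1 / 2)).mono' (measurable_gagInt hv hw).aestronglyMeasurable
    (Eventually.of_forall fun p => abs_gagInt_le (fun _ _ => le_rfl) p)

/-- Exhaustion of the Gagliardo form by truncations off the diagonal. -/
lemma tendsto_setIntegral_gagInt {d : ℕ} {s : ℝ} {v w : Ed d → ℝ}
    (hI : Integrable (gagInt d s v w)) {T : ℕ → Set (Ed d × Ed d)}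
    (hT : ∀ n, MeasurableSet (T n))
    (hTe : ∀ p : Ed d × Ed d, p.1 ≠ p.2 → ∀ᶠ n in atTop, p ∈ T n) :
    Tendsto (fun n => ∫ p in T n, gagInt d s v w p) atTop (𝓝 (∫ p, gagInt d s v w p)) := by
  simp_rw [← integral_indicator (hT _)]
  refine tendsto_integral_of_dominated_convergence (fun p => ‖gagInt d s v w p‖)
    (fun n => (hI.indicator (hT n)).aestronglyMeasurable) hI.norm
    (fun n => Eventually.of_forall fun p => norm_indicator_le_norm_self _ _)
    (Eventually.of_forall fun p => ?_)
  by_cases hp : p.1 = p.2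
  · have : gagInt d s v w p = 0 := by simp [gagInt, hp]
    have h2 : ∀ n, (T n).indicator (gagInt d s v w) p = 0 := fun n => by
      by_cases hn : p ∈ T n <;> simp [hn, this]
    rw [this]
    simp [h2]
  · refine tendsto_const_nhds.congr' ?_
    filter_upwards [hTe p hp] with n hn
    rw [indicator_of_mem hn]

/-- Symmetrization of the truncated Gagliardo form. -/
lemma setIntegral_gagInt_eq {d : ℕ} {s : ℝ} {v w : Ed d → ℝ} (hv : Measurable v)
    (hv0 : ∀ x, 0 ≤ v x) (hw : Measurable w) {T : Set (Ed d × Ed d)} (hT : MeasurableSet T)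
    (hTs : ∀ p : Ed d × Ed d, p.swap ∈ T ↔ p ∈ T)
    (hJ : ∫⁻ x, ENNReal.ofReal (v x) *
      ∫⁻ y, ENNReal.ofReal |T.indicator (diffQuot d s w) (x, y)| < ⊤) :
    ∫ p in T, gagInt d s v w p = 2 * ∫ x, v x * ∫ y, T.indicator (diffQuot d s w) (x, y) := by
  set q := T.indicator (diffQuot d s w) with hq
  have hqm : Measurable q := (measurable_diffQuot hw).indicator hT
  set F : Ed d × Ed d → ℝ := fun p => v p.1 * q p with hF
  have hFm : Measurable F := (hv.comp measurable_fst).mul hqm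
  have hFi : Integrable F (volume.prod volume) := by
    refine ⟨hFm.aestronglyMeasurable, ?_⟩
    rw [hasFiniteIntegral_iff_norm, lintegral_prod _ (by fun_prop)]
    refine lt_of_le_of_lt (le_of_eq (lintegral_congr fun x => ?_)) hJ
    rw [← lintegral_const_mul _ (by fun_prop)]
    refine lintegral_congr fun y => ?_
    rw [hF, Real.norm_eq_abs, abs_mul, abs_of_nonneg (hv0 x), ENNReal.ofReal_mul (hv0 x)]
  have hFs : Integrable (fun p : Ed d × Ed d => F p.swap) (volume.prod volume) := hFi.swap
  have hsum : T.indicator (gagInt d s v w) = fun p => F p + F p.swap := by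
    funext p
    by_cases hp : p ∈ T
    · have hp' : p.swap ∈ T := (hTs p).2 hp
      simp only [hF, hq, indicator_of_mem hp, indicator_of_mem hp', gagInt, diffQuot,
        Prod.fst_swap, Prod.snd_swap]
      rw [norm_sub_rev p.2 p.1]
      ring
    · have hp' : p.swap ∉ T := fun h => hp ((hTs p).1 h)
      simp [hF, hq, indicator_of_notMem hp, indicator_of_notMem hp']
  have hswap : ∫ p : Ed d × Ed d, F p.swap = ∫ p : Ed d × Ed d, F p :=
    integral_prod_swap (μ := (volume : Measure (Ed d))) (ν := (volume : Measure (Ed d))) F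
  rw [← integral_indicator hT, hsum, Measure.volume_eq_prod, integral_add hFi hFs]
  rw [Measure.volume_eq_prod] at hswap
  rw [hswap, ← two_mul, integral_prod _ hFi]
  simp only [hF, integral_const_mul]

/-- Tail estimate for functions dominated by the truncated kernel. -/
lemma lintegral_le_of_le_tail {d : ℕ} (hd : 0 < d) {s : ℝ} (hs : 0 < s) (x : Ed d) {r A : ℝ}
    (hr : 0 < r) (hA : 0 ≤ A) {f : Ed d → ℝ}
    (hf : ∀ y, |f y| ≤ {h : Ed d | r < ‖h‖}.indicator
      (fun h => A * ‖h‖ ^ (-((d : ℝ) + 2 * s))) (x - y)) :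
    ∫⁻ y, ENNReal.ofReal |f y| ≤
      ENNReal.ofReal (A * (sphereConst d / (2 * s) * r ^ (-(2 * s)))) := by
  have hm : MeasurableSet {x : Ed d | r < ‖x‖} := measurableSet_lt measurable_const measurable_norm
  calc ∫⁻ y, ENNReal.ofReal |f y|
      ≤ ∫⁻ y, {h : Ed d | r < ‖h‖}.indicator
          (fun h => ENNReal.ofReal A * ENNReal.ofReal (‖h‖ ^ (-((d : ℝ) + 2 * s)))) (x - y) := by
        refine lintegral_mono fun y => ?_
        refine (ENNReal.ofReal_le_ofReal (hf y)).trans ?_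
        by_cases hy : x - y ∈ {h : Ed d | r < ‖h‖}
        · rw [indicator_of_mem hy, indicator_of_mem hy, ENNReal.ofReal_mul hA]
        · rw [indicator_of_notMem hy, indicator_of_notMem hy, ENNReal.ofReal_zero]
    _ = ∫⁻ h in {h : Ed d | r < ‖h‖},
          ENNReal.ofReal A * ENNReal.ofReal (‖h‖ ^ (-((d : ℝ) + 2 * s))) := by
        rw [← lintegral_indicator hm]
        exact lintegral_sub_left_eq_self _ x
    _ = _ := by
        rw [lintegral_const_mul _ (by fun_prop), lintegral_norm_rpow_compl_ball hd (by linarith) hr,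
          ← ENNReal.ofReal_mul hA]

open EuclideanGeometry in
lemma abs_det_fderiv_inversion {d : ℕ} (a x : Ed d) (R : ℝ) :
    |(((R / dist x a) ^ 2 • ((ℝ ∙ (x - a))ᗮ.reflection : Ed d →L[ℝ] Ed d))).det|
      = (R / dist x a) ^ (2 * d) := by
  rw [ContinuousLinearMap.det]
  change |LinearMap.det ((R / dist x a) ^ 2 •
    ((ℝ ∙ (x - a))ᗮ.reflection.toLinearEquiv : Ed d →ₗ[ℝ] Ed d))| = _
  rw [LinearMap.det_smul]
  have h2 := Submodule.det_reflection (𝕜 := ℝ) (ℝ ∙ (x - a))ᗮ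
  have h3 : LinearMap.det ((ℝ ∙ (x - a))ᗮ.reflection.toLinearEquiv : Ed d →ₗ[ℝ] Ed d)
    = (-1) ^ Module.finrank ℝ ((ℝ ∙ (x - a))ᗮ)ᗮ := h2
  rw [h3, abs_mul, abs_neg_one_pow, mul_one, finrank_euclideanSpace_fin, ← pow_mul,
    abs_of_nonneg (Even.pow_nonneg (by simp) _)]

open EuclideanGeometry in
/-- Change of variables under an inversion. -/
lemma integral_inversion {d : ℕ} (hd : 0 < d) (a : Ed d) {R : ℝ} (hR : R ≠ 0) (f : Ed d → ℝ) :
    ∫ y, f y = ∫ y, (R / dist y a) ^ (2 * d) * f (inversion a R y) := by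
  have := nontrivial_Ed hd
  have hae : ({a}ᶜ : Set (Ed d)) =ᵐ[volume] univ := by
    rw [ae_eq_univ, compl_compl]; exact measure_singleton a
  have himg : inversion a R '' {a}ᶜ = {a}ᶜ := by
    ext y
    constructor
    · rintro ⟨z, hz, rfl⟩
      simpa [inversion_eq_center hR] using hz
    · intro hy
      exact ⟨inversion a R y, by simpa [inversion_eq_center hR] using hy, inversion_inversion a hR y⟩
  have h := integral_image_eq_integral_abs_det_fderiv_smul (volume : Measure (Ed d))
    (s := {a}ᶜ) (measurableSet_singleton a).compl
    (fun x hx => (hasFDerivAt_inversion (R := R) (show x ≠ a from hx)).hasFDerivWithinAt)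
    (inversion_injective a hR).injOn f
  rw [himg] at h
  rw [setIntegral_congr_set hae, setIntegral_univ, setIntegral_congr_set hae, setIntegral_univ] at h
  rw [h]
  simp only [abs_det_fderiv_inversion, smul_eq_mul]

open EuclideanGeometry in
lemma integrable_inversion {d : ℕ} (hd : 0 < d) (a : Ed d) {R : ℝ} (hR : R ≠ 0) {f : Ed d → ℝ}
    (hf : Integrable f) :
    Integrable (fun y => (R / dist y a) ^ (2 * d) * f (inversion a R y)) := by
  have := nontrivial_Ed hd
  have hae : ({a}ᶜ : Set (Ed d)) =ᵐ[volume] univ := by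
    rw [ae_eq_univ, compl_compl]; exact measure_singleton a
  have h := (integrableOn_image_iff_integrableOn_abs_det_fderiv_smul (volume : Measure (Ed d))
    (s := {a}ᶜ) (measurableSet_singleton a).compl
    (fun x hx => (hasFDerivAt_inversion (R := R) (show x ≠ a from hx)).hasFDerivWithinAt)
    (inversion_injective a hR).injOn f).1 hf.integrableOn
  rw [integrableOn_congr_set_ae hae, integrableOn_univ] at h
  simpa only [abs_det_fderiv_inversion, smul_eq_mul] using h

/-- The off-diagonal region `ε|x-a||y-a| < |x-y|²`, invariant under inversions centred at `a`. -/
def invRegion {d : ℕ} (a : Ed d) (ε : ℝ) : Set (Ed d × Ed d) :=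
  {p | ε * ‖p.1 - a‖ * ‖p.2 - a‖ < ‖p.1 - p.2‖ ^ 2}

lemma measurableSet_invRegion {d : ℕ} (a : Ed d) (ε : ℝ) : MeasurableSet (invRegion a ε) :=
  measurableSet_lt (by fun_prop) (by fun_prop)

lemma swap_mem_invRegion {d : ℕ} (a : Ed d) (ε : ℝ) (p : Ed d × Ed d) :
    p.swap ∈ invRegion a ε ↔ p ∈ invRegion a ε := by
  simp only [invRegion, mem_ofPred_eq, Prod.fst_swap, Prod.snd_swap, norm_sub_rev p.2 p.1]
  rw [mul_right_comm]

lemma lt_norm_sub_of_mem_invRegion {d : ℕ} {a : Ed d} {ε k : ℝ} (hk2 : k ≤ 1 / 2)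
    (hkε : k ^ 2 ≤ ε / 2) {x y : Ed d} (hx : x ≠ a) (h : (x, y) ∈ invRegion a ε) :
    k * ‖x - a‖ < ‖x - y‖ := by
  by_contra! hcon
  simp only [invRegion, mem_ofPred_eq] at h
  have hR : 0 < ‖x - a‖ := norm_pos_iff.2 (sub_ne_zero.2 hx)
  have h1 : ‖x - a‖ ≤ ‖x - y‖ + ‖y - a‖ := by
    simpa using norm_add_le (x - y) (y - a)
  have h2 : ‖x - a‖ / 2 ≤ ‖y - a‖ := by nlinarith
  have h3 : ‖x - y‖ ^ 2 ≤ k ^ 2 * ‖x - a‖ ^ 2 := by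
    rw [← mul_pow]; exact pow_le_pow_left₀ (norm_nonneg _) hcon 2
  have h4 : 0 ≤ ε := by nlinarith [sq_nonneg k]
  have h5 : ε * ‖x - a‖ * (‖x - a‖ / 2) ≤ ε * ‖x - a‖ * ‖y - a‖ := by gcongr
  nlinarith [sq_nonneg ‖x - a‖]

open EuclideanGeometry in
lemma diffQuot_add_inversion_nonneg {d : ℕ} {s : ℝ} {F : ℝ → ℝ}
    (hF : ConcaveOn ℝ (Ioi 0) F) {a : Ed d} {χ : Ed d → ℝ}
    (hχ : ∀ z, z ≠ a → χ z = F (‖z - a‖ ^ (-((d : ℝ) - 2 * s)))) {ε : ℝ} {x y : Ed d}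
    (hx : x ≠ a) (hy : y ≠ a) :
    0 ≤ (invRegion a ε).indicator (diffQuot d s χ) (x, y) +
      (dist x a / dist y a) ^ (2 * d) *
        (invRegion a ε).indicator (diffQuot d s χ) (x, inversion a (dist x a) y) := by
  set R := dist x a with hR
  set r := dist y a with hr
  have hR0 : 0 < R := dist_pos.2 hx
  have hr0 : 0 < r := dist_pos.2 hy
  have hι : inversion a R y ≠ a := by rwa [Ne, inversion_eq_center hR0.ne']
  have hιa : ‖inversion a R y - a‖ = R ^ 2 / r := by
    rw [← dist_eq_norm, dist_inversion_center]
  have hιx : ‖x - inversion a R y‖ = R / r * ‖x - y‖ := by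
    have hxi : inversion a R x = x := inversion_of_mem_sphere (by rw [Metric.mem_sphere])
    have := dist_inversion_inversion hx hy R
    rw [hxi] at this
    rw [← dist_eq_norm, this, ← hR, ← hr, dist_eq_norm]
    field_simp
  have hmem : (x, inversion a R y) ∈ invRegion a ε ↔ (x, y) ∈ invRegion a ε := by
    simp only [invRegion, mem_ofPred_eq, hιa, hιx, ← dist_eq_norm x a, ← dist_eq_norm y a, ← hR, ← hr]
    rw [mul_pow, div_pow]
    have : ε * R * (R ^ 2 / r) = R ^ 2 / r ^ 2 * (ε * R * r) := by field_simp
    rw [this, mul_lt_mul_iff_of_pos_left (by positivity)]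
  by_cases hT : (x, y) ∈ invRegion a ε
  swap
  · simp [hT, hmem]
  rw [indicator_of_mem hT, indicator_of_mem (hmem.2 hT)]
  simp only [diffQuot, hιx]
  rcases eq_or_ne x y with rfl | hxy
  · have : EuclideanGeometry.inversion a R x = x :=
      inversion_of_mem_sphere (by rw [Metric.mem_sphere])
    simp [this]
  have hD : 0 < ‖x - y‖ := norm_pos_iff.2 (sub_ne_zero.2 hxy)
  set b := (d : ℝ) - 2 * s with hb
  set l := (R / r) ^ b with hl
  have hl0 : 0 < l := by positivity
  rw [Real.mul_rpow (by positivity) hD.le]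
  have hsplit : (R / r) ^ (2 * d) = l * (R / r) ^ ((d : ℝ) + 2 * s) := by
    rw [hl, ← Real.rpow_add (by positivity), ← Real.rpow_natCast]
    congr 1
    push_cast; rw [hb]; ring
  rw [hsplit]
  have hmain : (R / r) ^ ((d : ℝ) + 2 * s) ≠ 0 := by positivity
  have hJ : (χ y + l * χ (inversion a R y)) ≤ (1 + l) * χ x := by
    rw [hχ x hx, hχ y hy, hχ _ hι, hιa, ← dist_eq_norm x a, ← dist_eq_norm y a, ← hR, ← hr]
    have h := hF.2 (show r ^ (-b) ∈ Ioi (0 : ℝ) from Real.rpow_pos_of_pos hr0 _)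
      (show (R ^ 2 / r) ^ (-b) ∈ Ioi (0 : ℝ) from Real.rpow_pos_of_pos (by positivity) _)
      (show 0 ≤ 1 / (1 + l) by positivity) (show 0 ≤ l / (1 + l) by positivity)
      (by field_simp)
    have hmid : (1 / (1 + l)) • r ^ (-b) + (l / (1 + l)) • (R ^ 2 / r) ^ (-b) = R ^ (-b) := by
      have e1 : l * (R ^ 2 / r) ^ (-b) = R ^ (-b) := by
        rw [hl, Real.rpow_neg (by positivity), ← Real.inv_rpow (by positivity),
          ← Real.mul_rpow (by positivity) (by positivity), Real.rpow_neg hR0.le,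
          ← Real.inv_rpow hR0.le]
        congr 1
        field_simp
      have e2 : l * R ^ (-b) = r ^ (-b) := by
        rw [hl, Real.div_rpow hR0.le hr0.le, Real.rpow_neg hR0.le, Real.rpow_neg hr0.le]
        field_simp
      simp only [smul_eq_mul]
      rw [div_mul_eq_mul_div, div_mul_eq_mul_div, ← add_div, e1, one_mul, ← e2]
      field_simp
      ring
    rw [hmid] at h
    simp only [smul_eq_mul] at h
    rw [div_mul_eq_mul_div, div_mul_eq_mul_div, ← add_div, div_le_iff₀ (by positivity)] at h
    linarith
  have hfin : (χ x - χ y) / ‖x - y‖ ^ ((d : ℝ) + 2 * s) + l * (R / r) ^ ((d : ℝ) + 2 * s) *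
      ((χ x - χ (inversion a R y)) / ((R / r) ^ ((d : ℝ) + 2 * s) * ‖x - y‖ ^ ((d : ℝ) + 2 * s)))
      = ((1 + l) * χ x - (χ y + l * χ (inversion a R y))) / ‖x - y‖ ^ ((d : ℝ) + 2 * s) := by
    have : ‖x - y‖ ^ ((d : ℝ) + 2 * s) ≠ 0 := by positivity
    field_simp
    ring
  rw [hfin]
  exact div_nonneg (by linarith) (by positivity)

/-- A concave function of the fundamental solution is a supersolution, in truncated form. -/
lemma integral_diffQuot_nonneg {d : ℕ} {s : ℝ} (hs : 0 < s) (hd : 2 * s < d) {F : ℝ → ℝ}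
    (hF : ConcaveOn ℝ (Ioi 0) F) {a : Ed d} {χ : Ed d → ℝ}
    (hχ : ∀ z, z ≠ a → χ z = F (‖z - a‖ ^ (-((d : ℝ) - 2 * s)))) {ε : ℝ} {x : Ed d} (hx : x ≠ a) :
    0 ≤ ∫ y, (invRegion a ε).indicator (diffQuot d s χ) (x, y) := by
  have hd0 : 0 < d := by
    have : (0 : ℝ) < d := by linarith
    exact_mod_cast this
  have := nontrivial_Ed hd0
  by_cases hI : Integrable (fun y => (invRegion a ε).indicator (diffQuot d s χ) (x, y))
  swap
  · rw [integral_undef hI]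
  have hR : dist x a ≠ 0 := (dist_pos.2 hx).ne'
  have h1 := integral_inversion hd0 a hR
    (fun y => (invRegion a ε).indicator (diffQuot d s χ) (x, y))
  have h2 := integrable_inversion hd0 a hR hI
  have h3 : 0 ≤ ∫ y, ((invRegion a ε).indicator (diffQuot d s χ) (x, y) +
      (dist x a / dist y a) ^ (2 * d) * (invRegion a ε).indicator (diffQuot d s χ)
        (x, EuclideanGeometry.inversion a (dist x a) y)) := by
    refine integral_nonneg_of_ae ?_
    have : ∀ᵐ y ∂(volume : Measure (Ed d)), y ≠ a := by
      simp [ae_iff]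
    filter_upwards [this] with y hy
    exact diffQuot_add_inversion_nonneg hF hχ hx hy
  rw [integral_add hI h2, ← h1] at h3
  linarith

/-- A concave function of the fundamental solution is a supersolution, in weak form. -/
lemma integral_gagInt_nonneg {d : ℕ} {s : ℝ} (hs : 0 < s) (hd : 2 * s < d) {F : ℝ → ℝ}
    (hF : ConcaveOn ℝ (Ioi 0) F) {a : Ed d} {v χ : Ed d → ℝ}
    (hχ : ∀ z, z ≠ a → χ z = F (‖z - a‖ ^ (-((d : ℝ) - 2 * s))))
    (hv : Measurable v) (hv0 : ∀ x, 0 ≤ v x) (hχm : Measurable χ) {K : ℝ} (hχK : ∀ x, |χ x| ≤ K)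
    (hvI : Integrable (gagInt d s v v)) (hχI : Integrable (gagInt d s χ χ))
    (hvw : ∫⁻ x, ENNReal.ofReal (v x) * ENNReal.ofReal (‖x - a‖ ^ (-(2 * s))) < ⊤) :
    0 ≤ ∫ p, gagInt d s v χ p := by
  have hd0 : 0 < d := by
    have : (0 : ℝ) < d := by linarith
    exact_mod_cast this
  have := nontrivial_Ed hd0
  have hK : 0 ≤ K := (abs_nonneg _).trans (hχK a)
  have hne : ∀ᵐ y ∂(volume : Measure (Ed d)), y ≠ a := by simp [ae_iff]
  have hlim := tendsto_setIntegral_gagInt (integrable_gagInt hv hχm hvI hχI)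
    (T := fun n => invRegion a (1 / ((n : ℝ) + 1))) (fun n => measurableSet_invRegion a _) (by
      intro p hp
      have hD : 0 < ‖p.1 - p.2‖ ^ 2 := by
        have := norm_pos_iff.2 (sub_ne_zero.2 hp); positivity
      have ht : Tendsto (fun n : ℕ => 1 / ((n : ℝ) + 1) * ‖p.1 - a‖ * ‖p.2 - a‖) atTop
          (𝓝 (0 * ‖p.1 - a‖ * ‖p.2 - a‖)) :=
        (tendsto_one_div_add_atTop_nhds_zero_nat.mul_const _).mul_const _
      rw [zero_mul, zero_mul] at ht
      exact ht.eventually_lt_const hD)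
  refine ge_of_tendsto' hlim fun n => ?_
  set ε : ℝ := 1 / ((n : ℝ) + 1) with hε
  have hε0 : 0 < ε := by positivity
  obtain ⟨k, hk0, hk2, hkε⟩ : ∃ k : ℝ, 0 < k ∧ k ≤ 1 / 2 ∧ k ^ 2 ≤ ε / 2 := by
    refine ⟨min (1 / 2) (ε / 2), by positivity, min_le_left _ _, ?_⟩
    have h1 := min_le_left (1 / 2) (ε / 2)
    have h2 := min_le_right (1 / 2) (ε / 2)
    have h3 : 0 < min (1 / 2) (ε / 2) := by positivity
    nlinarith
  rw [setIntegral_gagInt_eq hv hv0 hχm (measurableSet_invRegion a ε) (swap_mem_invRegion a ε)]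
  · refine mul_nonneg zero_le_two (integral_nonneg_of_ae ?_)
    filter_upwards [hne] with x hx
    exact mul_nonneg (hv0 x) (integral_diffQuot_nonneg hs hd hF hχ hx)
  · set A : ℝ := 2 * K * (sphereConst d / (2 * s) * k ^ (-(2 * s))) with hA
    have hA0 : 0 ≤ A := by
      have := sphereConst_nonneg d
      positivity
    have hb : ∀ᵐ x ∂(volume : Measure (Ed d)), ENNReal.ofReal (v x) *
        ∫⁻ y, ENNReal.ofReal |(invRegion a ε).indicator (diffQuot d s χ) (x, y)| ≤
        ENNReal.ofReal A * (ENNReal.ofReal (v x) * ENNReal.ofReal (‖x - a‖ ^ (-(2 * s)))) := by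
      filter_upwards [hne] with x hx
      have hR : 0 < ‖x - a‖ := norm_pos_iff.2 (sub_ne_zero.2 hx)
      have := lintegral_le_of_le_tail hd0 hs x (r := k * ‖x - a‖) (A := 2 * K) (by positivity)
        (by positivity) (f := fun y => (invRegion a ε).indicator (diffQuot d s χ) (x, y)) (by
          intro y
          by_cases hy : (x, y) ∈ invRegion a ε
          · have hlt := lt_norm_sub_of_mem_invRegion hk2 hkε hx hy
            rw [indicator_of_mem hy, indicator_of_mem (by exact hlt)]
            simp only [diffQuot]
            rw [Real.rpow_neg (norm_nonneg _), ← div_eq_mul_inv, abs_div,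
              abs_of_nonneg (Real.rpow_nonneg (norm_nonneg _) _)]
            gcongr
            have := abs_sub (χ x) (χ y)
            linarith [hχK x, hχK y]
          · rw [indicator_of_notMem hy, abs_zero]
            exact indicator_nonneg (fun h _ => by positivity) _)
      rw [mul_left_comm, ← ENNReal.ofReal_mul hA0]
      gcongr
      refine this.trans (ENNReal.ofReal_le_ofReal (le_of_eq ?_))
      rw [hA, Real.mul_rpow hk0.le hR.le]
      ring
    refine (lintegral_mono_ae hb).trans_lt ?_
    rw [lintegral_const_mul' _ _ ENNReal.ofReal_ne_top]
    exact ENNReal.mul_lt_top ENNReal.ofReal_lt_top hvw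

lemma lintegral_one_add_norm_sub_rpow_lt_top {d : ℕ} (a : Ed d) {e : ℝ} (he : (d : ℝ) < e) :
    ∫⁻ x : Ed d, ENNReal.ofReal ((1 + ‖x - a‖) ^ (-e)) < ⊤ := by
  have h := (integrable_one_add_norm (E := Ed d) (μ := volume) (r := e) (by simpa using he)).comp_sub_right a
  exact ((hasFiniteIntegral_iff_ofReal (Eventually.of_forall fun x => by positivity)).1 h.2)

/-- Functions decaying, with their gradient, like the fundamental solution have finite energy. -/
lemma integrable_gagInt_self_of_decay {d : ℕ} {s : ℝ} (hs0 : 0 < s) (hs1 : s < 1) (hd : 2 * s < d)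
    {w : Ed d → ℝ} (hw : Measurable w) (a : Ed d) {K : ℝ}
    (h1 : ∀ x, |w x| ≤ K * (1 + ‖x - a‖) ^ (-((d : ℝ) - 2 * s)))
    (h2 : ∀ x y, ‖x - y‖ < (1 + ‖x - a‖) / 2 →
      |w x - w y| ≤ K * ‖x - y‖ * (1 + ‖x - a‖) ^ (-((d : ℝ) - 2 * s) - 1)) :
    Integrable (gagInt d s w w) := by
  have hd0 : 0 < d := by
    have : (0 : ℝ) < d := by linarith
    exact_mod_cast this
  have := nontrivial_Ed hd0
  set b := (d : ℝ) - 2 * s with hb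
  set N : Ed d → ℝ := fun x => 1 + ‖x - a‖ with hN
  have hN0 : ∀ x, 0 < N x := fun x => by positivity
  have hNm : Measurable N := by fun_prop
  refine ⟨(measurable_gagInt hw hw).aestronglyMeasurable, ?_⟩
  rw [hasFiniteIntegral_iff_ofReal (Eventually.of_forall (gagInt_self_nonneg w))]
  set α : Ed d × Ed d → ℝ≥0∞ := fun p => if ‖p.1 - p.2‖ ≤ N p.1 / 2 then
    ENNReal.ofReal (K ^ 2 * N p.1 ^ (-2 * b - 2)) *
      ENNReal.ofReal (‖p.1 - p.2‖ ^ (-(d : ℝ) + (2 - 2 * s))) else 0 with hα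
  set β : Ed d × Ed d → ℝ≥0∞ := fun p => if N p.1 / 4 < ‖p.1 - p.2‖ then
    ENNReal.ofReal (2 * K ^ 2 * N p.1 ^ (-2 * b)) *
      ENNReal.ofReal (‖p.1 - p.2‖ ^ (-((d : ℝ) + 2 * s))) else 0 with hβ
  have hαm : Measurable α := by
    refine Measurable.ite (measurableSet_le (by fun_prop) (by fun_prop)) (by fun_prop) measurable_const
  have hβm : Measurable β := by
    refine Measurable.ite (measurableSet_lt (by fun_prop) (by fun_prop)) (by fun_prop) measurable_const
  have hsq : ∀ x, (N x ^ (-b)) ^ 2 = N x ^ (-2 * b) := fun x => by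
    rw [← Real.rpow_mul_natCast (hN0 x).le]; congr 1; push_cast; ring
  have hsq' : ∀ x, (N x ^ (-b - 1)) ^ 2 = N x ^ (-2 * b - 2) := fun x => by
    rw [← Real.rpow_mul_natCast (hN0 x).le]; congr 1; push_cast; ring
  have hwsq : ∀ x, w x ^ 2 ≤ K ^ 2 * N x ^ (-2 * b) := fun x => by
    rw [← hsq, ← mul_pow, ← sq_abs]
    exact pow_le_pow_left₀ (abs_nonneg _) (h1 x) 2
  have hpt : ∀ p, ENNReal.ofReal (gagInt d s w w p) ≤ α p + (β p + β p.swap) := by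
    rintro ⟨x, y⟩
    rcases lt_or_ge ‖x - y‖ (N x / 2) with h | h
    · refine le_trans ?_ le_self_add
      simp only [hα, h.le, if_true]
      rw [← ENNReal.ofReal_mul (by have := hN0 x; positivity)]
      apply ENNReal.ofReal_le_ofReal
      rcases eq_or_ne x y with rfl | hxy
      · simp only [gagInt, sub_self, zero_mul, zero_div]
        have := hN0 x
        positivity
      have hD : 0 < ‖x - y‖ := norm_pos_iff.2 (sub_ne_zero.2 hxy)
      have h3 : (w x - w y) * (w x - w y) ≤ K ^ 2 * N x ^ (-2 * b - 2) * ‖x - y‖ ^ 2 := by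
        rw [← sq, ← sq_abs, ← hsq']
        refine (pow_le_pow_left₀ (abs_nonneg _) (h2 x y h) 2).trans (le_of_eq ?_)
        ring
      simp only [gagInt]
      rw [div_le_iff₀ (by positivity), mul_assoc, ← Real.rpow_add hD]
      refine h3.trans (le_of_eq ?_)
      congr 1
      rw [← Real.rpow_natCast]; congr 1; push_cast; ring
    · refine le_trans ?_ le_add_self
      have hx : N x / 4 < ‖x - y‖ := by linarith [hN0 x]
      have hy : N y / 4 < ‖x - y‖ := by
        have : ‖y - a‖ ≤ ‖x - y‖ + ‖x - a‖ := by
          rw [norm_sub_rev x y]; simpa using norm_add_le (y - x) (x - a)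
        simp only [hN] at h ⊢
        have h0 := norm_nonneg (x - a)
        linarith
      have hD : 0 < ‖x - y‖ := lt_of_le_of_lt (by have := hN0 x; positivity) hx
      simp only [hβ, hx, if_true, Prod.swap, norm_sub_rev y x, hy]
      rw [← add_mul, ← ENNReal.ofReal_add (by have := hN0 x; positivity)
        (by have := hN0 y; positivity), ← ENNReal.ofReal_mul
        (by have := hN0 y; have := hN0 x; positivity)]
      apply ENNReal.ofReal_le_ofReal
      simp only [gagInt]
      rw [Real.rpow_neg hD.le, ← div_eq_mul_inv]
      gcongr
      nlinarith [hwsq x, hwsq y, sq_nonneg (w x + w y)]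
  have hfin := lintegral_one_add_norm_sub_rpow_lt_top a (e := 2 * b + 2 * s) (by linarith)
  have hS := sphereConst_nonneg d
  have hbound : ∀ (f : Ed d × Ed d → ℝ≥0∞) (A : ℝ), Measurable f →
      (∀ x, ∫⁻ y, f (x, y) ≤ ENNReal.ofReal A * ENNReal.ofReal (N x ^ (-(2 * b + 2 * s)))) →
      ∫⁻ p, f p < ⊤ := by
    intro f A hf h
    rw [Measure.volume_eq_prod, lintegral_prod _ hf.aemeasurable]
    refine (lintegral_mono h).trans_lt ?_
    rw [lintegral_const_mul' _ _ ENNReal.ofReal_ne_top]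
    exact ENNReal.mul_lt_top ENNReal.ofReal_lt_top hfin
  have hα_int : ∫⁻ p, α p < ⊤ := by
    refine hbound α (K ^ 2 * (sphereConst d / (2 - 2 * s) * (1 / 2) ^ (2 - 2 * s))) hαm fun x => ?_
    have e1 : ∀ y, α (x, y) = ENNReal.ofReal (K ^ 2 * N x ^ (-2 * b - 2)) *
        {h : Ed d | ‖h‖ ≤ N x / 2}.indicator
          (fun h => ENNReal.ofReal (‖h‖ ^ (-(d : ℝ) + (2 - 2 * s)))) (x - y) := fun y => by
      simp only [hα, indicator, mem_ofPred_eq, mul_ite, mul_zero]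
    simp_rw [e1]
    rw [lintegral_const_mul' _ _ ENNReal.ofReal_ne_top, lintegral_sub_left_eq_self
      (fun z => {h : Ed d | ‖h‖ ≤ N x / 2}.indicator
          (fun h => ENNReal.ofReal (‖h‖ ^ (-(d : ℝ) + (2 - 2 * s)))) z) x,
      lintegral_indicator (measurableSet_le measurable_norm measurable_const),
      lintegral_norm_rpow_ball hd0 (by linarith) (by have := hN0 x; positivity),
      ← ENNReal.ofReal_mul (by have := hN0 x; positivity),
      ← ENNReal.ofReal_mul (by have : 0 < 2 - 2 * s := by linarith
                               positivity)]
    refine ENNReal.ofReal_le_ofReal (le_of_eq ?_)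
    have e2 : N x ^ (-(2 * b + 2 * s)) = N x ^ (-2 * b - 2) * N x ^ (2 - 2 * s) := by
      rw [← Real.rpow_add (hN0 x)]; congr 1; ring
    rw [e2, div_eq_mul_one_div (N x) 2, Real.mul_rpow (hN0 x).le (by norm_num)]
    ring
  have hβ_int : ∫⁻ p, β p < ⊤ := by
    refine hbound β (2 * K ^ 2 * (sphereConst d / (2 * s) * (1 / 4) ^ (-(2 * s)))) hβm fun x => ?_
    have e1 : ∀ y, β (x, y) = ENNReal.ofReal (2 * K ^ 2 * N x ^ (-2 * b)) *
        {h : Ed d | N x / 4 < ‖h‖}.indicator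
          (fun h => ENNReal.ofReal (‖h‖ ^ (-((d : ℝ) + 2 * s)))) (x - y) := fun y => by
      simp only [hβ, indicator, mem_ofPred_eq, mul_ite, mul_zero]
    simp_rw [e1]
    rw [lintegral_const_mul' _ _ ENNReal.ofReal_ne_top, lintegral_sub_left_eq_self
      (fun z => {h : Ed d | N x / 4 < ‖h‖}.indicator
          (fun h => ENNReal.ofReal (‖h‖ ^ (-((d : ℝ) + 2 * s)))) z) x,
      lintegral_indicator (measurableSet_lt measurable_const measurable_norm),
      lintegral_norm_rpow_compl_ball hd0 (by linarith) (by have := hN0 x; positivity),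
      ← ENNReal.ofReal_mul (by have := hN0 x; positivity), ← ENNReal.ofReal_mul (by positivity)]
    refine ENNReal.ofReal_le_ofReal (le_of_eq ?_)
    have e2 : N x ^ (-(2 * b + 2 * s)) = N x ^ (-2 * b) * N x ^ (-(2 * s)) := by
      rw [← Real.rpow_add (hN0 x)]; congr 1; ring
    rw [e2, div_eq_mul_one_div (N x) 4, Real.mul_rpow (hN0 x).le (by norm_num)]
    ring
  refine (lintegral_mono hpt).trans_lt ?_
  rw [lintegral_add_left hαm, lintegral_add_left hβm, Measure.volume_eq_prod, lintegral_prod_swap,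
    ← Measure.volume_eq_prod]
  exact ENNReal.add_lt_top.2 ⟨hα_int, ENNReal.add_lt_top.2 ⟨hβ_int, hβ_int⟩⟩

lemma abs_integral_le_of_lintegral_le {X : Type*} [MeasurableSpace X] {μ : Measure X} {f : X → ℝ}
    {A : ℝ} (hA : 0 ≤ A)
    (h : ∫⁻ x, ENNReal.ofReal |f x| ∂μ ≤ ENNReal.ofReal A) : |∫ x, f x ∂μ| ≤ A := by
  have h1 := enorm_integral_le_lintegral_enorm (μ := μ) f
  simp only [Real.enorm_eq_ofReal_abs] at h1
  exact (ENNReal.ofReal_le_ofReal_iff hA).1 (h1.trans h)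

/-- The off-diagonal region `ε < |x-y|`. -/
def farRegion {d : ℕ} (ε : ℝ) : Set (Ed d × Ed d) := {p | ε < ‖p.1 - p.2‖}

lemma measurableSet_farRegion {d : ℕ} (ε : ℝ) : MeasurableSet (farRegion (d := d) ε) :=
  measurableSet_lt (by fun_prop) (by fun_prop)

lemma abs_indicator_diffQuot_le {d : ℕ} {s ε r A : ℝ} (hA : 0 ≤ A) {w : Ed d → ℝ} {x y : Ed d}
    (h1 : ε < ‖x - y‖ → |w x - w y| ≤ A) (h2 : ε < ‖x - y‖ → w x - w y ≠ 0 → r < ‖x - y‖) :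
    |(farRegion ε).indicator (diffQuot d s w) (x, y)| ≤ {h : Ed d | r < ‖h‖}.indicator
      (fun h => A * ‖h‖ ^ (-((d : ℝ) + 2 * s))) (x - y) := by
  by_cases hy : (x, y) ∈ farRegion ε
  · rw [indicator_of_mem hy]
    simp only [diffQuot]
    rcases eq_or_ne (w x - w y) 0 with h0 | h0
    · rw [h0, zero_div, abs_zero]
      exact indicator_nonneg (fun h _ => by positivity) _
    · rw [indicator_of_mem (by exact h2 hy h0), Real.rpow_neg (norm_nonneg _), ← div_eq_mul_inv,
        abs_div, abs_of_nonneg (Real.rpow_nonneg (norm_nonneg _) _)]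
      gcongr
      exact h1 hy
  · rw [indicator_of_notMem hy, abs_zero]
    exact indicator_nonneg (fun h _ => by positivity) _

/-- The constant in the bound of the truncated fractional Laplacian of a bump function. -/
def bumpConst (d : ℕ) (s L : ℝ) : ℝ :=
  (sphereConst d / (2 - 2 * s) * L + 4 * (sphereConst d / (2 * s))) * 5 ^ (2 * s)

lemma bumpConst_nonneg (d : ℕ) {s L : ℝ} (hs0 : 0 < s) (hs1 : s < 1) (hL : 0 ≤ L) :
    0 ≤ bumpConst d s L := by
  have := sphereConst_nonneg d
  have h : 0 < 2 - 2 * s := by linarith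
  unfold bumpConst; positivity

lemma abs_integral_diffQuot_bump_le {d : ℕ} {s : ℝ} (hs0 : 0 < s) (hs1 : s < 1) (hd : 0 < d)
    {w : Ed d → ℝ} (hw : Measurable w) (hw1 : ∀ x, |w x| ≤ 1) {L R : ℝ} (hL : 0 ≤ L) (hR : 0 < R)
    (hsec : ∀ x h, |2 * w x - w (x + h) - w (x - h)| ≤ L * ‖h‖ ^ 2 / R ^ 2)
    (hsupp : ∀ x, 2 * R ≤ ‖x‖ → w x = 0) {ε : ℝ} (hε : 0 < ε) (x : Ed d) :
    |∫ y, (farRegion ε).indicator (diffQuot d s w) (x, y)| ≤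
      bumpConst d s L * (R + ‖x‖) ^ (-(2 * s)) := by
  have := nontrivial_Ed hd
  have hS := sphereConst_nonneg d
  have hs2 : 0 < 2 - 2 * s := by linarith
  have hnx := norm_nonneg x
  have h5 : ((R + ‖x‖) / 5) ^ (-(2 * s)) = 5 ^ (2 * s) * (R + ‖x‖) ^ (-(2 * s)) := by
    rw [div_eq_inv_mul, Real.mul_rpow (by norm_num) (by positivity),
      Real.inv_rpow (by norm_num), Real.rpow_neg (by norm_num), inv_inv]
  have hK1 : 0 ≤ sphereConst d / (2 - 2 * s) * L := by positivity
  rcases le_or_gt (4 * R) ‖x‖ with hx | hx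
  · have hw0 : w x = 0 := hsupp x (by linarith)
    have := lintegral_le_of_le_tail hd hs0 x (r := (R + ‖x‖) / 5) (A := 1) (by positivity)
      zero_le_one (f := fun y => (farRegion ε).indicator (diffQuot d s w) (x, y)) (fun y => by
        apply abs_indicator_diffQuot_le zero_le_one
        · intro _
          rw [hw0, zero_sub, abs_neg]; exact hw1 y
        · intro _ h0
          rw [hw0, zero_sub, neg_ne_zero] at h0
          have : ‖y‖ < 2 * R := by
            by_contra! hcon
            exact h0 (hsupp y hcon)
          have h3 := norm_sub_norm_le x y
          linarith)
    refine (abs_integral_le_of_lintegral_le (by positivity) this).trans ?_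
    rw [one_mul, h5, bumpConst, ← mul_assoc]
    gcongr
    have : 0 ≤ sphereConst d / (2 * s) := by positivity
    linarith
  · set f : Ed d → ℝ := fun y => (farRegion ε).indicator (diffQuot d s w) (x, y) with hf
    have hfm : Measurable f :=
      ((measurable_diffQuot hw).indicator (measurableSet_farRegion ε)).comp measurable_prodMk_left
    have hfi : Integrable f := by
      refine ⟨hfm.aestronglyMeasurable, ?_⟩
      have := lintegral_le_of_le_tail hd hs0 x (r := ε) (A := 2) hε zero_le_two
        (f := f) (fun y => by
          apply abs_indicator_diffQuot_le zero_le_two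
          · intro _
            have := abs_sub (w x) (w y)
            linarith [hw1 x, hw1 y]
          · exact fun h _ => h)
      rw [HasFiniteIntegral]
      simp only [Real.enorm_eq_ofReal_abs]
      exact this.trans_lt ENNReal.ofReal_lt_top
    have hrefl : ∫ y, f (x + x - y) = ∫ y, f y := integral_sub_left_eq_self f volume (x + x)
    have hfi' : Integrable (fun y => f (x + x - y)) := hfi.comp_sub_left (x + x)
    have hsum : 2 * ∫ y, f y = ∫ y, (f y + f (x + x - y)) := by
      rw [integral_add hfi hfi', hrefl]; ring
    set D : ℝ := L / R ^ 2 * (sphereConst d / (2 - 2 * s) * R ^ (2 - 2 * s)) +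
      4 * (sphereConst d / (2 * s) * R ^ (-(2 * s))) with hD
    have hD' : D = (sphereConst d / (2 - 2 * s) * L + 4 * (sphereConst d / (2 * s))) *
        R ^ (-(2 * s)) := by
      have : R ^ (2 - 2 * s) = R ^ 2 * R ^ (-(2 * s)) := by
        rw [sub_eq_add_neg, Real.rpow_add hR, Real.rpow_two]
      rw [hD, this]
      field_simp
    have hle : |∫ y, (f y + f (x + x - y))| ≤ D := by
      refine abs_integral_le_of_lintegral_le (by positivity) ?_
      have hpt : ∀ y, ENNReal.ofReal |f y + f (x + x - y)| ≤
          {h : Ed d | ‖h‖ ≤ R}.indicator (fun h => ENNReal.ofReal (L / R ^ 2) *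
            ENNReal.ofReal (‖h‖ ^ (-(d : ℝ) + (2 - 2 * s)))) (x - y) +
          {h : Ed d | R < ‖h‖}.indicator (fun h => ENNReal.ofReal 4 *
            ENNReal.ofReal (‖h‖ ^ (-((d : ℝ) + 2 * s)))) (x - y) := by
        intro y
        have hxy : x - (x + x - y) = y - x := by abel
        have e1 : |f y + f (x + x - y)| ≤
            |2 * w x - w (x + (x - y)) - w (x - (x - y))| / ‖x - y‖ ^ ((d : ℝ) + 2 * s) := by
          by_cases h : ε < ‖x - y‖
          · have m1 : (x, y) ∈ farRegion ε := h
            have m2 : (x, x + x - y) ∈ farRegion ε := by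
              simpa only [farRegion, mem_ofPred_eq, hxy, norm_sub_rev y x] using h
            simp only [hf]
            rw [indicator_of_mem m1, indicator_of_mem m2]
            simp only [diffQuot, hxy, norm_sub_rev y x]
            rw [← add_div, abs_div, abs_of_nonneg (Real.rpow_nonneg (norm_nonneg _) _)]
            apply le_of_eq
            congr 2
            rw [show x + (x - y) = x + x - y by abel, show x - (x - y) = y by abel]
            ring
          · have m1 : (x, y) ∉ farRegion ε := h
            have m2 : (x, x + x - y) ∉ farRegion ε := by
              simpa only [farRegion, mem_ofPred_eq, hxy, norm_sub_rev y x] using h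
            simp only [hf]
            rw [indicator_of_notMem m1, indicator_of_notMem m2, add_zero, abs_zero]
            positivity
        by_cases h : ‖x - y‖ ≤ R
        · refine le_trans ?_ le_self_add
          rw [indicator_of_mem (by exact h), ← ENNReal.ofReal_mul (by positivity)]
          refine ENNReal.ofReal_le_ofReal (e1.trans ?_)
          rcases eq_or_ne x y with rfl | hne
          · simp only [sub_self, add_zero, sub_zero, norm_zero]
            rw [show 2 * w x - w x - w x = 0 by ring, abs_zero, zero_div]
            positivity
          have hn : 0 < ‖x - y‖ := norm_pos_iff.2 (sub_ne_zero.2 hne)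
          rw [div_le_iff₀ (by positivity), mul_assoc, ← Real.rpow_add hn]
          refine (hsec x (x - y)).trans (le_of_eq ?_)
          rw [mul_div_right_comm]
          congr 1
          rw [← Real.rpow_natCast]; congr 1; push_cast; ring
        · push Not at h
          refine le_trans ?_ le_add_self
          rw [indicator_of_mem (by exact h), ← ENNReal.ofReal_mul (by positivity)]
          refine ENNReal.ofReal_le_ofReal (e1.trans ?_)
          rw [Real.rpow_neg (norm_nonneg _), ← div_eq_mul_inv]
          gcongr
          have a1 := abs_le.1 (hw1 x)
          have a2 := abs_le.1 (hw1 (x + (x - y)))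
          have a3 := abs_le.1 (hw1 (x - (x - y)))
          rw [abs_le]; constructor <;> linarith [a1.1, a1.2, a2.1, a2.2, a3.1, a3.2]
      have m1 : MeasurableSet {h : Ed d | ‖h‖ ≤ R} := measurableSet_le measurable_norm measurable_const
      have m2 : MeasurableSet {h : Ed d | R < ‖h‖} := measurableSet_lt measurable_const measurable_norm
      refine (lintegral_mono hpt).trans ?_
      rw [lintegral_add_left (by
          exact (Measurable.indicator (by fun_prop) m1).comp (measurable_const.sub measurable_id))]
      rw [lintegral_sub_left_eq_self (fun z => {h : Ed d | ‖h‖ ≤ R}.indicator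
          (fun h => ENNReal.ofReal (L / R ^ 2) *
            ENNReal.ofReal (‖h‖ ^ (-(d : ℝ) + (2 - 2 * s)))) z) x,
        lintegral_sub_left_eq_self (fun z => {h : Ed d | R < ‖h‖}.indicator
          (fun h => ENNReal.ofReal 4 * ENNReal.ofReal (‖h‖ ^ (-((d : ℝ) + 2 * s)))) z) x,
        lintegral_indicator m1, lintegral_indicator m2,
        lintegral_const_mul' _ _ ENNReal.ofReal_ne_top, lintegral_const_mul' _ _ ENNReal.ofReal_ne_top,
        lintegral_norm_rpow_ball hd hs2 hR, lintegral_norm_rpow_compl_ball hd (by linarith) hR,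
        ← ENNReal.ofReal_mul (by positivity), ← ENNReal.ofReal_mul (by positivity),
        ← ENNReal.ofReal_add (by positivity) (by positivity)]
    have hRx : R ^ (-(2 * s)) ≤ 5 ^ (2 * s) * (R + ‖x‖) ^ (-(2 * s)) := by
      rw [← h5]
      exact Real.rpow_le_rpow_of_nonpos (by positivity) (by linarith) (by linarith)
    have h2 : |∫ y, f y| ≤ D := by
      rw [← hsum, abs_mul, abs_two] at hle
      linarith [abs_nonneg (∫ y, f y)]
    refine h2.trans ?_
    rw [hD', bumpConst, mul_assoc]
    gcongr

/-- The Gagliardo form is small when tested against a function varying on a large scale `R`. -/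
lemma abs_integral_gagInt_bump_le {d : ℕ} {s : ℝ} (hs0 : 0 < s) (hs1 : s < 1) (hd : 0 < d)
    {w v : Ed d → ℝ} (hw : Measurable w) (hw1 : ∀ x, |w x| ≤ 1) {L R : ℝ} (hL : 0 ≤ L) (hR : 1 ≤ R)
    (hsec : ∀ x h, |2 * w x - w (x + h) - w (x - h)| ≤ L * ‖h‖ ^ 2 / R ^ 2)
    (hsupp : ∀ x, 2 * R ≤ ‖x‖ → w x = 0) (hv : Measurable v) (hv0 : ∀ x, 0 ≤ v x)
    (hI : Integrable (gagInt d s v w)) {γ : ℝ} (hγ : 0 ≤ γ) (hγs : γ < 2 * s)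
    (hvw : Integrable (fun x => v x * (1 + ‖x‖) ^ (-γ))) :
    |∫ p, gagInt d s v w p| ≤
      2 * (bumpConst d s L * R ^ (γ - 2 * s)) * ∫ x, v x * (1 + ‖x‖) ^ (-γ) := by
  have hR0 : 0 < R := by linarith
  have hS := sphereConst_nonneg d
  have hB := bumpConst_nonneg d hs0 hs1 hL
  have hweight : ∀ x : Ed d, (R + ‖x‖) ^ (-(2 * s)) ≤ R ^ (γ - 2 * s) * (1 + ‖x‖) ^ (-γ) := by
    intro x
    have hn := norm_nonneg x
    have e : (R + ‖x‖) ^ (-(2 * s)) = (R + ‖x‖) ^ (γ - 2 * s) * (R + ‖x‖) ^ (-γ) := by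
      rw [← Real.rpow_add (by positivity)]; congr 1; ring
    rw [e]
    exact mul_le_mul (Real.rpow_le_rpow_of_nonpos hR0 (by linarith) (by linarith))
      (Real.rpow_le_rpow_of_nonpos (by positivity) (by linarith) (by linarith)) (by positivity)
      (by positivity)
  have hlim := tendsto_setIntegral_gagInt hI
    (T := fun n => farRegion (1 / ((n : ℝ) + 1))) (fun n => measurableSet_farRegion _) (by
      intro p hp
      have hD : 0 < ‖p.1 - p.2‖ := norm_pos_iff.2 (sub_ne_zero.2 hp)
      exact (tendsto_one_div_add_atTop_nhds_zero_nat (𝕜 := ℝ)).eventually_lt_const hD)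
  refine le_of_tendsto' hlim.abs fun n => ?_
  set ε : ℝ := 1 / ((n : ℝ) + 1) with hε
  have hε0 : 0 < ε := by positivity
  have hJ : ∫⁻ x, ENNReal.ofReal (v x) *
      ∫⁻ y, ENNReal.ofReal |(farRegion ε).indicator (diffQuot d s w) (x, y)| < ⊤ := by
    have hvw' := (hasFiniteIntegral_iff_ofReal (Eventually.of_forall fun x => by
      have := hv0 x; positivity)).1 hvw.2
    set A : ℝ := 2 * (sphereConst d / (2 * s) * min ε (1 / 5) ^ (-(2 * s))) *
      (5 * R) ^ (2 * s) with hA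
    have hm0 : 0 < min ε (1 / 5) := by positivity
    have hA0 : 0 ≤ A := by positivity
    have hinner : ∀ x, ∫⁻ y, ENNReal.ofReal |(farRegion ε).indicator (diffQuot d s w) (x, y)| ≤
        ENNReal.ofReal (A * (1 + ‖x‖) ^ (-γ)) := by
      intro x
      have hn := norm_nonneg x
      have hr : 0 < min ε (1 / 5) * ((1 + ‖x‖) / (5 * R)) := by positivity
      refine (lintegral_le_of_le_tail hd hs0 x hr zero_le_two (fun y => by
        apply abs_indicator_diffQuot_le zero_le_two
        · intro _
          have := abs_sub (w x) (w y)
          linarith [hw1 x, hw1 y]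
        · intro h h0
          rcases le_or_gt (4 * R) ‖x‖ with hx | hx
          · rw [hsupp x (by linarith), zero_sub, neg_ne_zero] at h0
            have : ‖y‖ < 2 * R := by
              by_contra! hcon
              exact h0 (hsupp y hcon)
            have h3 := norm_sub_norm_le x y
            have h4 : min ε (1 / 5) * ((1 + ‖x‖) / (5 * R)) ≤ 1 / 5 * ((1 + ‖x‖) / 5) := by
              gcongr
              · exact min_le_right _ _
              · linarith
            linarith
          · refine lt_of_le_of_lt ?_ h
            have h4 : min ε (1 / 5) * ((1 + ‖x‖) / (5 * R)) ≤ ε * 1 := by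
              gcongr
              · exact min_le_left _ _
              · rw [div_le_one (by positivity)]; linarith
            linarith)).trans (ENNReal.ofReal_le_ofReal ?_)
      rw [Real.mul_rpow hm0.le (by positivity), Real.div_rpow (by positivity) (by positivity),
        Real.rpow_neg (by positivity : 0 ≤ 5 * R), div_inv_eq_mul]
      have : (1 + ‖x‖) ^ (-(2 * s)) ≤ (1 + ‖x‖) ^ (-γ) :=
        Real.rpow_le_rpow_of_exponent_le (by linarith) (by linarith)
      calc _ = A * (1 + ‖x‖) ^ (-(2 * s)) := by rw [hA]; ring
        _ ≤ _ := by gcongr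
    calc _ ≤ ∫⁻ x, ENNReal.ofReal A * ENNReal.ofReal (v x * (1 + ‖x‖) ^ (-γ)) := by
          refine lintegral_mono fun x => ?_
          refine (mul_le_mul_right (hinner x) _).trans (le_of_eq ?_)
          rw [ENNReal.ofReal_mul hA0, ENNReal.ofReal_mul (hv0 x)]
          ring
      _ < ⊤ := by
          rw [lintegral_const_mul' _ _ ENNReal.ofReal_ne_top]
          exact ENNReal.mul_lt_top ENNReal.ofReal_lt_top hvw'
  rw [setIntegral_gagInt_eq hv hv0 hw (measurableSet_farRegion ε)
    (fun p => by simp [farRegion, norm_sub_rev p.2 p.1]) hJ, abs_mul, abs_two, mul_assoc 2]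
  gcongr
  rw [← integral_const_mul]
  refine norm_integral_le_of_norm_le (f := fun x => v x * ∫ y, (farRegion ε).indicator
    (diffQuot d s w) (x, y)) (hvw.const_mul _) (Eventually.of_forall fun x => ?_)
  rw [Real.norm_eq_abs, abs_mul, abs_of_nonneg (hv0 x)]
  calc _ ≤ v x * (bumpConst d s L * (R + ‖x‖) ^ (-(2 * s))) := by
        gcongr
        · exact hv0 x
        · exact abs_integral_diffQuot_bump_le hs0 hs1 hd hw hw1 hL hR0 hsec hsupp hε0 x
    _ ≤ v x * (bumpConst d s L * (R ^ (γ - 2 * s) * (1 + ‖x‖) ^ (-γ))) := by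
        gcongr
        · exact hv0 x
        · exact hweight x
    _ = _ := by ring

/-- The profile `K(σ+q)^{-p} + c₀ e^{-lq}`, to be evaluated at `q = |x-a|²`. -/
def profile (p σ K c₀ l q : ℝ) : ℝ := K * (σ + q) ^ (-p) + c₀ * Real.exp (-(l * q))

lemma exists_one_add_rpow_le_exp {n l : ℝ} (hn : 0 < n) (hl : 0 < l) :
    ∃ M : ℝ, 0 < M ∧ ∀ q, 0 ≤ q → (1 + q) ^ n ≤ M * Real.exp (l * q) := by
  refine ⟨(max 1 (n / l)) ^ n, by positivity, fun q hq => ?_⟩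
  have h1 : 1 + q ≤ max 1 (n / l) * Real.exp (l / n * q) := by
    have h2 := Real.add_one_le_exp (l / n * q)
    have h3 := le_max_left 1 (n / l)
    have h4 := le_max_right 1 (n / l)
    calc 1 + q = 1 + n / l * (l / n * q) := by field_simp
      _ ≤ max 1 (n / l) + max 1 (n / l) * (l / n * q) := by gcongr
      _ = max 1 (n / l) * (l / n * q + 1) := by ring
      _ ≤ _ := by gcongr
  calc (1 + q) ^ n ≤ (max 1 (n / l) * Real.exp (l / n * q)) ^ n :=
        Real.rpow_le_rpow (by positivity) h1 hn.le
    _ = _ := by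
        rw [Real.mul_rpow (by positivity) (by positivity), ← Real.exp_mul]
        congr 2
        field_simp

lemma hasDerivAt_profile {p σ K c₀ l q : ℝ} (hq : 0 < σ + q) :
    HasDerivAt (profile p σ K c₀ l)
      (-(K * p * (σ + q) ^ (-p - 1) + c₀ * l * Real.exp (-(l * q)))) q := by
  have h1 : HasDerivAt (fun q => σ + q) 1 q := (hasDerivAt_id q).const_add σ
  have h2 := (h1.rpow_const (p := -p) (Or.inl hq.ne')).const_mul K
  have h3 : HasDerivAt (fun q => -(l * q)) (-(l * 1)) q := ((hasDerivAt_id q).const_mul l).neg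
  have h4 := h3.exp.const_mul c₀
  exact (h2.add h4).congr_deriv (by ring)

/-- For `K` large, the profile is a concave function of the fundamental solution `q^{-p}`. -/
lemma exists_concaveOn_profile {p σ l : ℝ} (hp : 0 < p) (hσ : 0 < σ) (hl : 0 < l) :
    ∃ K₀ : ℝ, 0 < K₀ ∧ ∀ K c₀, 0 ≤ K → 0 ≤ c₀ → c₀ ≤ 1 → (c₀ = 0 ∨ K₀ ≤ K) →
      ConcaveOn ℝ (Ioi 0) (fun w => profile p σ K c₀ l (w ^ (-p⁻¹))) := by
  obtain ⟨M, hM0, hM⟩ := exists_one_add_rpow_le_exp (n := p + 3) (l := l) (by linarith) hl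
  refine ⟨l ^ 2 * (max 1 σ ^ (p + 2) * M) / (p * (p + 1) * σ), by positivity,
    fun K c₀ hK hc0 hc1 hKc => ?_⟩
  set H : ℝ → ℝ := fun q => K * p * (q / (σ + q)) ^ (p + 1) +
    c₀ * l * (q ^ (p + 1) * Real.exp (-(l * q))) with hH
  have hHd : ∀ q, 0 < q → HasDerivAt H (q ^ p * (K * p * (p + 1) * σ * (σ + q) ^ (-p - 2) +
      c₀ * l * ((p + 1) - l * q) * Real.exp (-(l * q)))) q := by
    intro q hq
    have hσq : 0 < σ + q := by linarith
    have h0 : HasDerivAt (fun q => σ + q) 1 q := (hasDerivAt_id q).const_add σ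
    have h1 : HasDerivAt (fun q => q / (σ + q)) ((1 * (σ + q) - q * 1) / (σ + q) ^ 2) q :=
      (hasDerivAt_id q).div h0 hσq.ne'
    have h2 := (h1.rpow_const (p := p + 1) (Or.inl (by positivity))).const_mul (K * p)
    have h3 : HasDerivAt (fun q => -(l * q)) (-(l * 1)) q := ((hasDerivAt_id q).const_mul l).neg
    have h4 := (((hasDerivAt_id q).rpow_const (p := p + 1) (Or.inl hq.ne')).mul h3.exp).const_mul
      (c₀ * l)
    refine (h2.add h4).congr_deriv ?_
    have e1 : p + 1 - 1 = p := by ring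
    have e2 : q ^ (p + 1) = q ^ p * q := by rw [Real.rpow_add hq, Real.rpow_one]
    have e3 : (σ + q) ^ (-p - 2) = ((σ + q) ^ p)⁻¹ * ((σ + q) ^ 2)⁻¹ := by
      rw [sub_eq_add_neg, Real.rpow_add hσq, Real.rpow_neg hσq.le, Real.rpow_neg hσq.le,
        Real.rpow_two]
    simp only [id]
    rw [e1, Real.div_rpow hq.le hσq.le, e2, e3]
    field_simp
    ring
  have hHm : MonotoneOn H (Ioi 0) := by
    refine monotoneOn_of_deriv_nonneg (convex_Ioi 0)
      (fun q hq => (hHd q hq).continuousAt.continuousWithinAt)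
      (fun q hq => (hHd q (by simpa using hq)).differentiableAt.differentiableWithinAt)
      (fun q hq => ?_)
    have hq : 0 < q := by simpa using hq
    have hσq : 0 < σ + q := by linarith
    rw [(hHd q hq).deriv]
    refine mul_nonneg (by positivity) ?_
    rcases hKc with rfl | hKc
    · simp only [zero_mul, add_zero]; positivity
    have h1 : l ^ 2 * (max 1 σ ^ (p + 2) * M) ≤ K * p * (p + 1) * σ := by
      rw [div_le_iff₀ (by positivity)] at hKc
      linarith
    have h2 : q * (σ + q) ^ (p + 2) ≤ max 1 σ ^ (p + 2) * M * Real.exp (l * q) := by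
      have h3 : σ + q ≤ max 1 σ * (1 + q) := by
        have := le_max_left 1 σ; have := le_max_right 1 σ; nlinarith
      calc q * (σ + q) ^ (p + 2) ≤ (1 + q) * (max 1 σ * (1 + q)) ^ (p + 2) := by
            gcongr; linarith
        _ = max 1 σ ^ (p + 2) * (1 + q) ^ (p + 3) := by
            rw [Real.mul_rpow (by positivity) (by positivity), show p + 3 = 1 + (p + 2) by ring,
              Real.rpow_add (by positivity) 1, Real.rpow_one]; ring
        _ ≤ _ := by rw [mul_assoc]; gcongr; exact hM q hq.le
    have h4 : l ^ 2 * q * Real.exp (-(l * q)) ≤ K * p * (p + 1) * σ * (σ + q) ^ (-p - 2) := by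
      rw [show -p - 2 = -(p + 2) by ring, Real.rpow_neg hσq.le, ← div_eq_mul_inv,
        le_div_iff₀ (by positivity), Real.exp_neg, ← div_eq_mul_inv, div_mul_eq_mul_div,
        div_le_iff₀ (Real.exp_pos _)]
      calc l ^ 2 * q * (σ + q) ^ (p + 2) = l ^ 2 * (q * (σ + q) ^ (p + 2)) := by ring
        _ ≤ l ^ 2 * (max 1 σ ^ (p + 2) * M * Real.exp (l * q)) := by gcongr
        _ = l ^ 2 * (max 1 σ ^ (p + 2) * M) * Real.exp (l * q) := by ring
        _ ≤ _ := by gcongr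
    have h5 : 0 ≤ c₀ * l * (p + 1) * Real.exp (-(l * q)) := by positivity
    have h6 : c₀ * (l ^ 2 * q * Real.exp (-(l * q))) ≤ l ^ 2 * q * Real.exp (-(l * q)) :=
      mul_le_of_le_one_left (by positivity) hc1
    linarith
  have hFd : ∀ w, 0 < w → HasDerivAt (fun w => profile p σ K c₀ l (w ^ (-p⁻¹)))
      (p⁻¹ * H (w ^ (-p⁻¹))) w := by
    intro w hw
    have hq : 0 < w ^ (-p⁻¹) := by positivity
    have h1 : HasDerivAt (fun w => w ^ (-p⁻¹)) (1 * (-p⁻¹) * w ^ (-p⁻¹ - 1)) w :=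
      (hasDerivAt_id w).rpow_const (Or.inl hw.ne')
    have h2 := (hasDerivAt_profile (p := p) (σ := σ) (K := K) (c₀ := c₀) (l := l)
      (q := w ^ (-p⁻¹)) (by linarith)).comp w h1
    refine h2.congr_deriv ?_
    set q := w ^ (-p⁻¹) with hqd
    have hσq : 0 < σ + q := by linarith
    have e1 : w ^ (-p⁻¹ - 1) = q ^ (p + 1) := by
      rw [hqd, ← Real.rpow_mul hw.le]; congr 1; field_simp; ring
    rw [e1, hH]
    simp only
    rw [Real.div_rpow hq.le hσq.le, show -p - 1 = -(p + 1) by ring, Real.rpow_neg hσq.le]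
    field_simp
  refine AntitoneOn.concaveOn_of_deriv (convex_Ioi 0)
    (fun w hw => (hFd w hw).continuousAt.continuousWithinAt)
    (fun w hw => (hFd w (by simpa using hw)).differentiableAt.differentiableWithinAt) ?_
  intro w₁ hw₁ w₂ hw₂ h12
  have hw₁ : 0 < w₁ := by simpa using hw₁
  have hw₂ : 0 < w₂ := by simpa using hw₂
  rw [(hFd w₁ hw₁).deriv, (hFd w₂ hw₂).deriv]
  refine mul_le_mul_of_nonneg_left (hHm ?_ ?_ ?_) (by positivity)
  · exact Real.rpow_pos_of_pos hw₂ _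
  · exact Real.rpow_pos_of_pos hw₁ _
  · exact Real.rpow_le_rpow_of_nonpos hw₁ h12 (by simp [hp.le])

lemma profile_nonneg {p σ K c₀ l q : ℝ} (hσq : 0 ≤ σ + q) (hK : 0 ≤ K) (hc : 0 ≤ c₀) :
    0 ≤ profile p σ K c₀ l q := by
  unfold profile; positivity

/-- Decay of the profile and of its derivative in the radial variable. -/
lemma exists_profile_decay {p σ K c₀ l : ℝ} (hp : 0 < p) (hσ : 0 < σ) (hl : 0 < l) (hK : 0 ≤ K)
    (hc0 : 0 ≤ c₀) : ∃ A : ℝ, 0 < A ∧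
      (∀ r, 0 ≤ r → profile p σ K c₀ l (r ^ 2) ≤ A * (1 + r) ^ (-(2 * p))) ∧
      (∀ r r' t, 0 ≤ r → 0 ≤ r' → 0 < t → t ≤ 1 + r → t ≤ 1 + r' →
        |profile p σ K c₀ l (r ^ 2) - profile p σ K c₀ l (r' ^ 2)| ≤
          A * |r - r'| * t ^ (-(2 * p) - 1)) := by
  have hdec : ∀ n : ℝ, 0 < n → ∃ B : ℝ, 0 < B ∧ ∀ r, 0 ≤ r →
      (σ + r ^ 2) ^ (-n) ≤ B * (1 + r) ^ (-(2 * n)) ∧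
      Real.exp (-(l * r ^ 2)) ≤ B * (1 + r) ^ (-(2 * n)) := by
    intro n hn
    obtain ⟨M, hM0, hM⟩ := exists_one_add_rpow_le_exp hn hl
    set k := min σ 1 with hk
    have hk0 : 0 < k := by positivity
    have hr2 : ∀ r : ℝ, 0 ≤ r → (1 + r ^ 2) ^ (-n) ≤ 2 ^ n * (1 + r) ^ (-(2 * n)) := by
      intro r hr
      have h1 : (1 + r) ^ (-(2 * n)) = ((1 + r) ^ 2) ^ (-n) := by
        rw [← Real.rpow_natCast, ← Real.rpow_mul (by positivity)]; congr 1; push_cast; ring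
      have h2 : ((2 : ℝ) * (1 + r ^ 2)) ^ (-n) ≤ ((1 + r) ^ 2) ^ (-n) :=
        Real.rpow_le_rpow_of_nonpos (by positivity) (by nlinarith [sq_nonneg (1 - r)]) (by linarith)
      rw [Real.mul_rpow (by norm_num) (by positivity), Real.rpow_neg (by norm_num),
        inv_mul_le_iff₀ (by positivity)] at h2
      rwa [h1]
    refine ⟨max (k ^ (-n)) M * 2 ^ n, by positivity, fun r hr => ⟨?_, ?_⟩⟩
    · have h1 : k * (1 + r ^ 2) ≤ σ + r ^ 2 := by
        have := min_le_left σ 1; have := min_le_right σ 1; nlinarith [sq_nonneg r]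
      calc (σ + r ^ 2) ^ (-n) ≤ (k * (1 + r ^ 2)) ^ (-n) :=
            Real.rpow_le_rpow_of_nonpos (by positivity) h1 (by linarith)
        _ = k ^ (-n) * (1 + r ^ 2) ^ (-n) := Real.mul_rpow hk0.le (by positivity)
        _ ≤ max (k ^ (-n)) M * (2 ^ n * (1 + r) ^ (-(2 * n))) := by
            gcongr
            · exact le_max_left _ _
            · exact hr2 r hr
        _ = _ := by ring
    · have h1 := hM (r ^ 2) (sq_nonneg r)
      calc Real.exp (-(l * r ^ 2)) ≤ M * (1 + r ^ 2) ^ (-n) := by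
            rw [Real.exp_neg, Real.rpow_neg (by positivity), ← div_eq_mul_inv, inv_eq_one_div,
              div_le_div_iff₀ (Real.exp_pos _) (by positivity)]
            linarith
        _ ≤ max (k ^ (-n)) M * (2 ^ n * (1 + r) ^ (-(2 * n))) := by
            gcongr
            · exact le_max_right _ _
            · exact hr2 r hr
        _ = _ := by ring
  obtain ⟨B₁, hB₁, hB₁'⟩ := hdec p hp
  obtain ⟨B₂, hB₂, hB₂'⟩ := hdec (p + 1) (by linarith)
  refine ⟨(K * B₁ + c₀ * B₁) + 2 * (K * p * B₂ + c₀ * l * B₂) + 1, by positivity, ?_, ?_⟩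
  · intro r hr
    obtain ⟨h1, h2⟩ := hB₁' r hr
    have h3 : 0 < (1 + r) ^ (-(2 * p)) := by positivity
    calc profile p σ K c₀ l (r ^ 2)
        ≤ K * (B₁ * (1 + r) ^ (-(2 * p))) + c₀ * (B₁ * (1 + r) ^ (-(2 * p))) := by
          unfold profile; gcongr
      _ = (K * B₁ + c₀ * B₁) * (1 + r) ^ (-(2 * p)) := by ring
      _ ≤ _ := by
          have : 0 ≤ 2 * (K * p * B₂ + c₀ * l * B₂) := by positivity
          exact mul_le_mul_of_nonneg_right (by linarith) h3.le
  · intro r r' t hr hr' ht htr htr'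
    have hconv : Convex ℝ (Ici (max 0 (t - 1))) := convex_Ici _
    have hder : ∀ z ∈ Ici (max 0 (t - 1)), HasDerivWithinAt (fun r => profile p σ K c₀ l (r ^ 2))
        (-(K * p * (σ + z ^ 2) ^ (-p - 1) + c₀ * l * Real.exp (-(l * z ^ 2))) * (2 * z))
        (Ici (max 0 (t - 1))) z := by
      intro z _
      have h1 : HasDerivAt (fun r : ℝ => r ^ 2) (2 * z) z := by simpa using hasDerivAt_pow 2 z
      exact ((hasDerivAt_profile (by positivity)).comp z h1).hasDerivWithinAt
    have hb : ∀ z ∈ Ici (max 0 (t - 1)),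
        ‖-(K * p * (σ + z ^ 2) ^ (-p - 1) + c₀ * l * Real.exp (-(l * z ^ 2))) * (2 * z)‖ ≤
          2 * (K * p * B₂ + c₀ * l * B₂) * t ^ (-(2 * p) - 1) := by
      intro z hz
      obtain ⟨hz0, hzt⟩ := max_le_iff.1 (mem_Ici.1 hz)
      obtain ⟨h1, h2⟩ := hB₂' z hz0
      rw [show -(p + 1) = -p - 1 by ring] at h1
      rw [norm_mul, norm_neg, Real.norm_eq_abs, Real.norm_eq_abs, abs_of_nonneg (by positivity),
        abs_of_nonneg (by positivity)]
      have h3 : (1 + z) ^ (-(2 * (p + 1))) * (1 + z) ≤ t ^ (-(2 * p) - 1) := by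
        have : (1 + z) ^ (-(2 * (p + 1))) * (1 + z) = (1 + z) ^ (-(2 * p) - 1) := by
          rw [← Real.rpow_add_one (by positivity)]; congr 1; ring
        rw [this]
        exact Real.rpow_le_rpow_of_nonpos ht (by linarith) (by linarith)
      calc _ ≤ (K * p * (B₂ * (1 + z) ^ (-(2 * (p + 1)))) +
              c₀ * l * (B₂ * (1 + z) ^ (-(2 * (p + 1))))) * (2 * (1 + z)) := by
            gcongr
            linarith
        _ = 2 * (K * p * B₂ + c₀ * l * B₂) * ((1 + z) ^ (-(2 * (p + 1))) * (1 + z)) := by ring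
        _ ≤ _ := by gcongr
    have h := hconv.norm_image_sub_le_of_norm_hasDerivWithin_le hder hb
      (x := r') (y := r) (by simp [hr']; linarith) (by simp [hr]; linarith)
    rw [Real.norm_eq_abs, Real.norm_eq_abs] at h
    refine h.trans ?_
    have h3 : 0 < t ^ (-(2 * p) - 1) := by positivity
    have h4 : 0 ≤ K * B₁ + c₀ * B₁ := by positivity
    calc _ = 2 * (K * p * B₂ + c₀ * l * B₂) * |r - r'| * t ^ (-(2 * p) - 1) := by ring
      _ ≤ _ := by gcongr; linarith

/-- A smooth contraction of the half-line vanishing near the origin, at bounded distance of the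
identity. -/
lemma exists_smooth_truncation : ∃ G : ℝ → ℝ, ContDiff ℝ (⊤ : ℕ∞) G ∧ (∀ r r', |G r - G r'| ≤ |r - r'|) ∧
    (∀ r, r ≤ 1 → G r = 0) ∧ (∀ r, 0 ≤ r → 0 ≤ G r ∧ |G r - r| ≤ 2) := by
  set f : ℝ → ℝ := fun τ => Real.smoothTransition (τ - 1) with hf
  have hfs : ContDiff ℝ (⊤ : ℕ∞) f := Real.smoothTransition.contDiff.comp (contDiff_id.sub contDiff_const)
  set G : ℝ → ℝ := fun t => ∫ τ in (0 : ℝ)..t, f τ with hG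
  have hd : ∀ t, HasDerivAt G (f t) t := hasDerivAt_primitive hfs.continuous
  have hf0 : ∀ t, 0 ≤ f t := fun t => Real.smoothTransition.nonneg _
  have hf1 : ∀ t, f t ≤ 1 := fun t => Real.smoothTransition.le_one _
  have hlip : ∀ r r', |G r - G r'| ≤ |r - r'| := fun r r' => by
    simpa using convex_univ.norm_image_sub_le_of_norm_hasDerivWithin_le (C := 1)
      (fun x _ => (hd x).hasDerivWithinAt) (fun x _ => by
        rw [Real.norm_eq_abs, abs_of_nonneg (hf0 x)]; exact hf1 x) (mem_univ r') (mem_univ r)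
  have hG0 : G 0 = 0 := by simp [hG]
  have hz : ∀ r, r ≤ 1 → G r = 0 := fun r hr => by
    have h := (convex_Iic (1 : ℝ)).norm_image_sub_le_of_norm_hasDerivWithin_le (C := 0)
      (fun x _ => (hd x).hasDerivWithinAt) (fun x hx => by
        rw [hf]; simp only
        rw [Real.smoothTransition.zero_of_nonpos (by linarith [mem_Iic.1 hx]), norm_zero])
      (show (0 : ℝ) ∈ Iic 1 by simp) (show r ∈ Iic 1 from hr)
    simpa [hG0] using h
  have hmono : Monotone G := monotone_of_deriv_nonneg (fun x => (hd x).differentiableAt)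
    (fun x => by rw [(hd x).deriv]; exact hf0 x)
  refine ⟨G, contDiff_primitive hfs, hlip, hz, fun r hr => ?_⟩
  have hGr : 0 ≤ G r := hG0 ▸ hmono hr
  have hGr' : G r ≤ r := by
    have := hlip r 0
    rw [hG0, sub_zero, sub_zero, abs_of_nonneg hGr, abs_of_nonneg hr] at this
    exact this
  refine ⟨hGr, ?_⟩
  rw [abs_le]
  refine ⟨?_, by linarith⟩
  rcases le_total r 2 with h2 | h2
  · linarith
  have h := (convex_Ici (2 : ℝ)).norm_image_sub_le_of_norm_hasDerivWithin_le (C := 0)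
    (f := fun x => G x - x) (f' := fun x => f x - 1)
    (fun x _ => ((hd x).sub (hasDerivAt_id x)).hasDerivWithinAt) (fun x hx => by
      rw [hf]; simp only
      rw [Real.smoothTransition.one_of_one_le (by linarith [mem_Ici.1 hx]), sub_self, norm_zero])
    (show (2 : ℝ) ∈ Ici 2 by simp) (show r ∈ Ici 2 from h2)
  rw [zero_mul, norm_le_zero_iff, sub_eq_zero] at h
  have := hG0 ▸ hmono (show (0 : ℝ) ≤ 2 by norm_num)
  linarith

/-- Smooth nonnegative bounded functions of finite energy vanishing at infinity. -/
structure IsDecayingTest (d : ℕ) (s : ℝ) (χ : Ed d → ℝ) : Prop where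
  smooth : ContDiff ℝ (⊤ : ℕ∞) χ
  nonneg : ∀ x, 0 ≤ χ x
  bounded : ∃ A, ∀ x, χ x ≤ A
  energy : Integrable (gagInt d s χ χ)
  decay : ∀ δ, 0 < δ → ∃ r, ∀ x, δ ≤ χ x → ‖x‖ ≤ r

lemma IsDecayingTest.exists_approx {d : ℕ} {s : ℝ} {χ : Ed d → ℝ} (h : IsDecayingTest d s χ) :
    ∃ ψ : ℕ → Ed d → ℝ, (∀ n, ContDiff ℝ (⊤ : ℕ∞) (ψ n)) ∧ (∀ n, HasCompactSupport (ψ n)) ∧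
      (∀ n x y, |ψ n x - ψ n y| ≤ |χ x - χ y|) ∧ (∀ n x, |ψ n x| ≤ χ x) ∧
      ∀ x, Tendsto (fun n => ψ n x) atTop (𝓝 (χ x)) := by
  obtain ⟨G, hGs, hGl, hG0, hG⟩ := exists_smooth_truncation
  have hlip : ∀ {δ : ℝ}, 0 < δ → ∀ a b, |δ * G (a / δ) - δ * G (b / δ)| ≤ |a - b| := by
    intro δ hδ a b
    rw [← mul_sub, abs_mul, abs_of_pos hδ]
    calc δ * |G (a / δ) - G (b / δ)| ≤ δ * |a / δ - b / δ| :=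
        mul_le_mul_of_nonneg_left (hGl _ _) hδ.le
      _ = |a - b| := by
        rw [← sub_div, abs_div, abs_of_pos hδ]; field_simp
  have hδ : ∀ n : ℕ, (0 : ℝ) < 1 / ((n : ℝ) + 1) := fun n => by positivity
  refine ⟨fun n x => 1 / ((n : ℝ) + 1) * G (χ x / (1 / ((n : ℝ) + 1))), fun n => ?_, fun n => ?_,
    fun n x y => hlip (hδ n) _ _, fun n x => ?_, fun x => ?_⟩
  · exact contDiff_const.mul (hGs.comp (h.smooth.div_const _))
  · obtain ⟨r, hr⟩ := h.decay _ (hδ n)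
    refine HasCompactSupport.intro (isCompact_closedBall (0 : Ed d) r) fun x hx => ?_
    change 1 / ((n : ℝ) + 1) * G (χ x / (1 / ((n : ℝ) + 1))) = 0
    rw [hG0, mul_zero]
    rw [div_le_one (hδ n)]
    by_contra! hcon
    exact hx (by simpa using hr x hcon.le)
  · have := hlip (hδ n) (χ x) 0
    rwa [zero_div, hG0 0 zero_le_one, mul_zero, sub_zero, sub_zero, abs_of_nonneg (h.nonneg x)] at this
  · rw [tendsto_iff_norm_sub_tendsto_zero]
    refine squeeze_zero (g := fun n : ℕ => 1 / ((n : ℝ) + 1) * 2) (fun n => norm_nonneg _) (fun n => ?_)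
      (by simpa using (tendsto_one_div_add_atTop_nhds_zero_nat (𝕜 := ℝ)).mul_const 2)
    have h1 := (hG (χ x / (1 / ((n : ℝ) + 1))) (div_nonneg (h.nonneg x) (hδ n).le)).2
    have h2 : 1 / ((n : ℝ) + 1) * G (χ x / (1 / ((n : ℝ) + 1))) - χ x =
        1 / ((n : ℝ) + 1) * (G (χ x / (1 / ((n : ℝ) + 1))) - χ x / (1 / ((n : ℝ) + 1))) := by
      have := (hδ n).ne'
      field_simp
    rw [h2, norm_mul, Real.norm_of_nonneg (hδ n).le]
    gcongr
    exact h1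

/-- The radial test functions centred at `a`. -/
def radTest (d : ℕ) (s σ K c₀ l : ℝ) (a x : Ed d) : ℝ :=
  profile (((d : ℝ) - 2 * s) / 2) σ K c₀ l (‖x - a‖ ^ 2)

lemma contDiff_radTest {d : ℕ} {s σ K c₀ l : ℝ} (hσ : 0 < σ) (a : Ed d) :
    ContDiff ℝ (⊤ : ℕ∞) (radTest d s σ K c₀ l a) := by
  have h : ContDiff ℝ (⊤ : ℕ∞) (fun x : Ed d => ‖x - a‖ ^ 2) :=
    (contDiff_id.sub contDiff_const).norm_sq ℝ
  unfold radTest profile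
  refine (contDiff_const.mul ?_).add (contDiff_const.mul (contDiff_const.mul h).neg.exp)
  exact (contDiff_const.add h).rpow_const_of_ne fun x => by positivity

lemma isDecayingTest_radTest {d : ℕ} {s σ K c₀ l : ℝ} (hs0 : 0 < s) (hs1 : s < 1) (hd : 2 * s < d)
    (hσ : 0 < σ) (hK : 0 ≤ K) (hc0 : 0 ≤ c₀) (hl : 0 < l) (a : Ed d) :
    IsDecayingTest d s (radTest d s σ K c₀ l a) := by
  set b := (d : ℝ) - 2 * s with hb
  have hb0 : 0 < b := by linarith
  obtain ⟨A, hA0, hA1, hA2⟩ := exists_profile_decay (p := b / 2) (by linarith) hσ hl hK hc0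
  rw [show 2 * (b / 2) = b by ring] at hA1 hA2
  have hnn : ∀ x, 0 ≤ radTest d s σ K c₀ l a x := fun x => profile_nonneg (by positivity) hK hc0
  have hdec : ∀ x, radTest d s σ K c₀ l a x ≤ A * (1 + ‖x - a‖) ^ (-b) :=
    fun x => hA1 _ (norm_nonneg _)
  have hsm := contDiff_radTest (d := d) (s := s) (K := K) (c₀ := c₀) (l := l) hσ a
  refine ⟨hsm, hnn, ⟨A, fun x => (hdec x).trans ?_⟩, ?_, ?_⟩
  · refine mul_le_of_le_one_right hA0.le (Real.rpow_le_one_of_one_le_of_nonpos ?_ (by linarith))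
    linarith [norm_nonneg (x - a)]
  · refine integrable_gagInt_self_of_decay hs0 hs1 hd hsm.continuous.measurable a
      (K := A * 2 ^ (b + 1)) ?_ ?_
    · intro x
      rw [abs_of_nonneg (hnn x)]
      refine (hdec x).trans ?_
      gcongr
      refine le_mul_of_one_le_right hA0.le (Real.one_le_rpow (by norm_num) (by linarith))
    · intro x y hxy
      have hx := norm_nonneg (x - a)
      have h1 : |‖x - a‖ - ‖y - a‖| ≤ ‖x - y‖ := by
        have := abs_norm_sub_norm_le (x - a) (y - a)
        rwa [sub_sub_sub_cancel_right] at this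
      have h2 := (abs_le.1 h1).2
      refine (hA2 ‖x - a‖ ‖y - a‖ ((1 + ‖x - a‖) / 2) hx (norm_nonneg _) (by positivity)
        (by linarith) (by linarith)).trans ?_
      rw [Real.div_rpow (by positivity) (by norm_num), div_eq_mul_inv, ← Real.rpow_neg (by norm_num),
        show -(-b - 1) = b + 1 by ring]
      calc _ ≤ A * ‖x - y‖ * ((1 + ‖x - a‖) ^ (-b - 1) * 2 ^ (b + 1)) := by gcongr
        _ = _ := by ring
  · intro δ hδ
    have ht : Tendsto (fun r : ℝ => A * (1 + r) ^ (-b)) atTop (𝓝 (A * 0)) :=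
      ((tendsto_rpow_neg_atTop hb0).comp (tendsto_atTop_add_const_left _ 1 tendsto_id)).const_mul A
    rw [mul_zero] at ht
    obtain ⟨r, hr⟩ := (eventually_atTop.1 (ht.eventually_lt_const hδ))
    refine ⟨r + ‖a‖, fun x hx => ?_⟩
    have h1 : ‖x - a‖ ≤ r := by
      by_contra! hcon
      linarith [hr _ hcon.le, hdec x]
    have := norm_sub_norm_le x a
    linarith

/-- Admissible parameters: the radial test function is a supersolution. -/
lemma integral_gagInt_radTest_nonneg {d : ℕ} {s σ K c₀ l : ℝ} (hs0 : 0 < s) (hs1 : s < 1)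
    (hd : 2 * s < d) (hσ : 0 < σ) (hK : 0 ≤ K) (hc0 : 0 ≤ c₀) (hl : 0 < l)
    (hconc : ConcaveOn ℝ (Ioi 0) (fun w => profile (((d : ℝ) - 2 * s) / 2) σ K c₀ l
      (w ^ (-(((d : ℝ) - 2 * s) / 2)⁻¹)))) (a : Ed d) {v : Ed d → ℝ}
    (hv : Measurable v) (hv0 : ∀ x, 0 ≤ v x) (hvI : Integrable (gagInt d s v v))
    (hvw : ∫⁻ x, ENNReal.ofReal (v x) * ENNReal.ofReal (‖x - a‖ ^ (-(2 * s))) < ⊤) :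
    0 ≤ ∫ p, gagInt d s v (radTest d s σ K c₀ l a) p := by
  have h := isDecayingTest_radTest hs0 hs1 hd hσ hK hc0 hl a
  obtain ⟨A, hA⟩ := h.bounded
  refine integral_gagInt_nonneg hs0 hd hconc (a := a) ?_ hv hv0 h.smooth.continuous.measurable
    (K := A) (fun x => by rw [abs_of_nonneg (h.nonneg x)]; exact hA x) hvI h.energy hvw
  intro z hz
  have hz0 : 0 < ‖z - a‖ := norm_pos_iff.2 (sub_ne_zero.2 hz)
  have hb0 : 0 < (d : ℝ) - 2 * s := by linarith
  simp only [radTest]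
  congr 1
  rw [← Real.rpow_mul hz0.le, ← Real.rpow_two]
  congr 1
  field_simp

lemma integrable_gagInt_self_of_hasCompactSupport {d : ℕ} {s : ℝ} (hs0 : 0 < s) (hs1 : s < 1)
    (hd : 2 * s < d) {w : Ed d → ℝ} (hw : ContDiff ℝ (⊤ : ℕ∞) w) (hc : HasCompactSupport w) :
    Integrable (gagInt d s w w) := by
  obtain ⟨Λ, hΛ⟩ := ContDiff.lipschitzWith_of_hasCompactSupport hc hw (by simp)
  obtain ⟨A, hA⟩ := hw.continuous.bounded_above_of_compact_support hc
  obtain ⟨r, hr0, hr⟩ := hc.isCompact.isBounded.subset_ball_lt 0 (0 : Ed d)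
  have hz : ∀ x, r ≤ ‖x‖ → w x = 0 := fun x hx => by
    by_contra hne
    have := hr (subset_tsupport w hne)
    rw [mem_ball_zero_iff] at this
    linarith
  have hA0 : 0 ≤ A := (norm_nonneg _).trans (hA 0)
  set b := (d : ℝ) - 2 * s with hb
  have hb0 : 0 < b := by linarith
  set K := A * (1 + r) ^ b + Λ * (2 * r + 2) ^ (b + 1) with hK
  have hK1 : A * (1 + r) ^ b ≤ K := le_add_of_nonneg_right (by positivity)
  have hK2 : Λ * (2 * r + 2) ^ (b + 1) ≤ K := le_add_of_nonneg_left (by positivity)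
  have hK0 : 0 ≤ K := by positivity
  refine integrable_gagInt_self_of_decay hs0 hs1 hd hw.continuous.measurable 0 (K := K)
    (fun x => ?_) (fun x y hxy => ?_)
  · rw [sub_zero]
    have hx0 := norm_nonneg x
    rcases le_or_gt r ‖x‖ with hx | hx
    · rw [hz x hx, abs_zero]; positivity
    · rw [Real.rpow_neg (by positivity), ← div_eq_mul_inv, le_div_iff₀ (by positivity)]
      refine le_trans ?_ hK1
      exact mul_le_mul (hA x) (Real.rpow_le_rpow (by positivity) (by linarith) hb0.le)
        (by positivity) hA0
  · rw [sub_zero] at hxy ⊢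
    have hx0 := norm_nonneg x
    rcases le_or_gt ‖x‖ (2 * r + 1) with hx | hx
    · rw [show -b - 1 = -(b + 1) by ring, Real.rpow_neg (by positivity), ← div_eq_mul_inv,
        le_div_iff₀ (by positivity)]
      have h1 : |w x - w y| ≤ Λ * ‖x - y‖ := by
        simpa [Real.dist_eq, dist_eq_norm] using hΛ.dist_le_mul x y
      calc |w x - w y| * (1 + ‖x‖) ^ (b + 1)
          ≤ (Λ * ‖x - y‖) * (2 * r + 2) ^ (b + 1) :=
            mul_le_mul h1 (Real.rpow_le_rpow (by positivity) (by linarith) (by linarith))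
              (by positivity) (by positivity)
        _ = Λ * (2 * r + 2) ^ (b + 1) * ‖x - y‖ := by ring
        _ ≤ K * ‖x - y‖ := mul_le_mul_of_nonneg_right hK2 (norm_nonneg _)
    · have h1 := norm_sub_norm_le x y
      rw [hz x (by linarith), hz y (by linarith), sub_zero, abs_zero]
      positivity

lemma exists_second_difference_le {d : ℕ} {w : Ed d → ℝ} (hw : ContDiff ℝ (⊤ : ℕ∞) w)
    (hc : HasCompactSupport w) :
    ∃ L : ℝ, 0 ≤ L ∧ ∀ x h, |2 * w x - w (x + h) - w (x - h)| ≤ L * ‖h‖ ^ 2 := by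
  have hw1 : ContDiff ℝ 1 (fderiv ℝ w) := hw.fderiv_right (m := 1) (WithTop.coe_le_coe.2 le_top)
  obtain ⟨L, hL⟩ := ContDiff.lipschitzWith_of_hasCompactSupport (hc.fderiv ℝ) hw1 (by simp)
  refine ⟨L, L.2, fun x h => ?_⟩
  have hdiff : Differentiable ℝ w := hw.differentiable (by simp)
  have hF : ∀ y, HasFDerivAt (fun y => w (y + h) - w y) (fderiv ℝ w (y + h) - fderiv ℝ w y) y :=
    fun y => ((hasFDerivAt_comp_add_right h).2 (hdiff _).hasFDerivAt).sub (hdiff y).hasFDerivAt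
  have hbd : ∀ y, ‖fderiv ℝ w (y + h) - fderiv ℝ w y‖ ≤ L * ‖h‖ := fun y => by
    simpa [dist_eq_norm] using hL.dist_le_mul (y + h) y
  have := convex_univ.norm_image_sub_le_of_norm_hasFDerivWithin_le
    (fun y _ => (hF y).hasFDerivWithinAt) (fun y _ => hbd y) (mem_univ x) (mem_univ (x - h))
  rw [Real.norm_eq_abs, sub_add_cancel, sub_sub_cancel_left, norm_neg] at this
  rw [show 2 * w x - w (x + h) - w (x - h) = w x - w (x - h) - (w (x + h) - w x) by ring]
  linarith [sq ‖h‖]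

/-- Smooth cut-off functions at scale `n + 1`. -/
lemma exists_cutoff_family (d : ℕ) :
    ∃ (L : ℝ) (ξ : ℕ → Ed d → ℝ), 0 ≤ L ∧ (∀ n, ContDiff ℝ (⊤ : ℕ∞) (ξ n)) ∧
      (∀ n, HasCompactSupport (ξ n)) ∧ (∀ n x, |ξ n x| ≤ 1) ∧
      (∀ (n : ℕ) x h, |2 * ξ n x - ξ n (x + h) - ξ n (x - h)| ≤ L * ‖h‖ ^ 2 / ((n : ℝ) + 1) ^ 2) ∧
      (∀ (n : ℕ) x, 2 * ((n : ℝ) + 1) ≤ ‖x‖ → ξ n x = 0) ∧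
      ∀ x, Tendsto (fun n => ξ n x) atTop (𝓝 1) := by
  let f : ContDiffBump (0 : Ed d) := ⟨1, 2, one_pos, one_lt_two⟩
  obtain ⟨L, hL0, hL⟩ := exists_second_difference_le (f.contDiff (n := (⊤ : ℕ∞))) f.hasCompactSupport
  have hz : ∀ (n : ℕ) (x : Ed d), 2 * ((n : ℝ) + 1) ≤ ‖x‖ → f (((n : ℝ) + 1)⁻¹ • x) = 0 := by
    intro n x hx
    refine f.zero_of_le_dist ?_
    rw [dist_zero_right, norm_smul, norm_inv, Real.norm_of_nonneg (by positivity),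
      ← div_eq_inv_mul, le_div_iff₀ (by positivity)]
    exact hx
  refine ⟨L, fun n x => f (((n : ℝ) + 1)⁻¹ • x), hL0, fun n => ?_, fun n => ?_, fun n x => ?_,
    fun n x h => ?_, hz, fun x => ?_⟩
  · exact f.contDiff.comp (contDiff_const_smul _)
  · refine HasCompactSupport.intro (isCompact_closedBall (0 : Ed d) (2 * ((n : ℝ) + 1)))
      fun x hx => hz n x ?_
    rw [mem_closedBall_zero_iff, not_le] at hx
    exact hx.le
  · rw [abs_of_nonneg f.nonneg]
    exact f.le_one
  · have := hL (((n : ℝ) + 1)⁻¹ • x) (((n : ℝ) + 1)⁻¹ • h)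
    rw [← smul_add, ← smul_sub, norm_smul, norm_inv, Real.norm_of_nonneg (by positivity)] at this
    refine this.trans (le_of_eq ?_)
    field_simp
  · refine tendsto_const_nhds.congr' ?_
    filter_upwards [eventually_ge_atTop ⌈‖x‖⌉₊] with n hn
    refine (f.one_of_mem_closedBall ?_).symm
    rw [mem_closedBall_zero_iff, norm_smul, norm_inv, Real.norm_of_nonneg (by positivity),
      ← div_eq_inv_mul, div_le_one (by positivity)]
    have := (Nat.le_ceil ‖x‖).trans (Nat.cast_le.2 hn)
    linarith

lemma AdmissibleWeight.ae_one_add_norm_rpow_le {d : ℕ} (hd : 0 < d) {ρ : Ed d → ℝ} {γ₀ γ c C : ℝ}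
    (hρ : AdmissibleWeight d ρ γ₀ γ c C) (hγ₀ : 0 ≤ γ₀) (hγ : 0 ≤ γ) :
    ∀ᵐ x : Ed d, (1 + ‖x‖) ^ (-γ) ≤ ρ x / c := by
  obtain ⟨hc, -, -, -, h1, h2⟩ := hρ
  have := nontrivial_Ed hd
  have h0 : ∀ᵐ x : Ed d, x ≠ 0 := by simp [ae_iff]
  filter_upwards [h0, h1, h2] with x hx h1 h2
  have hx0 : 0 < ‖x‖ := norm_pos_iff.2 hx
  rw [le_div_iff₀ hc, mul_comm]
  rcases le_or_gt ‖x‖ 1 with hx1 | hx1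
  · refine le_trans ?_ (h1 hx1).1
    refine mul_le_mul_of_nonneg_left ?_ hc.le
    exact (Real.rpow_le_one_of_one_le_of_nonpos (by linarith) (by linarith)).trans
      (Real.one_le_rpow_of_pos_of_le_one_of_nonpos hx0 hx1 (by linarith))
  · refine le_trans ?_ (h2 hx1).1
    refine mul_le_mul_of_nonneg_left ?_ hc.le
    exact Real.rpow_le_rpow_of_nonpos hx0 (by linarith) (by linarith)

lemma WeakSolCore.exists_ae_le {d : ℕ} {s m κ : ℝ} {ρ : Ed d → ℝ} {u : Ed d → ℝ → ℝ}
    (hu : WeakSolCore d s m κ ρ u) {τ : ℝ} (hτ : 0 < τ) :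
    ∃ B : ℝ, 0 ≤ B ∧ ∀ᵐ t : ℝ, τ < t → ∀ᵐ x : Ed d, u x t ≤ B := by
  obtain ⟨B, hB⟩ := hu.essBdd τ hτ
  refine ⟨max B 0, le_max_right _ _, ?_⟩
  rw [Measure.volume_eq_prod] at hB
  have h2 := Measure.ae_ae_of_ae_prod ((Measure.measurePreserving_swap
    (μ := (volume : Measure ℝ)) (ν := (volume : Measure (Ed d)))).quasiMeasurePreserving.ae hB)
  filter_upwards [h2] with t ht hτt
  filter_upwards [ht] with x hx
  exact (hx hτt).trans (le_max_left _ _)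

/-- A good time for `u`: the weighted mass is finite, the Gagliardo form of `u^m`
converges, and `u` is bounded. -/
def GoodTime (d : ℕ) (s m : ℝ) (ρ : Ed d → ℝ) (u : Ed d → ℝ → ℝ) (M t : ℝ) : Prop :=
  Integrable (fun x => u x t * ρ x) ∧ ∫ x, u x t * ρ x ≤ M ∧
    Integrable (gagInt d s (fun x => u x t ^ m) (fun x => u x t ^ m)) ∧
    ∃ B : ℝ, 0 ≤ B ∧ ∀ᵐ x : Ed d, u x t ≤ B

lemma WeakSolCore.measurable_slice {d : ℕ} {s m κ : ℝ} {ρ : Ed d → ℝ} {u : Ed d → ℝ → ℝ}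
    (hu : WeakSolCore d s m κ ρ u) (t : ℝ) : Measurable (fun x => u x t) :=
  hu.measurable.comp (measurable_id.prodMk measurable_const)

lemma WeakSolCore.measurable_slice_rpow {d : ℕ} {s m κ : ℝ} {ρ : Ed d → ℝ} {u : Ed d → ℝ → ℝ}
    (hu : WeakSolCore d s m κ ρ u) (t : ℝ) : Measurable (fun x => u x t ^ m) :=
  (hu.measurable_slice t).pow_const m

lemma WeakSolCore.exists_goodTime {d : ℕ} {s m κ : ℝ} {ρ : Ed d → ℝ} {u : Ed d → ℝ → ℝ}
    (hκ : 0 < κ) (hu : WeakSolCore d s m κ ρ u) :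
    ∃ M : ℝ, 0 ≤ M ∧ ∀ᵐ t ∂(volume.restrict (Ioi (0 : ℝ))), GoodTime d s m ρ u M t := by
  obtain ⟨M, hM⟩ := hu.massBound
  refine ⟨max M 0, le_max_right _ _, ?_⟩
  have hB : ∀ᵐ t ∂(volume.restrict (Ioi (0 : ℝ))), ∃ B : ℝ, 0 ≤ B ∧ ∀ᵐ x : Ed d, u x t ≤ B := by
    choose B hB0 hB using fun n : ℕ => hu.exists_ae_le (τ := 1 / ((n : ℝ) + 1)) (by positivity)
    rw [ae_restrict_iff' measurableSet_Ioi]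
    filter_upwards [ae_all_iff.2 hB] with t ht ht0
    obtain ⟨n, hn⟩ := exists_nat_one_div_lt (show (0 : ℝ) < t from ht0)
    exact ⟨B n, hB0 n, ht n hn⟩
  filter_upwards [hM, hu.energyFinite, hB] with t h1 h2 h3
  exact ⟨h1.1, h1.2.trans (le_max_left _ _),
    integrable_gagInt_self hκ (hu.measurable_slice_rpow t) h2, h3⟩

lemma rpow_le_mul_of_le {u B m : ℝ} (hu : 0 ≤ u) (huB : u ≤ B) (hm : 1 < m) :
    u ^ m ≤ B ^ (m - 1) * u := by
  have h := Real.rpow_le_rpow hu huB (by linarith : 0 ≤ m - 1)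
  calc u ^ m = u ^ (m - 1) * u := by
        rw [← Real.rpow_add_one' hu (by linarith), sub_add_cancel]
    _ ≤ _ := mul_le_mul_of_nonneg_right h hu

/-- Bounds for the integral of `u^m` against the weight `(1 + |x|)^{-γ}`. -/
lemma integral_rpow_mul_weight_le {d : ℕ} {m γ c M B : ℝ} {ρ : Ed d → ℝ} {u : Ed d → ℝ}
    (hm : 1 < m) (hc : 0 < c) (hw : ∀ᵐ x : Ed d, (1 + ‖x‖) ^ (-γ) ≤ ρ x / c) (hum : Measurable u)
    (hu0 : ∀ x, 0 ≤ u x) (hB0 : 0 ≤ B) (hB : ∀ᵐ x, u x ≤ B) (hI : Integrable (fun x => u x * ρ x))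
    (hM : ∫ x, u x * ρ x ≤ M) :
    Integrable (fun x => u x ^ m * (1 + ‖x‖) ^ (-γ)) ∧
      ∫ x, u x ^ m * (1 + ‖x‖) ^ (-γ) ≤ B ^ (m - 1) / c * M := by
  have hle : ∀ᵐ x : Ed d, u x ^ m * (1 + ‖x‖) ^ (-γ) ≤ B ^ (m - 1) / c * (u x * ρ x) := by
    filter_upwards [hw, hB] with x h1 h2
    calc u x ^ m * (1 + ‖x‖) ^ (-γ) ≤ (B ^ (m - 1) * u x) * (ρ x / c) :=
          mul_le_mul (rpow_le_mul_of_le (hu0 x) h2 hm) h1 (by positivity)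
            (mul_nonneg (by positivity) (hu0 x))
      _ = _ := by ring
  have h0 : ∀ x, 0 ≤ u x ^ m * (1 + ‖x‖) ^ (-γ) := fun x =>
    mul_nonneg (Real.rpow_nonneg (hu0 x) _) (by positivity)
  have hint : Integrable (fun x => u x ^ m * (1 + ‖x‖) ^ (-γ)) := by
    refine (hI.const_mul (B ^ (m - 1) / c)).mono' (by fun_prop) ?_
    filter_upwards [hle] with x hx
    rwa [Real.norm_of_nonneg (h0 x)]
  refine ⟨hint, (integral_mono_ae hint (hI.const_mul _) hle).trans ?_⟩
  rw [integral_const_mul]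
  exact mul_le_mul_of_nonneg_left hM (by positivity)

/-- Finiteness of the Riesz-type integral of a bounded function with finite weighted mass. -/
lemma lintegral_mul_norm_sub_rpow_lt_top {d : ℕ} {s γ A : ℝ} (hs0 : 0 < s) (hd : 2 * s < d)
    (hγ0 : 0 ≤ γ) (hγs : γ < 2 * s) {v : Ed d → ℝ} (hv : Measurable v) (hv0 : ∀ x, 0 ≤ v x)
    (hvA : ∀ᵐ x, v x ≤ A) (hI : Integrable (fun x => v x * (1 + ‖x‖) ^ (-γ))) (a : Ed d) :
    ∫⁻ x, ENNReal.ofReal (v x) * ENNReal.ofReal (‖x - a‖ ^ (-(2 * s))) < ⊤ := by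
  have hd0 : 0 < d := by
    have : (0 : ℝ) < d := by linarith
    exact_mod_cast this
  set D := {h : Ed d | ‖h‖ ≤ 1} with hD
  have hDm : MeasurableSet D := measurableSet_le measurable_norm measurable_const
  have hle : ∀ᵐ x : Ed d, ENNReal.ofReal (v x) * ENNReal.ofReal (‖x - a‖ ^ (-(2 * s))) ≤
      ENNReal.ofReal A * D.indicator (fun h => ENNReal.ofReal (‖h‖ ^ (-(2 * s)))) (x - a) +
        ENNReal.ofReal ((2 + ‖a‖) ^ γ) * ENNReal.ofReal (v x * (1 + ‖x‖) ^ (-γ)) := by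
    filter_upwards [hvA] with x hx
    by_cases hxD : x - a ∈ D
    · rw [indicator_of_mem hxD]
      exact le_add_right (mul_le_mul_left (ENNReal.ofReal_le_ofReal hx) _)
    · rw [indicator_of_notMem hxD, mul_zero, zero_add, ← ENNReal.ofReal_mul (hv0 x),
        ← ENNReal.ofReal_mul (by positivity)]
      refine ENNReal.ofReal_le_ofReal ?_
      have h1 : 1 < ‖x - a‖ := not_le.1 hxD
      have h2 : ‖x‖ ≤ ‖x - a‖ + ‖a‖ := by simpa using norm_add_le (x - a) a
      have h3 : 1 + ‖x‖ ≤ (2 + ‖a‖) * ‖x - a‖ := by nlinarith [norm_nonneg a]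
      have h4 : ‖x - a‖ ^ (-(2 * s)) ≤ (2 + ‖a‖) ^ γ * (1 + ‖x‖) ^ (-γ) := by
        calc ‖x - a‖ ^ (-(2 * s)) ≤ ‖x - a‖ ^ (-γ) :=
              Real.rpow_le_rpow_of_exponent_le h1.le (by linarith)
          _ ≤ ((1 + ‖x‖) / (2 + ‖a‖)) ^ (-γ) :=
              Real.rpow_le_rpow_of_nonpos (by positivity)
                (by rw [div_le_iff₀ (by positivity)]; linarith) (by linarith)
          _ = _ := by
              rw [Real.div_rpow (by positivity) (by positivity), Real.rpow_neg (by positivity) γ,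
                Real.rpow_neg (by positivity : 0 ≤ 2 + ‖a‖) γ]
              field_simp
      calc v x * ‖x - a‖ ^ (-(2 * s)) ≤ v x * ((2 + ‖a‖) ^ γ * (1 + ‖x‖) ^ (-γ)) :=
            mul_le_mul_of_nonneg_left h4 (hv0 x)
        _ = _ := by ring
  refine (lintegral_mono_ae hle).trans_lt ?_
  have hm1 : Measurable (D.indicator (fun h : Ed d => ENNReal.ofReal (‖h‖ ^ (-(2 * s))))) :=
    Measurable.indicator (by fun_prop) hDm
  rw [lintegral_add_left (by fun_prop), lintegral_const_mul _ (by fun_prop),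
    lintegral_const_mul _ (by fun_prop), lintegral_sub_right_eq_self
      (D.indicator (fun h : Ed d => ENNReal.ofReal (‖h‖ ^ (-(2 * s))))) a, lintegral_indicator hDm]
  have h := lintegral_norm_rpow_ball hd0 (e := (d : ℝ) - 2 * s) (by linarith) one_pos
  rw [show -(d : ℝ) + ((d : ℝ) - 2 * s) = -(2 * s) by ring] at h
  rw [h]
  refine ENNReal.add_lt_top.2 ⟨ENNReal.mul_lt_top ENNReal.ofReal_lt_top ENNReal.ofReal_lt_top,
    ENNReal.mul_lt_top ENNReal.ofReal_lt_top ?_⟩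
  rw [← hasFiniteIntegral_iff_ofReal (Eventually.of_forall fun x =>
    mul_nonneg (hv0 x) (by positivity))]
  exact hI.2

/-- The moment `∫ ψ u(t) ρ`. -/
def moment (d : ℕ) (ρ : Ed d → ℝ) (u : Ed d → ℝ → ℝ) (ψ : Ed d → ℝ) (t : ℝ) : ℝ :=
  ∫ x : Ed d, ψ x * (u x t * ρ x)

/-- The Gagliardo pairing of `u(t)^m` with `ψ`, up to the normalizing constant. -/
def pairing (d : ℕ) (s m : ℝ) (u : Ed d → ℝ → ℝ) (ψ : Ed d → ℝ) (t : ℝ) : ℝ :=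
  ∫ p, gagInt d s (fun x => u x t ^ m) ψ p

lemma IsTimeTest.exists_bound {θ : ℝ → ℝ} (h : IsTimeTest θ) :
    ∃ t₁ t₂ A : ℝ, 0 < t₁ ∧ t₁ < t₂ ∧ 0 ≤ A ∧ (∀ t, |θ t| ≤ (Ioc t₁ t₂).indicator (fun _ => A) t) ∧
      ∀ t, |deriv θ t| ≤ (Ioc t₁ t₂).indicator (fun _ => A) t := by
  obtain ⟨hs, hc, hsupp⟩ := h
  have hcd : Continuous (deriv θ) := hs.continuous_deriv (by simp)
  obtain ⟨A₁, hA₁⟩ := hs.continuous.bounded_above_of_compact_support hc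
  obtain ⟨A₂, hA₂⟩ := hcd.bounded_above_of_compact_support hc.deriv
  obtain ⟨t₁, t₂, h1, h12, ht⟩ : ∃ t₁ t₂ : ℝ, 0 < t₁ ∧ t₁ < t₂ ∧ tsupport θ ⊆ Ioc t₁ t₂ := by
    rcases (tsupport θ).eq_empty_or_nonempty with he | hne
    · exact ⟨1, 2, one_pos, one_lt_two, by simp [he]⟩
    · obtain ⟨a, ha, hmin⟩ := hc.isCompact.exists_isLeast hne
      obtain ⟨b, hb, hmax⟩ := hc.isCompact.exists_isGreatest hne
      have ha0 : 0 < a := hsupp ha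
      refine ⟨a / 2, b, by linarith, by linarith [hmin hb], fun x hx => ⟨?_, hmax hx⟩⟩
      linarith [hmin hx]
  refine ⟨t₁, t₂, max A₁ A₂, h1, h12, ((norm_nonneg _).trans (hA₁ 0)).trans (le_max_left _ _),
    fun t => ?_, fun t => ?_⟩
  · by_cases h : t ∈ Ioc t₁ t₂
    · rw [indicator_of_mem h]
      exact (hA₁ t).trans (le_max_left _ _)
    · rw [indicator_of_notMem h, image_eq_zero_of_notMem_tsupport fun h' => h (ht h'), abs_zero]
  · by_cases h : t ∈ Ioc t₁ t₂
    · rw [indicator_of_mem h]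
      exact (hA₂ t).trans (le_max_right _ _)
    · rw [indicator_of_notMem h, image_eq_zero_of_notMem_tsupport (f := deriv θ)
        fun h' => h (ht (tsupport_deriv_subset h')), abs_zero]

lemma isTestFn_mul {d : ℕ} {θ : ℝ → ℝ} (hθ : IsTimeTest θ) {ψ : Ed d → ℝ}
    (hψ : ContDiff ℝ (⊤ : ℕ∞) ψ) (hc : HasCompactSupport ψ) :
    IsTestFn d (fun z : Ed d × ℝ => θ z.2 * ψ z.1) := by
  have hsub : tsupport (fun z : Ed d × ℝ => θ z.2 * ψ z.1) ⊆ tsupport ψ ×ˢ tsupport θ := by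
    refine closure_minimal (fun z hz => ?_) ((isClosed_tsupport _).prod (isClosed_tsupport _))
    have hz' : θ z.2 * ψ z.1 ≠ 0 := hz
    exact ⟨subset_tsupport _ (right_ne_zero_of_mul hz'),
      subset_tsupport _ (left_ne_zero_of_mul hz')⟩
  refine ⟨(hθ.1.comp contDiff_snd).mul (hψ.comp contDiff_fst), ?_, ?_⟩
  · exact (hc.isCompact.prod hθ.2.1.isCompact).of_isClosed_subset (isClosed_tsupport _) hsub
  · exact hsub.trans (prod_mono (subset_univ _) hθ.2.2)

/-- The weak formulation tested against products. -/
lemma WeakSolCore.integral_moment_mul_deriv {d : ℕ} {s m κ : ℝ} {ρ : Ed d → ℝ}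
    {u : Ed d → ℝ → ℝ} (hu : WeakSolCore d s m κ ρ u) {θ : ℝ → ℝ} (hθ : IsTimeTest θ)
    {ψ : Ed d → ℝ} (hψ : ContDiff ℝ (⊤ : ℕ∞) ψ) (hc : HasCompactSupport ψ) :
    ∫ t in Ioi (0 : ℝ), moment d ρ u ψ t * deriv θ t =
      κ / 2 * ∫ t in Ioi (0 : ℝ), θ t * pairing d s m u ψ t := by
  have h := hu.weakForm _ (isTestFn_mul hθ hψ hc)
  rw [neg_add_eq_zero] at h
  calc _ = ∫ t in Ioi (0 : ℝ), ∫ x, u x t * deriv (fun τ => θ τ * ψ x) t * ρ x := by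
        refine integral_congr_ae (Eventually.of_forall fun t => ?_)
        simp only [moment]
        rw [← integral_mul_const]
        refine integral_congr_ae (Eventually.of_forall fun x => ?_)
        simp only [deriv_mul_const_field]
        ring
    _ = _ := h
    _ = _ := by
        rw [← integral_const_mul]
        refine integral_congr_ae (Eventually.of_forall fun t => ?_)
        simp only [gagliardoE, pairing]
        rw [← integral_const_mul, ← integral_const_mul, ← integral_const_mul]
        refine integral_congr_ae (Eventually.of_forall fun p => ?_)
        simp only [gagInt]
        ring

lemma stronglyMeasurable_moment {d : ℕ} {ρ : Ed d → ℝ} (hρ : Measurable ρ) {u : Ed d → ℝ → ℝ}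
    (hu : Measurable (Function.uncurry u)) {ψ : Ed d → ℝ} (hψ : Measurable ψ) :
    StronglyMeasurable (moment d ρ u ψ) := by
  have hm : Measurable (fun z : ℝ × Ed d => ψ z.2 * (u z.2 z.1 * ρ z.2)) :=
    (hψ.comp measurable_snd).mul
      ((hu.comp (measurable_snd.prodMk measurable_fst)).mul (hρ.comp measurable_snd))
  exact hm.stronglyMeasurable.integral_prod_right (ν := (volume : Measure (Ed d)))

lemma stronglyMeasurable_pairing {d : ℕ} {s m : ℝ} {u : Ed d → ℝ → ℝ}
    (hu : Measurable (Function.uncurry u)) {ψ : Ed d → ℝ} (hψ : Measurable ψ) :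
    StronglyMeasurable (pairing d s m u ψ) := by
  have h1 : Measurable (fun z : ℝ × (Ed d × Ed d) => u z.2.1 z.1) :=
    hu.comp (measurable_snd.fst.prodMk measurable_fst)
  have h2 : Measurable (fun z : ℝ × (Ed d × Ed d) => u z.2.2 z.1) :=
    hu.comp (measurable_snd.snd.prodMk measurable_fst)
  have hm : Measurable (fun z : ℝ × (Ed d × Ed d) => gagInt d s (fun x => u x z.1 ^ m) ψ z.2) := by
    unfold gagInt
    fun_prop
  exact hm.stronglyMeasurable.integral_prod_right (ν := (volume : Measure (Ed d × Ed d)))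

lemma GoodTime.integrable_mul {d : ℕ} {s m M t A : ℝ} {ρ : Ed d → ℝ} {u : Ed d → ℝ → ℝ}
    (h : GoodTime d s m ρ u M t) {ψ : Ed d → ℝ} (hψ : Measurable ψ) (hA : ∀ x, |ψ x| ≤ A) :
    Integrable (fun x => ψ x * (u x t * ρ x)) :=
  h.1.bdd_mul hψ.aestronglyMeasurable (Eventually.of_forall hA)

lemma GoodTime.abs_moment_le {d : ℕ} {s m M t A : ℝ} {ρ : Ed d → ℝ} {u : Ed d → ℝ → ℝ}
    (h : GoodTime d s m ρ u M t) (hρ : ∀ x, 0 < ρ x) (hu0 : ∀ x, 0 ≤ u x t) (hA0 : 0 ≤ A)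
    {ψ : Ed d → ℝ} (hA : ∀ x, |ψ x| ≤ A) : |moment d ρ u ψ t| ≤ A * M := by
  have h1 : ‖moment d ρ u ψ t‖ ≤ ∫ x, A * (u x t * ρ x) := by
    refine norm_integral_le_of_norm_le (h.1.const_mul A) (Eventually.of_forall fun x => ?_)
    have := mul_nonneg (hu0 x) (hρ x).le
    rw [Real.norm_eq_abs, abs_mul, abs_of_nonneg this]
    exact mul_le_mul_of_nonneg_right (hA x) this
  rw [integral_const_mul] at h1
  exact h1.trans (mul_le_mul_of_nonneg_left h.2.1 hA0)

/-- Passage to the limit in the time-derivative term. -/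
lemma tendsto_integral_moment {d : ℕ} {s m κ M : ℝ} {ρ : Ed d → ℝ} (hρm : Measurable ρ)
    (hρ : ∀ x, 0 < ρ x) {u : Ed d → ℝ → ℝ} (hu : WeakSolCore d s m κ ρ u)
    (hgood : ∀ᵐ t ∂(volume.restrict (Ioi (0 : ℝ))), GoodTime d s m ρ u M t) {θ : ℝ → ℝ}
    (hθ : IsTimeTest θ) {ψ : ℕ → Ed d → ℝ} {χ : Ed d → ℝ} {A : ℝ} (hA0 : 0 ≤ A)
    (hψ : ∀ n, Measurable (ψ n)) (hA : ∀ n x, |ψ n x| ≤ A)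
    (hlim : ∀ x, Tendsto (fun n => ψ n x) atTop (𝓝 (χ x))) :
    Tendsto (fun n => ∫ t in Ioi (0 : ℝ), moment d ρ u (ψ n) t * deriv θ t) atTop
      (𝓝 (∫ t in Ioi (0 : ℝ), moment d ρ u χ t * deriv θ t)) := by
  obtain ⟨t₁, t₂, D, h1, h12, hD0, hθb, hθd⟩ := hθ.exists_bound
  have hcd : Continuous (deriv θ) := hθ.1.continuous_deriv (by simp)
  have hbd : Integrable (fun t => A * M * (Ioc t₁ t₂).indicator (fun _ => D) t) :=
    ((integrable_indicator_iff measurableSet_Ioc).2 (by simp)).const_mul _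
  refine tendsto_integral_of_dominated_convergence _ (fun n => ?_) hbd.integrableOn (fun n => ?_) ?_
  · exact ((stronglyMeasurable_moment hρm hu.measurable (hψ n)).mul
      hcd.stronglyMeasurable).aestronglyMeasurable
  · filter_upwards [hgood] with t ht
    rw [norm_mul]
    exact mul_le_mul (ht.abs_moment_le hρ (fun x => hu.nonneg x t) hA0 (hA n)) (hθd t)
      (norm_nonneg _) ((abs_nonneg _).trans
        (ht.abs_moment_le hρ (fun x => hu.nonneg x t) hA0 (hA n)))
  · filter_upwards [hgood] with t ht
    refine Tendsto.mul_const _ ?_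
    refine tendsto_integral_of_dominated_convergence (fun x => A * (u x t * ρ x))
      (fun n => (ht.integrable_mul (hψ n) (hA n)).aestronglyMeasurable) (ht.1.const_mul A)
      (fun n => Eventually.of_forall fun x => ?_)
      (Eventually.of_forall fun x => (hlim x).mul_const _)
    have := mul_nonneg (hu.nonneg x t) (hρ x).le
    rw [Real.norm_eq_abs, abs_mul, abs_of_nonneg this]
    exact mul_le_mul_of_nonneg_right (hA n x) this

lemma WeakSolCore.integrableOn_energy {d : ℕ} {s m κ : ℝ} {ρ : Ed d → ℝ} {u : Ed d → ℝ → ℝ}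
    (hκ : 0 < κ) (hu : WeakSolCore d s m κ ρ u) {t₁ t₂ : ℝ} (h1 : 0 < t₁) (h12 : t₁ < t₂) :
    IntegrableOn (fun t => ∫ p, gagInt d s (fun x => u x t ^ m) (fun x => u x t ^ m) p)
      (Ioc t₁ t₂) := by
  have heq : (fun t => ∫ p, gagInt d s (fun x => u x t ^ m) (fun x => u x t ^ m) p) =
      fun t => (κ / 2)⁻¹ * (gagliardoSq d s κ (fun x => u x t ^ m)).toReal := by
    funext t
    rw [← integral_gagInt_self hκ (hu.measurable_slice_rpow t), inv_mul_cancel_left₀ (by positivity)]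
  rw [heq]
  refine Integrable.const_mul (integrable_toReal_of_lintegral_ne_top ?_
    (hu.energyLocInt t₁ t₂ h1 h12)) _
  have h1 : Measurable (fun z : ℝ × (Ed d × Ed d) => u z.2.1 z.1) :=
    hu.measurable.comp (measurable_snd.fst.prodMk measurable_fst)
  have h2 : Measurable (fun z : ℝ × (Ed d × Ed d) => u z.2.2 z.1) :=
    hu.measurable.comp (measurable_snd.snd.prodMk measurable_fst)
  have hm : Measurable (fun z : ℝ × (Ed d × Ed d) => ENNReal.ofReal
      ((u z.2.1 z.1 ^ m - u z.2.2 z.1 ^ m) ^ 2 / ‖z.2.1 - z.2.2‖ ^ ((d : ℝ) + 2 * s))) :=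
    ((((h1.pow_const m).sub (h2.pow_const m)).pow_const 2).div (by fun_prop)).ennreal_ofReal
  unfold gagliardoSq
  exact (hm.lintegral_prod_right' (ν := (volume : Measure (Ed d × Ed d)))).const_mul _ |>.aemeasurable

/-- Passage to the limit in the Gagliardo term. -/
lemma tendsto_integral_pairing {d : ℕ} {s m κ M : ℝ} {ρ : Ed d → ℝ} (hκ : 0 < κ)
    {u : Ed d → ℝ → ℝ} (hu : WeakSolCore d s m κ ρ u)
    (hgood : ∀ᵐ t ∂(volume.restrict (Ioi (0 : ℝ))), GoodTime d s m ρ u M t) {θ : ℝ → ℝ}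
    (hθ : IsTimeTest θ) {ψ : ℕ → Ed d → ℝ} {χ : Ed d → ℝ}
    (hψ : ∀ n, Measurable (ψ n)) (hψχ : ∀ n x y, |ψ n x - ψ n y| ≤ |χ x - χ y|)
    (hχ : Integrable (gagInt d s χ χ))
    (hlim : ∀ x, Tendsto (fun n => ψ n x) atTop (𝓝 (χ x))) :
    Tendsto (fun n => ∫ t in Ioi (0 : ℝ), θ t * pairing d s m u (ψ n) t) atTop
      (𝓝 (∫ t in Ioi (0 : ℝ), θ t * pairing d s m u χ t)) := by
  obtain ⟨t₁, t₂, D, h1, h12, hD0, hθb, hθd⟩ := hθ.exists_bound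
  set e : ℝ → ℝ := fun t => ∫ p, gagInt d s (fun x => u x t ^ m) (fun x => u x t ^ m) p with he
  have hbd : Integrable (fun t => (Ioc t₁ t₂).indicator
      (fun t => D * (1 / 2 * (e t + ∫ p, gagInt d s χ χ p))) t) := by
    refine (integrable_indicator_iff measurableSet_Ioc).2 (Integrable.const_mul
      (Integrable.const_mul ((hu.integrableOn_energy hκ h1 h12).add ?_) _) _)
    exact integrable_const _
  refine tendsto_integral_of_dominated_convergence _ (fun n => ?_) hbd.integrableOn (fun n => ?_) ?_
  · exact (hθ.1.continuous.stronglyMeasurable.mul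
      (stronglyMeasurable_pairing hu.measurable (hψ n))).aestronglyMeasurable
  · filter_upwards [hgood] with t ht
    have hpair : ‖pairing d s m u (ψ n) t‖ ≤ 1 / 2 * (e t + ∫ p, gagInt d s χ χ p) := by
      rw [he, ← integral_add ht.2.2.1 hχ, ← integral_const_mul]
      exact norm_integral_le_of_norm_le ((ht.2.2.1.add hχ).const_mul _)
        (Eventually.of_forall fun p => abs_gagInt_le (hψχ n) p)
    rw [norm_mul]
    have h3 := hθb t
    by_cases hti : t ∈ Ioc t₁ t₂
    · rw [indicator_of_mem hti] at h3 ⊢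
      exact mul_le_mul h3 hpair (norm_nonneg _) hD0
    · rw [indicator_of_notMem hti] at h3 ⊢
      rw [Real.norm_eq_abs, le_antisymm h3 (abs_nonneg _), zero_mul]
  · filter_upwards [hgood] with t ht
    refine Tendsto.const_mul _ ?_
    refine tendsto_integral_of_dominated_convergence
      (fun p => 1 / 2 * (gagInt d s (fun x => u x t ^ m) (fun x => u x t ^ m) p + gagInt d s χ χ p))
      (fun n => (measurable_gagInt (hu.measurable_slice_rpow t) (hψ n)).aestronglyMeasurable)
      ((ht.2.2.1.add hχ).const_mul _)
      (fun n => Eventually.of_forall fun p => abs_gagInt_le (hψχ n) p)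
      (Eventually.of_forall fun p => ?_)
    simp only [gagInt]
    exact ((hlim _).sub (hlim _)).const_mul _ |>.div_const _

lemma locallyIntegrable_moment {d : ℕ} {s m κ M A : ℝ} {ρ : Ed d → ℝ} (hρm : Measurable ρ)
    (hρ : ∀ x, 0 < ρ x) {u : Ed d → ℝ → ℝ} (hu : WeakSolCore d s m κ ρ u)
    (hgood : ∀ᵐ t ∂(volume.restrict (Ioi (0 : ℝ))), GoodTime d s m ρ u M t) {χ : Ed d → ℝ}
    (hχ : Measurable χ) (hA0 : 0 ≤ A) (hA : ∀ x, |χ x| ≤ A) :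
    LocallyIntegrable ((Ioi (0 : ℝ)).indicator (moment d ρ u χ)) := by
  refine (locallyIntegrable_const |A * M|).mono
    ((stronglyMeasurable_moment hρm hu.measurable hχ).indicator
      measurableSet_Ioi).aestronglyMeasurable ?_
  rw [ae_restrict_iff' measurableSet_Ioi] at hgood
  filter_upwards [hgood] with t ht
  rw [Real.norm_eq_abs |_|, abs_abs]
  by_cases h : t ∈ Ioi (0 : ℝ)
  · rw [indicator_of_mem h]
    exact ((ht h).abs_moment_le hρ (fun x => hu.nonneg x t) hA0 hA).trans (le_abs_self _)
  · rw [indicator_of_notMem h, norm_zero]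
    exact abs_nonneg _

/-- Moments against decaying supersolutions are essentially nonincreasing in time. -/
lemma exists_antitoneOn_moment {d : ℕ} {s m κ M : ℝ} {ρ : Ed d → ℝ} (hκ : 0 < κ)
    (hρm : Measurable ρ) (hρ : ∀ x, 0 < ρ x) {u : Ed d → ℝ → ℝ} (hu : WeakSolCore d s m κ ρ u)
    (hgood : ∀ᵐ t ∂(volume.restrict (Ioi (0 : ℝ))), GoodTime d s m ρ u M t) {χ : Ed d → ℝ}
    (hχ : IsDecayingTest d s χ)
    (hsup : ∀ᵐ t ∂(volume.restrict (Ioi (0 : ℝ))), 0 ≤ pairing d s m u χ t) :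
    ∃ N : Set ℝ, volume N = 0 ∧ AntitoneOn (moment d ρ u χ) (Ioi 0 \ N) := by
  obtain ⟨A, hA⟩ := hχ.bounded
  have hA0 : 0 ≤ A := (hχ.nonneg 0).trans (hA 0)
  obtain ⟨ψ, hψs, hψc, hψd, hψb, hlim⟩ := hχ.exists_approx
  refine exists_antitoneOn_of_distrib_deriv_nonpos
    (locallyIntegrable_moment hρm hρ hu hgood hχ.smooth.continuous.measurable hA0
      fun x => by rw [abs_of_nonneg (hχ.nonneg x)]; exact hA x) fun θ hθ hθ0 => ?_
  have h1 := tendsto_integral_moment hρm hρ hu hgood hθ hA0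
    (fun n => (hψs n).continuous.measurable) (fun n x => (hψb n x).trans (hA x)) hlim
  have h2 := (tendsto_integral_pairing hκ hu hgood hθ
    (fun n => (hψs n).continuous.measurable) hψd hχ.energy hlim).const_mul (κ / 2)
  simp_rw [hu.integral_moment_mul_deriv hθ (hψs _) (hψc _)] at h1
  rw [tendsto_nhds_unique h1 h2]
  refine mul_nonneg (by positivity) (integral_nonneg_of_ae ?_)
  filter_upwards [hsup] with t ht
  exact mul_nonneg (hθ0 t) ht

/-- Conservation of mass against time test functions. -/
lemma integral_mass_mul_deriv {d : ℕ} {s m κ M γ₀ γ c C : ℝ} {ρ : Ed d → ℝ} (hs0 : 0 < s)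
    (hs1 : s < 1) (hd : 2 * s < d) (hm : 1 < m)
    (hγ₀0 : 0 ≤ γ₀) (hγ0 : 0 ≤ γ) (hγs : γ < 2 * s) (hρ : AdmissibleWeight d ρ γ₀ γ c C)
    {u : Ed d → ℝ → ℝ} (hu : WeakSolCore d s m κ ρ u)
    (hgood : ∀ᵐ t ∂(volume.restrict (Ioi (0 : ℝ))), GoodTime d s m ρ u M t) {θ : ℝ → ℝ}
    (hθ : IsTimeTest θ) :
    ∫ t in Ioi (0 : ℝ), moment d ρ u (fun _ => 1) t * deriv θ t = 0 := by
  have hd0 : 0 < d := by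
    have : (0 : ℝ) < d := by linarith
    exact_mod_cast this
  obtain ⟨L, ξ, hL0, hξs, hξc, hξ1, hξsec, hξz, hlim⟩ := exists_cutoff_family d
  have h1 := tendsto_integral_moment hρ.2.2.1 hρ.2.2.2.1 hu hgood hθ zero_le_one
    (fun n => (hξs n).continuous.measurable) hξ1 hlim
  simp_rw [hu.integral_moment_mul_deriv hθ (hξs _) (hξc _)] at h1
  refine tendsto_nhds_unique h1 ?_
  suffices hT : Tendsto (fun n => ∫ t in Ioi (0 : ℝ), θ t * pairing d s m u (ξ n) t) atTop (𝓝 0) by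
    simpa only [mul_zero] using hT.const_mul (κ / 2)
  obtain ⟨t₁, t₂, D, ht1, h12, hD0, hθb, -⟩ := hθ.exists_bound
  obtain ⟨B, hB0, hB⟩ := hu.exists_ae_le ht1
  have hw := hρ.ae_one_add_norm_rpow_le hd0 hγ₀0 hγ0
  set W := B ^ (m - 1) / c * M with hW
  have hbound : ∀ n : ℕ, ‖∫ t in Ioi (0 : ℝ), θ t * pairing d s m u (ξ n) t‖ ≤
      (2 * bumpConst d s L * W * ∫ t in Ioi (0 : ℝ), (Ioc t₁ t₂).indicator (fun _ => D) t) *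
        ((n : ℝ) + 1) ^ (γ - 2 * s) := by
    intro n
    have hR : (1 : ℝ) ≤ (n : ℝ) + 1 := by linarith [(Nat.cast_nonneg n : (0 : ℝ) ≤ n)]
    have hint : Integrable (fun t => (Ioc t₁ t₂).indicator (fun _ => D) t) :=
      (integrable_indicator_iff measurableSet_Ioc).2 (by simp)
    have := norm_integral_le_of_norm_le (μ := volume.restrict (Ioi (0 : ℝ)))
      (f := fun t => θ t * pairing d s m u (ξ n) t)
      (g := fun t => (Ioc t₁ t₂).indicator (fun _ => D) t *
        (2 * (bumpConst d s L * ((n : ℝ) + 1) ^ (γ - 2 * s)) * W))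
      (hint.integrableOn.mul_const _) ?_
    · refine this.trans (le_of_eq ?_)
      rw [integral_mul_const]
      ring
    · filter_upwards [hgood, ae_restrict_of_ae hB] with t ht hBt
      rw [norm_mul]
      have h3 := hθb t
      by_cases hti : t ∈ Ioc t₁ t₂
      · refine mul_le_mul h3 ?_ (norm_nonneg _) ((abs_nonneg _).trans h3)
        obtain ⟨hi, hle⟩ := integral_rpow_mul_weight_le hm hρ.1 hw (hu.measurable_slice t)
          (fun x => hu.nonneg x t) hB0 (hBt hti.1) ht.1 ht.2.1
        refine (abs_integral_gagInt_bump_le hs0 hs1 hd0 (hξs n).continuous.measurable (hξ1 n) hL0 hR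
          (hξsec n) (hξz n) (hu.measurable_slice_rpow t)
          (fun x => Real.rpow_nonneg (hu.nonneg x t) _)
          (integrable_gagInt (hu.measurable_slice_rpow t) (hξs n).continuous.measurable ht.2.2.1
            (integrable_gagInt_self_of_hasCompactSupport hs0 hs1 hd (hξs n) (hξc n)))
          hγ0 hγs hi).trans ?_
        have := bumpConst_nonneg d hs0 hs1 hL0
        exact mul_le_mul_of_nonneg_left hle (by positivity)
      · rw [indicator_of_notMem hti] at h3 ⊢
        rw [Real.norm_eq_abs, le_antisymm h3 (abs_nonneg _), zero_mul, zero_mul]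
  refine squeeze_zero_norm hbound ?_
  have h5 : Tendsto (fun x : ℝ => x ^ (-(2 * s - γ))) atTop (𝓝 0) :=
    tendsto_rpow_neg_atTop (by linarith)
  rw [neg_sub] at h5
  simpa only [mul_zero, Function.comp_apply] using (h5.comp (tendsto_atTop_add_const_right _ (1 : ℝ)
    tendsto_natCast_atTop_atTop)).const_mul
    (2 * bumpConst d s L * W * ∫ t in Ioi (0 : ℝ), (Ioc t₁ t₂).indicator (fun _ => D) t)

lemma exists_mass_const {d : ℕ} {s m κ M γ₀ γ c C : ℝ} {ρ : Ed d → ℝ} (hs0 : 0 < s)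
    (hs1 : s < 1) (hd : 2 * s < d) (hm : 1 < m)
    (hγ₀0 : 0 ≤ γ₀) (hγ0 : 0 ≤ γ) (hγs : γ < 2 * s) (hρ : AdmissibleWeight d ρ γ₀ γ c C)
    {u : Ed d → ℝ → ℝ} (hu : WeakSolCore d s m κ ρ u)
    (hgood : ∀ᵐ t ∂(volume.restrict (Ioi (0 : ℝ))), GoodTime d s m ρ u M t) :
    ∃ M₀ : ℝ, ∀ᵐ t ∂(volume.restrict (Ioi (0 : ℝ))), ∫ x, u x t * ρ x = M₀ := by
  have h0 := fun θ hθ => integral_mass_mul_deriv (θ := θ) hs0 hs1 hd hm hγ₀0 hγ0 hγs hρ hu hgood hθ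
  have hneg : moment d ρ u (fun _ => -1) = fun t => -moment d ρ u (fun _ => 1) t := by
    funext t
    simp [moment, integral_neg]
  obtain ⟨N₁, hN₁, hanti₁⟩ := exists_antitoneOn_of_distrib_deriv_nonpos
    (locallyIntegrable_moment hρ.2.2.1 hρ.2.2.2.1 hu hgood (χ := fun _ => 1) measurable_const
      zero_le_one (by simp)) fun θ hθ _ => (h0 θ hθ).ge
  obtain ⟨N₂, hN₂, hanti₂⟩ := exists_antitoneOn_of_distrib_deriv_nonpos
    (locallyIntegrable_moment hρ.2.2.1 hρ.2.2.2.1 hu hgood (χ := fun _ => -1) measurable_const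
      zero_le_one (by simp)) fun θ hθ _ => by
        simp only [hneg, neg_mul, integral_neg, h0 θ hθ, neg_zero, le_refl]
  rw [hneg] at hanti₂
  have hae : ∀ᵐ t ∂(volume.restrict (Ioi (0 : ℝ))), t ∈ Ioi (0 : ℝ) \ (N₁ ∪ N₂) := by
    rw [ae_restrict_iff' measurableSet_Ioi]
    filter_upwards [measure_eq_zero_iff_ae_notMem.1 (measure_union_null hN₁ hN₂)] with t h1 h2
    exact ⟨h2, h1⟩
  have : (ae (volume.restrict (Ioi (0 : ℝ)))).NeBot := by
    rw [ae_neBot, Ne, Measure.restrict_eq_zero]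
    simp
  obtain ⟨t₀, ht₀⟩ := hae.exists
  refine ⟨moment d ρ u (fun _ => 1) t₀, ?_⟩
  filter_upwards [hae] with t ht
  have hmom : ∫ x, u x t * ρ x = moment d ρ u (fun _ => 1) t := by simp [moment]
  rw [hmom]
  have hm : ∀ {a b : ℝ}, a ∈ Ioi (0 : ℝ) \ (N₁ ∪ N₂) → b ∈ Ioi (0 : ℝ) \ (N₁ ∪ N₂) → a ≤ b →
      moment d ρ u (fun _ => 1) a = moment d ρ u (fun _ => 1) b := by
    intro a b ha hb hab
    have h1 := hanti₁ ⟨ha.1, fun h => ha.2 (Or.inl h)⟩ ⟨hb.1, fun h => hb.2 (Or.inl h)⟩ hab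
    have h2 := hanti₂ ⟨ha.1, fun h => ha.2 (Or.inr h)⟩ ⟨hb.1, fun h => hb.2 (Or.inr h)⟩ hab
    simp only at h2
    linarith
  rcases le_total t t₀ with h | h
  · exact hm ht ht₀ h
  · exact (hm ht₀ ht h).symm

/-- Nonnegativity of the pairing with the radial supersolutions at good times. -/
lemma GoodTime.pairing_radTest_nonneg {d : ℕ} {s m M t γ c σ K c₀ l : ℝ} {ρ : Ed d → ℝ}
    {u : Ed d → ℝ → ℝ} (h : GoodTime d s m ρ u M t) (hs0 : 0 < s) (hs1 : s < 1) (hd : 2 * s < d)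
    (hm : 1 < m) (hc : 0 < c) (hγ0 : 0 ≤ γ) (hγs : γ < 2 * s)
    (hw : ∀ᵐ x : Ed d, (1 + ‖x‖) ^ (-γ) ≤ ρ x / c)
    (hum : Measurable (fun x => u x t)) (hu0 : ∀ x, 0 ≤ u x t)
    (hσ : 0 < σ) (hK : 0 ≤ K) (hc0 : 0 ≤ c₀) (hl : 0 < l)
    (hconc : ConcaveOn ℝ (Ioi 0) (fun w => profile (((d : ℝ) - 2 * s) / 2) σ K c₀ l
      (w ^ (-(((d : ℝ) - 2 * s) / 2)⁻¹)))) (a : Ed d) :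
    0 ≤ pairing d s m u (radTest d s σ K c₀ l a) t := by
  obtain ⟨hi, hM, hE, B, hB0, hB⟩ := h
  refine integral_gagInt_radTest_nonneg hs0 hs1 hd hσ hK hc0 hl hconc a (hum.pow_const m)
    (fun x => Real.rpow_nonneg (hu0 x) _) hE ?_
  refine lintegral_mul_norm_sub_rpow_lt_top (A := B ^ m) hs0 hd hγ0 hγs (hum.pow_const m)
    (fun x => Real.rpow_nonneg (hu0 x) _) ?_
    (integral_rpow_mul_weight_le hm hc hw hum hu0 hB0 hB hi hM).1 a
  filter_upwards [hB] with x hx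
  exact Real.rpow_le_rpow (hu0 x) hx (by linarith)

/-- A Gaussian with inverse width `l` centred at `a`. -/
def gaussian (d : ℕ) (l : ℝ) (a x : Ed d) : ℝ := Real.exp (-(l * ‖x - a‖ ^ 2))

lemma continuous_gaussian (d : ℕ) (l : ℝ) (a : Ed d) : Continuous (gaussian d l a) := by
  unfold gaussian
  fun_prop

lemma gaussian_nonneg {d : ℕ} (l : ℝ) (a x : Ed d) : 0 ≤ gaussian d l a x :=
  (Real.exp_pos _).le

lemma gaussian_le_one {d : ℕ} {l : ℝ} (hl : 0 ≤ l) (a x : Ed d) : gaussian d l a x ≤ 1 := by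
  unfold gaussian
  rw [Real.exp_le_one_iff]
  have := mul_nonneg hl (sq_nonneg ‖x - a‖)
  linarith

lemma norm_gaussian_le {d : ℕ} {l : ℝ} (hl : 0 ≤ l) (a x : Ed d) : ‖gaussian d l a x‖ ≤ 1 := by
  rw [Real.norm_of_nonneg (gaussian_nonneg l a x)]
  exact gaussian_le_one hl a x

lemma exists_gaussian_mul {d : ℕ} {l l' : ℝ} (hl : 0 < l) (hl' : 0 < l') (a a' : Ed d) :
    ∃ (c : ℝ) (b : Ed d), ∀ x,
      gaussian d l a x * gaussian d l' a' x = c * gaussian d (l + l') b x := by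
  refine ⟨Real.exp (-(l * l' / (l + l') * ‖a - a'‖ ^ 2)), (l + l')⁻¹ • (l • a + l' • a'),
    fun x => ?_⟩
  unfold gaussian
  rw [← Real.exp_add, ← Real.exp_add]
  congr 1
  have hne : l + l' ≠ 0 := by positivity
  have h1 : ‖(l + l')⁻¹ • (l • a + l' • a')‖ ^ 2 = (l + l')⁻¹ ^ 2 *
      (l ^ 2 * ‖a‖ ^ 2 + 2 * l * l' * inner ℝ a a' + l' ^ 2 * ‖a'‖ ^ 2) := by
    rw [norm_smul, mul_pow, Real.norm_eq_abs, sq_abs, norm_add_sq_real, inner_smul_left,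
      inner_smul_right, norm_smul, norm_smul, mul_pow, mul_pow, Real.norm_eq_abs, sq_abs,
      Real.norm_eq_abs, sq_abs]
    simp only [conj_trivial]
    ring
  rw [norm_sub_sq_real x, norm_sub_sq_real x, norm_sub_sq_real x, norm_sub_sq_real a, h1,
    inner_smul_right, inner_add_right, inner_smul_right, inner_smul_right]
  field_simp
  ring

lemma continuous_integral_gaussian {d : ℕ} (μ : Measure (Ed d)) [IsFiniteMeasure μ] :
    Continuous (fun z : ℝ × Ed d => ∫ x, gaussian d (Real.exp z.1) z.2 x ∂μ) := by
  refine continuous_of_dominated (bound := fun _ => 1)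
    (fun z => (continuous_gaussian d _ _).aestronglyMeasurable)
    (fun z => Eventually.of_forall fun x => norm_gaussian_le (Real.exp_pos _).le _ _)
    (integrable_const _) (Eventually.of_forall fun x => ?_)
  unfold gaussian
  fun_prop

/-- A finite measure is determined by its mass and its Gaussian moments. -/
lemma measure_ext_of_gaussian {d : ℕ} {μ ν : Measure (Ed d)} [IsFiniteMeasure μ]
    [IsFiniteMeasure ν] (h1 : μ.real univ = ν.real univ)
    (h : ∀ l a, 0 < l → ∫ x, gaussian d l a x ∂μ = ∫ x, gaussian d l a x ∂ν) : μ = ν := by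
  set T : Set (BoundedContinuousFunction (Ed d) ℝ) :=
    {f | ∃ l a, 0 < l ∧ ∀ x, f x = gaussian d l a x} with hT
  have hstar : ∀ f : BoundedContinuousFunction (Ed d) ℝ, star f = f := fun f => by ext x; simp
  let A : StarSubalgebra ℝ (BoundedContinuousFunction (Ed d) ℝ) :=
    { Algebra.adjoin ℝ T with star_mem' := fun {f} hf => by rwa [hstar f] }
  refine ext_of_forall_mem_subalgebra_integral_eq_of_polish (A := A) ?_ ?_
  · intro x y hxy
    let f : BoundedContinuousFunction (Ed d) ℝ := BoundedContinuousFunction.ofNormedAddCommGroup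
      (gaussian d 1 x) (continuous_gaussian d 1 x) 1 (norm_gaussian_le zero_le_one x)
    have hf : f ∈ A := Algebra.subset_adjoin ⟨1, x, one_pos, fun _ => rfl⟩
    refine ⟨f, ⟨BoundedContinuousFunction.toContinuousMapStarₐ ℝ f, ⟨f, hf, rfl⟩, rfl⟩, ?_⟩
    change gaussian d 1 x x ≠ gaussian d 1 x y
    have hyx : y - x ≠ 0 := sub_ne_zero.2 hxy.symm
    intro hc
    simp only [gaussian, sub_self, norm_zero, ne_eq, OfNat.ofNat_ne_zero, not_false_eq_true,
      zero_pow, mul_zero, neg_zero, Real.exp_zero, one_mul] at hc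
    have h0 := (Real.exp_eq_one_iff _).1 hc.symm
    rw [neg_eq_zero, sq_eq_zero_iff, norm_eq_zero] at h0
    exact hyx h0
  · intro g hg
    have hg' : g ∈ Algebra.adjoin ℝ T := hg
    rw [← Subalgebra.mem_toSubmodule, Algebra.adjoin_eq_span] at hg'
    clear hg
    induction hg' using Submodule.span_induction with
    | mem g hg =>
      have : (∃ c : ℝ, ∀ x, g x = c) ∨
          ∃ (c : ℝ) (l : ℝ) (a : Ed d), 0 < l ∧ ∀ x, g x = c * gaussian d l a x := by
        induction hg using Submonoid.closure_induction with
        | mem g hg =>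
          obtain ⟨l, a, hl, hg⟩ := hg
          exact Or.inr ⟨1, l, a, hl, fun x => by rw [hg, one_mul]⟩
        | one => exact Or.inl ⟨1, fun x => rfl⟩
        | mul f g _ _ hf hg =>
          rcases hf with ⟨c, hf⟩ | ⟨c, l, a, hl, hf⟩
          · rcases hg with ⟨c', hg⟩ | ⟨c', l', a', hl', hg⟩
            · exact Or.inl ⟨c * c', fun x => by simp [hf, hg]⟩
            · exact Or.inr ⟨c * c', l', a', hl', fun x => by simp [hf, hg, mul_assoc]⟩
          · rcases hg with ⟨c', hg⟩ | ⟨c', l', a', hl', hg⟩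
            · exact Or.inr ⟨c * c', l, a, hl, fun x => by
                simp only [BoundedContinuousFunction.coe_mul, Pi.mul_apply, hf, hg]; ring⟩
            · obtain ⟨k, b, hk⟩ := exists_gaussian_mul hl hl' a a'
              refine Or.inr ⟨c * c' * k, l + l', b, by positivity, fun x => ?_⟩
              simp only [BoundedContinuousFunction.coe_mul, Pi.mul_apply, hf, hg]
              linear_combination c * c' * hk x
      rcases this with ⟨c, hg⟩ | ⟨c, l, a, hl, hg⟩
      · simp [hg, h1]
      · simp [hg, integral_const_mul, h l a hl]
    | zero => simp
    | add f g _ _ hf hg =>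
      simp only [BoundedContinuousFunction.coe_add, Pi.add_apply]
      rw [integral_add (f.integrable μ) (g.integrable μ),
        integral_add (f.integrable ν) (g.integrable ν), hf, hg]
    | smul c f _ hf =>
      simp only [BoundedContinuousFunction.coe_smul, smul_eq_mul, integral_const_mul]
      rw [hf]

/-- Weak convergence of a tight family of measures of constant mass whose Gaussian moments
converge on a dense set of parameters. -/
lemma exists_tendsto_of_tight_of_gaussian {d : ℕ} {ι : Type*} {F : Filter ι} [F.NeBot]
    {ν : ι → FiniteMeasure (Ed d)} {C : ℝ≥0} (hmass : ∀ᶠ i in F, (ν i).mass = C)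
    {z : ℕ → ℝ × Ed d} (hz : DenseRange z)
    (hlim : ∀ n, ∃ l, Tendsto (fun i => ∫ x, gaussian d (Real.exp (z n).1) (z n).2 x ∂(ν i : Measure (Ed d)))
      F (𝓝 l))
    {e : ℕ → ℝ≥0} {K : ℕ → Set (Ed d)} (he : Tendsto e atTop (𝓝 0)) (hK : ∀ n, IsCompact (K n))
    (htight : ∀ᶠ i in F, ∀ n, ν i (K n)ᶜ ≤ e n) :
    ∃ μ : FiniteMeasure (Ed d), Tendsto ν F (𝓝 μ) ∧ μ.mass = C := by
  have hcpt := isCompact_setOfPred_finiteMeasure_mass_eq_compl_isCompact_le (E := Ed d) C he hK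
    (Or.inl inferInstance)
  have hmem : ∀ᶠ i in F, ν i ∈ {μ : FiniteMeasure (Ed d) | μ.mass = C ∧ ∀ n, μ (K n)ᶜ ≤ e n} := by
    filter_upwards [hmass, htight] with i h1 h2
    exact ⟨h1, h2⟩
  choose L hL using hlim
  have hcl : ∀ μ, MapClusterPt μ F ν → ∀ n,
      ∫ x, gaussian d (Real.exp (z n).1) (z n).2 x ∂(μ : Measure (Ed d)) = L n := by
    intro μ hμ n
    obtain ⟨U, hU, hUμ⟩ := mapClusterPt_iff_ultrafilter.1 hμ
    rw [FiniteMeasure.tendsto_iff_forall_integral_tendsto] at hUμ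
    exact tendsto_nhds_unique (hUμ (BoundedContinuousFunction.ofNormedAddCommGroup
      (gaussian d (Real.exp (z n).1) (z n).2) (continuous_gaussian d _ _) 1
      (norm_gaussian_le (Real.exp_pos _).le _))) ((hL n).mono_left hU)
  obtain ⟨μ, hμs, hμ⟩ := hcpt.exists_mapClusterPt_of_frequently (f := ν) hmem.frequently
  refine ⟨μ, hcpt.tendsto_nhds_of_unique_mapClusterPt hmem fun μ' hμ's hμ' => ?_, hμs.1⟩
  have hfun := hz.equalizer (continuous_integral_gaussian (μ' : Measure (Ed d)))
    (continuous_integral_gaussian (μ : Measure (Ed d)))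
    (funext fun n => (hcl μ' hμ' n).trans (hcl μ hμ n).symm)
  refine Subtype.ext (measure_ext_of_gaussian (μ := (μ' : Measure (Ed d)))
    (ν := (μ : Measure (Ed d))) ?_ fun l a hl => ?_)
  · have := hμ's.1.trans hμs.1.symm
    rw [FiniteMeasure.mass, FiniteMeasure.mass] at this
    exact congrArg NNReal.toReal this
  · have := congrFun hfun (Real.log l, a)
    simpa only [Real.exp_log hl] using this

lemma neBot_nhdsWithin_Ioi_diff {N : Set ℝ} (hN : volume N = 0) :
    (𝓝[Ioi (0 : ℝ) \ N] 0).NeBot := by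
  rw [← mem_closure_iff_nhdsWithin_neBot, Metric.mem_closure_iff]
  intro ε hε
  by_contra! hcon
  have hsub : Ioo 0 ε ⊆ N := fun t ht => by
    by_contra htN
    have := hcon t ⟨ht.1, htN⟩
    rw [dist_comm, Real.dist_eq, sub_zero, abs_of_pos ht.1] at this
    linarith [ht.2]
  have := measure_mono_null hsub hN
  rw [Real.volume_Ioo, ENNReal.ofReal_eq_zero] at this
  linarith

lemma AntitoneOn.exists_tendsto_nhdsWithin_zero {f : ℝ → ℝ} {S : Set ℝ} {A : ℝ}
    (hf : AntitoneOn f S) (hS : ∀ t ∈ S, 0 < t) (hne : S.Nonempty) (hA : ∀ t ∈ S, f t ≤ A) :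
    ∃ l, Tendsto f (𝓝[S] 0) (𝓝 l) := by
  have hbdd : BddAbove (f '' S) := ⟨A, by rintro _ ⟨t, ht, rfl⟩; exact hA t ht⟩
  refine ⟨sSup (f '' S), tendsto_order.2 ⟨fun a ha => ?_, fun a ha => ?_⟩⟩
  · obtain ⟨_, ⟨t₀, ht₀, rfl⟩, hlt⟩ := exists_lt_of_lt_csSup (hne.image f) ha
    filter_upwards [self_mem_nhdsWithin, nhdsWithin_le_nhds (Iio_mem_nhds (hS t₀ ht₀))] with t h1 h2
    exact hlt.trans_le (hf h1 ht₀ (le_of_lt h2))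
  · filter_upwards [self_mem_nhdsWithin] with t ht
    exact (le_csSup hbdd (mem_image_of_mem f ht)).trans_lt ha

lemma radTest_one_eq {d : ℕ} (s σ K l : ℝ) (a x : Ed d) :
    radTest d s σ K 1 l a x = radTest d s σ K 0 l a x + gaussian d l a x := by
  simp [radTest, profile, gaussian]

/-- Gaussian moments have an essential limit at time zero. -/
lemma exists_tendsto_moment_gaussian {d : ℕ} {s m κ M γ c l : ℝ} {ρ : Ed d → ℝ} (hs0 : 0 < s)
    (hs1 : s < 1) (hd : 2 * s < d) (hm : 1 < m) (hκ : 0 < κ) (hc : 0 < c) (hγ0 : 0 ≤ γ)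
    (hγs : γ < 2 * s) (hρm : Measurable ρ) (hρ : ∀ x, 0 < ρ x)
    (hw : ∀ᵐ x : Ed d, (1 + ‖x‖) ^ (-γ) ≤ ρ x / c) {u : Ed d → ℝ → ℝ}
    (hu : WeakSolCore d s m κ ρ u)
    (hgood : ∀ᵐ t ∂(volume.restrict (Ioi (0 : ℝ))), GoodTime d s m ρ u M t) (hl : 0 < l)
    (a : Ed d) :
    ∃ N : Set ℝ, volume N = 0 ∧ ∀ S : Set ℝ, S ⊆ Ioi 0 \ N → S.Nonempty →
      (∀ t ∈ S, GoodTime d s m ρ u M t) →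
      ∃ L, Tendsto (moment d ρ u (gaussian d l a)) (𝓝[S] 0) (𝓝 L) := by
  obtain ⟨K, hK, hconc⟩ := exists_concaveOn_profile (p := ((d : ℝ) - 2 * s) / 2) (σ := 1) (l := l)
    (by linarith) one_pos hl
  have hdt : ∀ c₀, 0 ≤ c₀ → IsDecayingTest d s (radTest d s 1 K c₀ l a) := fun c₀ hc₀ =>
    isDecayingTest_radTest hs0 hs1 hd one_pos hK.le hc₀ hl a
  have hanti : ∀ c₀, 0 ≤ c₀ → c₀ ≤ 1 → ∃ N : Set ℝ, volume N = 0 ∧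
      AntitoneOn (moment d ρ u (radTest d s 1 K c₀ l a)) (Ioi 0 \ N) := by
    intro c₀ h0 h1
    refine exists_antitoneOn_moment hκ hρm hρ hu hgood (hdt c₀ h0) ?_
    filter_upwards [hgood] with t ht
    exact ht.pairing_radTest_nonneg hs0 hs1 hd hm hc hγ0 hγs hw (hu.measurable_slice t)
      (fun x => hu.nonneg x t) one_pos hK.le h0 hl (hconc K c₀ hK.le h0 h1 (Or.inr le_rfl)) a
  obtain ⟨N₀, hN₀, h0⟩ := hanti 0 le_rfl zero_le_one
  obtain ⟨N₁, hN₁, h1⟩ := hanti 1 zero_le_one le_rfl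
  refine ⟨N₀ ∪ N₁, measure_union_null hN₀ hN₁, fun S hS hne hSg => ?_⟩
  have hlim : ∀ c₀, 0 ≤ c₀ → AntitoneOn (moment d ρ u (radTest d s 1 K c₀ l a)) S →
      ∃ L, Tendsto (moment d ρ u (radTest d s 1 K c₀ l a)) (𝓝[S] 0) (𝓝 L) := by
    intro c₀ hc₀ hanti
    obtain ⟨A, hA⟩ := (hdt c₀ hc₀).bounded
    refine hanti.exists_tendsto_nhdsWithin_zero (A := A * M) (fun t ht => (hS ht).1) hne
      fun t ht => (le_abs_self _).trans ((hSg t ht).abs_moment_le hρ (fun x => hu.nonneg x t)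
        (((hdt c₀ hc₀).nonneg 0).trans (hA 0)) fun x => ?_)
    rw [abs_of_nonneg ((hdt c₀ hc₀).nonneg x)]
    exact hA x
  obtain ⟨L₀, hL₀⟩ := hlim 0 le_rfl (h0.mono fun t ht => ⟨(hS ht).1, fun h => (hS ht).2 (Or.inl h)⟩)
  obtain ⟨L₁, hL₁⟩ := hlim 1 zero_le_one
    (h1.mono fun t ht => ⟨(hS ht).1, fun h => (hS ht).2 (Or.inr h)⟩)
  refine ⟨L₁ - L₀, (hL₁.sub hL₀).congr' ?_⟩
  filter_upwards [self_mem_nhdsWithin] with t ht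
  obtain ⟨A, hA⟩ := (hdt 0 le_rfl).bounded
  simp only [moment, radTest_one_eq]
  rw [sub_eq_iff_eq_add, ← integral_add ((hSg t ht).integrable_mul
    (continuous_gaussian d l a).measurable (norm_gaussian_le hl.le a))
    ((hSg t ht).integrable_mul (hdt 0 le_rfl).smooth.continuous.measurable (A := A) fun x => by
      rw [abs_of_nonneg ((hdt 0 le_rfl).nonneg x)]; exact hA x)]
  refine integral_congr_ae (Eventually.of_forall fun x => ?_)
  simp only
  ring

/-- The functions `(R² / (R² + |x|²))^{(d-2s)/2}` used for tightness, with `R = n + 1`. -/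
def wideTest (d : ℕ) (s : ℝ) (n : ℕ) : Ed d → ℝ :=
  radTest d s (((n : ℝ) + 1) ^ 2) ((((n : ℝ) + 1) ^ 2) ^ (((d : ℝ) - 2 * s) / 2)) 0 1 0

lemma wideTest_eq {d : ℕ} {s : ℝ} (n : ℕ) (x : Ed d) : wideTest d s n x =
    (1 + ‖x‖ ^ 2 / ((n : ℝ) + 1) ^ 2) ^ (-(((d : ℝ) - 2 * s) / 2)) := by
  have h : 1 + ‖x‖ ^ 2 / ((n : ℝ) + 1) ^ 2 =
      (((n : ℝ) + 1) ^ 2 + ‖x‖ ^ 2) / ((n : ℝ) + 1) ^ 2 := by field_simp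
  rw [h, Real.div_rpow (by positivity) (by positivity),
    Real.rpow_neg (by positivity : 0 ≤ ((n : ℝ) + 1) ^ 2), div_inv_eq_mul, mul_comm]
  simp [wideTest, radTest, profile]

lemma wideTest_le_one {d : ℕ} {s : ℝ} (hd : 2 * s < d) (n : ℕ) (x : Ed d) :
    wideTest d s n x ≤ 1 := by
  rw [wideTest_eq]
  refine Real.rpow_le_one_of_one_le_of_nonpos ?_ (by linarith)
  have : 0 ≤ ‖x‖ ^ 2 / ((n : ℝ) + 1) ^ 2 := by positivity
  linarith

lemma tendsto_wideTest {d : ℕ} {s : ℝ} (x : Ed d) :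
    Tendsto (fun n => wideTest d s n x) atTop (𝓝 1) := by
  simp_rw [wideTest_eq]
  have h1 : Tendsto (fun n : ℕ => ((n : ℝ) + 1) ^ 2) atTop atTop :=
    (tendsto_pow_atTop two_ne_zero).comp
      (tendsto_atTop_add_const_right _ (1 : ℝ) tendsto_natCast_atTop_atTop)
  have h2 := (h1.const_div_atTop (‖x‖ ^ 2)).const_add 1
  rw [add_zero] at h2
  simpa using h2.rpow_const (p := -(((d : ℝ) - 2 * s) / 2)) (Or.inl one_ne_zero)

lemma isDecayingTest_wideTest {d : ℕ} {s : ℝ} (hs0 : 0 < s) (hs1 : s < 1) (hd : 2 * s < d)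
    (n : ℕ) : IsDecayingTest d s (wideTest d s n) :=
  isDecayingTest_radTest hs0 hs1 hd (by positivity) (by positivity) le_rfl one_pos 0

lemma abs_wideTest_le_one {d : ℕ} {s : ℝ} (hs0 : 0 < s) (hs1 : s < 1) (hd : 2 * s < d)
    (n : ℕ) (x : Ed d) : |wideTest d s n x| ≤ 1 := by
  rw [abs_of_nonneg ((isDecayingTest_wideTest hs0 hs1 hd n).nonneg x)]
  exact wideTest_le_one hd n x

lemma exists_antitoneOn_moment_wideTest {d : ℕ} {s m κ M γ c : ℝ} {ρ : Ed d → ℝ} (hs0 : 0 < s)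
    (hs1 : s < 1) (hd : 2 * s < d) (hm : 1 < m) (hκ : 0 < κ) (hc : 0 < c) (hγ0 : 0 ≤ γ)
    (hγs : γ < 2 * s) (hρm : Measurable ρ) (hρ : ∀ x, 0 < ρ x)
    (hw : ∀ᵐ x : Ed d, (1 + ‖x‖) ^ (-γ) ≤ ρ x / c) {u : Ed d → ℝ → ℝ}
    (hu : WeakSolCore d s m κ ρ u)
    (hgood : ∀ᵐ t ∂(volume.restrict (Ioi (0 : ℝ))), GoodTime d s m ρ u M t) (n : ℕ) :
    ∃ N : Set ℝ, volume N = 0 ∧ AntitoneOn (moment d ρ u (wideTest d s n)) (Ioi 0 \ N) := by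
  refine exists_antitoneOn_moment hκ hρm hρ hu hgood (isDecayingTest_wideTest hs0 hs1 hd n) ?_
  obtain ⟨K, hK, hconc⟩ := exists_concaveOn_profile (p := ((d : ℝ) - 2 * s) / 2)
    (σ := ((n : ℝ) + 1) ^ 2) (l := 1) (by linarith) (by positivity) one_pos
  filter_upwards [hgood] with t ht
  exact ht.pairing_radTest_nonneg hs0 hs1 hd hm hc hγ0 hγs hw (hu.measurable_slice t)
    (fun x => hu.nonneg x t) (by positivity) (by positivity) le_rfl one_pos
    (hconc _ 0 (by positivity) le_rfl zero_le_one (Or.inl rfl)) 0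

/-- The finite measures `u(t) ρ dx`. -/
lemma exists_finiteMeasure_density {d : ℕ} {ρ : Ed d → ℝ} (hρm : Measurable ρ)
    (hρ : ∀ x, 0 < ρ x) {u : Ed d → ℝ → ℝ} (hum : ∀ t, Measurable (fun x => u x t))
    (hu0 : ∀ x t, 0 ≤ u x t) :
    ∃ ν : ℝ → FiniteMeasure (Ed d), ∀ t, Integrable (fun x => u x t * ρ x) →
      ∀ f : Ed d → ℝ, ∫ x, f x ∂(ν t : Measure (Ed d)) = moment d ρ u f t := by
  have h : ∀ t, ∃ n : FiniteMeasure (Ed d), Integrable (fun x => u x t * ρ x) →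
      ∀ f : Ed d → ℝ, ∫ x, f x ∂(n : Measure (Ed d)) = moment d ρ u f t := by
    intro t
    by_cases hI : Integrable (fun x => u x t * ρ x)
    · have hfin : IsFiniteMeasure
          (volume.withDensity fun x : Ed d => ENNReal.ofReal (u x t * ρ x)) :=
        isFiniteMeasure_withDensity_ofReal hI.2
      refine ⟨⟨_, hfin⟩, fun _ f => ?_⟩
      have hm : Measurable (fun x => ENNReal.ofReal (u x t * ρ x)) :=
        ((hum t).mul hρm).ennreal_ofReal
      have := integral_withDensity_eq_integral_toReal_smul hm
        (Eventually.of_forall fun x => ENNReal.ofReal_lt_top) f (μ := (volume : Measure (Ed d)))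
      refine this.trans (integral_congr_ae (Eventually.of_forall fun x => ?_))
      simp only [smul_eq_mul]
      rw [ENNReal.toReal_ofReal (mul_nonneg (hu0 x t) (hρ x).le), mul_comm]
    · exact ⟨0, fun h => absurd h hI⟩
  choose ν hν using h
  exact ⟨ν, hν⟩

/-- A Chebyshev-type tail bound. -/
lemma measureReal_compl_le_of_half_le {d : ℕ} (ν : Measure (Ed d)) [IsFiniteMeasure ν]
    {χ : Ed d → ℝ} (hχ : Measurable χ) (hχ0 : ∀ x, 0 ≤ χ x) (hχ1 : ∀ x, χ x ≤ 1) {K : Set (Ed d)}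
    (hK : MeasurableSet K) (h : ∀ x, 1 / 2 ≤ χ x → x ∈ K) :
    ν.real Kᶜ ≤ 2 * (ν.real univ - ∫ x, χ x ∂ν) := by
  have hi : Integrable χ ν := Integrable.of_bound hχ.aestronglyMeasurable 1
    (Eventually.of_forall fun x => by rw [Real.norm_of_nonneg (hχ0 x)]; exact hχ1 x)
  calc ν.real Kᶜ = ∫ x, Kᶜ.indicator (fun _ => (1 : ℝ)) x ∂ν := by
        rw [integral_indicator hK.compl]; simp
    _ ≤ ∫ x, 2 * (1 - χ x) ∂ν := by
        refine integral_mono ((integrable_const _).indicator hK.compl)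
          (((integrable_const _).sub hi).const_mul 2) fun x => ?_
        by_cases hx : x ∈ Kᶜ
        · rw [indicator_of_mem hx]
          have : χ x < 1 / 2 := by
            by_contra! hcon
            exact hx (h x hcon)
          linarith
        · rw [indicator_of_notMem hx]
          linarith [hχ1 x]
    _ = _ := by
        rw [integral_const_mul, integral_sub (integrable_const _) hi]
        simp

/-- A single null set of times away from which `u` has an initial trace, with constant mass. -/
lemma exists_initialTrace {d : ℕ} {s m κ γ₀ γ c C : ℝ} (hs0 : 0 < s) (hs1 : s < 1)
    (hd : 2 * s < d) (hm : 1 < m) (hκ : 0 < κ) (hγ₀0 : 0 ≤ γ₀) (hγ₀γ : γ₀ ≤ γ) (hγs : γ < 2 * s)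
    {ρ : Ed d → ℝ} (hρ : AdmissibleWeight d ρ γ₀ γ c C) {u : Ed d → ℝ → ℝ}
    (hu : WeakSolCore d s m κ ρ u) :
    ∃ μ : FiniteMeasure (Ed d), HasInitialTrace d ρ u μ ∧
      ∀ᵐ t ∂(volume.restrict (Ioi (0 : ℝ))), ∫ x : Ed d, u x t * ρ x = μ.mass := by
  have hγ0 : 0 ≤ γ := hγ₀0.trans hγ₀γ
  have hd0 : 0 < d := by
    have : (0 : ℝ) < d := by linarith
    exact_mod_cast this
  have hc : 0 < c := hρ.1
  have hρm : Measurable ρ := hρ.2.2.1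
  have hρ0 : ∀ x, 0 < ρ x := hρ.2.2.2.1
  have hw := hρ.ae_one_add_norm_rpow_le hd0 hγ₀0 hγ0
  obtain ⟨M, -, hgood⟩ := hu.exists_goodTime hκ
  obtain ⟨M₀, hmass⟩ := exists_mass_const hs0 hs1 hd hm hγ₀0 hγ0 hγs hρ hu hgood
  obtain ⟨ν, hν⟩ := exists_finiteMeasure_density hρm hρ0 hu.measurable_slice hu.nonneg
  set z := TopologicalSpace.denseSeq (ℝ × Ed d) with hz
  choose Ng hNg hlimg using fun n : ℕ => exists_tendsto_moment_gaussian hs0 hs1 hd hm hκ hc hγ0 hγs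
    hρm hρ0 hw hu hgood (Real.exp_pos (z n).1) (z n).2
  choose Nw hNw hanti using fun n : ℕ => exists_antitoneOn_moment_wideTest hs0 hs1 hd hm hκ hc hγ0
    hγs hρm hρ0 hw hu hgood n
  have hbad := (ae_restrict_iff' measurableSet_Ioi).1 (hgood.and hmass)
  rw [ae_iff] at hbad
  set N : Set ℝ := {t | ¬(t ∈ Ioi (0 : ℝ) → GoodTime d s m ρ u M t ∧ ∫ x, u x t * ρ x = M₀)} ∪
    ((⋃ n, Ng n) ∪ ⋃ n, Nw n) with hN
  have hN0 : volume N = 0 := measure_union_null hbad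
    (measure_union_null (measure_iUnion_null hNg) (measure_iUnion_null hNw))
  set S : Set ℝ := Ioi 0 \ N with hS
  have hSpos : ∀ t ∈ S, 0 < t := fun t ht => ht.1
  have hSgood : ∀ t ∈ S, GoodTime d s m ρ u M t ∧ ∫ x, u x t * ρ x = M₀ := fun t ht => by
    by_contra hcon
    exact ht.2 (Or.inl fun h => hcon (h ht.1))
  have hSg : ∀ n, S ⊆ Ioi 0 \ Ng n := fun n t ht =>
    ⟨ht.1, fun h => ht.2 (Or.inr (Or.inl (mem_iUnion_of_mem n h)))⟩
  have hSw : ∀ n, S ⊆ Ioi 0 \ Nw n := fun n t ht =>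
    ⟨ht.1, fun h => ht.2 (Or.inr (Or.inr (mem_iUnion_of_mem n h)))⟩
  have hne : (𝓝[S] (0 : ℝ)).NeBot := neBot_nhdsWithin_Ioi_diff hN0
  have hmem : ∀ᶠ t in 𝓝[S] (0 : ℝ), t ∈ S := self_mem_nhdsWithin
  obtain ⟨T, hT⟩ := hmem.exists
  have hνS : ∀ t ∈ S, ∀ f : Ed d → ℝ, ∫ x, f x ∂(ν t : Measure (Ed d)) = moment d ρ u f t :=
    fun t ht => hν t (hSgood t ht).1.1
  have hreal : ∀ t ∈ S, (ν t : Measure (Ed d)).real univ = M₀ := fun t ht => by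
    have h := hνS t ht fun _ => 1
    simpa [moment, (hSgood t ht).2] using h
  have hM₀ : 0 ≤ M₀ := hreal T hT ▸ measureReal_nonneg
  have hνmass : ∀ᶠ t in 𝓝[S] (0 : ℝ), (ν t).mass = M₀.toNNReal := hmem.mono fun t ht => by
    refine NNReal.coe_injective ?_
    rw [Real.coe_toNNReal _ hM₀]
    exact hreal t ht
  choose r hr using fun n : ℕ =>
    (isDecayingTest_wideTest hs0 hs1 hd n).decay (1 / 2) (by norm_num)
  have hwide : Tendsto (fun n => moment d ρ u (wideTest d s n) T) atTop (𝓝 M₀) := by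
    rw [← (hSgood T hT).2]
    refine tendsto_integral_of_dominated_convergence (fun x => u x T * ρ x) (fun n => ?_)
      (hSgood T hT).1.1 (fun n => Eventually.of_forall fun x => ?_)
      (Eventually.of_forall fun x => ?_)
    · exact ((isDecayingTest_wideTest hs0 hs1 hd n).smooth.continuous.aestronglyMeasurable).mul
        (hSgood T hT).1.1.1
    · have h0 : 0 ≤ u x T * ρ x := mul_nonneg (hu.nonneg x T) (hρ0 x).le
      rw [norm_mul, Real.norm_eq_abs, Real.norm_of_nonneg h0]
      exact mul_le_of_le_one_left h0 (abs_wideTest_le_one hs0 hs1 hd n x)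
    · simpa using (tendsto_wideTest x).mul_const (u x T * ρ x)
  have he : Tendsto (fun n => (2 * (M₀ - moment d ρ u (wideTest d s n) T)).toNNReal) atTop
      (𝓝 0) := by
    have h := (continuous_real_toNNReal.tendsto _).comp ((hwide.const_sub M₀).const_mul 2)
    simpa [Function.comp_def] using h
  have htight : ∀ᶠ t in 𝓝[S] (0 : ℝ), ∀ n, ν t (Metric.closedBall 0 (r n))ᶜ ≤
      (2 * (M₀ - moment d ρ u (wideTest d s n) T)).toNNReal := by
    filter_upwards [hmem, nhdsWithin_le_nhds (Iio_mem_nhds (hSpos T hT))] with t ht htT n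
    have hχ := isDecayingTest_wideTest hs0 hs1 hd n
    refine NNReal.le_toNNReal_of_coe_le ?_
    have h1 := measureReal_compl_le_of_half_le (ν t : Measure (Ed d))
      hχ.smooth.continuous.measurable hχ.nonneg (wideTest_le_one hd n)
      (Metric.isClosed_closedBall (x := 0) (ε := r n)).measurableSet
      fun x hx => mem_closedBall_zero_iff.2 (hr n x hx)
    rw [hreal t ht, hνS t ht] at h1
    have h2 := hanti n (hSw n ht) (hSw n hT) (le_of_lt htT)
    refine h1.trans ?_
    linarith
  obtain ⟨μ, hμ, hμm⟩ := exists_tendsto_of_tight_of_gaussian hνmass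
    (TopologicalSpace.denseRange_denseSeq (ℝ × Ed d)) (fun n => by
      obtain ⟨L, hL⟩ := hlimg n S (hSg n) ⟨T, hT⟩ fun t ht => (hSgood t ht).1
      exact ⟨L, hL.congr' (hmem.mono fun t ht => (hνS t ht _).symm)⟩) he
    (fun n => isCompact_closedBall 0 (r n)) htight
  refine ⟨μ, ⟨N, hN0, fun φ hφ ⟨B, hB⟩ => ?_⟩, ?_⟩
  · have h := FiniteMeasure.tendsto_iff_forall_integral_tendsto.1 hμ
      (BoundedContinuousFunction.ofNormedAddCommGroup φ hφ B hB)
    exact h.congr' (hmem.mono fun t ht => hνS t ht φ)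
  · rw [hμm, Real.coe_toNNReal _ hM₀]
    exact hmass

/-- A finite measure is determined by being an initial trace of `u`. -/
lemma HasInitialTrace.unique {d : ℕ} {ρ : Ed d → ℝ} {u : Ed d → ℝ → ℝ} {μ μ' : Measure (Ed d)}
    [IsFiniteMeasure μ] [IsFiniteMeasure μ'] (h : HasInitialTrace d ρ u μ)
    (h' : HasInitialTrace d ρ u μ') : μ = μ' := by
  obtain ⟨N, hN, h⟩ := h
  obtain ⟨N', hN', h'⟩ := h'
  have hne : (𝓝[Ioi (0 : ℝ) \ (N ∪ N')] (0 : ℝ)).NeBot :=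
    neBot_nhdsWithin_Ioi_diff (measure_union_null hN hN')
  refine ext_of_forall_integral_eq_of_IsFiniteMeasure fun f => ?_
  have hB : ∃ B : ℝ, ∀ x, |f x| ≤ B := ⟨‖f‖, f.norm_coe_le_norm⟩
  exact tendsto_nhds_unique
    ((h f f.continuous hB).mono_left
      (nhdsWithin_mono _ (sdiff_subset_sdiff_right subset_union_left)))
    ((h' f f.continuous hB).mono_left
      (nhdsWithin_mono _ (sdiff_subset_sdiff_right subset_union_right)))

/-- **Existence and uniqueness of the initial trace.** If `u` satisfies
conditions (i)–(iii) of the definition of weak solution (with no prescribed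
initial datum), then there is a unique positive finite Radon measure `μ`
which is the initial trace of `u`; moreover
`μ(ℝ^d) = ∫ u(x,t) ρ(x) dx` for a.e. `t > 0`. -/
theorem initial_trace_exists_unique
    (d : ℕ) (s m κ γ₀ γ c C : ℝ)
    (hs0 : 0 < s) (hs1 : s < 1) (hd : 2 * s < (d : ℝ)) (hm : 1 < m) (hκ : 0 < κ)
    (hγ₀0 : 0 ≤ γ₀) (hγ₀γ : γ₀ ≤ γ) (hγs : γ < 2 * s) (hγd : γ ≤ (d : ℝ) - 2 * s)
    (ρ : Ed d → ℝ) (hρ : AdmissibleWeight d ρ γ₀ γ c C)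
    (u : Ed d → ℝ → ℝ) (hu : WeakSolCore d s m κ ρ u) :
    ∃ μ : Measure (Ed d), IsFiniteMeasure μ ∧ HasInitialTrace d ρ u μ ∧
      (∀ μ' : Measure (Ed d), IsFiniteMeasure μ' → HasInitialTrace d ρ u μ' → μ' = μ) ∧
      (∀ᵐ t ∂(volume.restrict (Ioi (0 : ℝ))),
        (∫ x : Ed d, u x t * ρ x) = (μ univ).toReal) := by
  obtain ⟨μ, hμ, hmass⟩ := exists_initialTrace hs0 hs1 hd hm hκ hγ₀0 hγ₀γ hγs hρ hu
  exact ⟨μ, inferInstance, hμ, fun μ' _ hμ' => hμ'.unique hμ, hmass⟩
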